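/- Let μ₁, μ₂ ∈ M¹₊(Ω) with μ₁ ≤ μ₂, and let μ₁*, μ₂* be their reduced measures. Then μ₁* ≤ μ₂*, and moreover μ₂* − μ₁* ≤ μ₂ − μ₁, i.e., μ₂*(A) + μ₁(A) ≤ μ₁*(A) + μ₂(A) for every Borel set A ⊂ Ω. -/

import Mathlib

open MeasureTheory Set Filter Topology
open scoped ENNReal NNReal

noncomputable section

/-- Euclidean space `ℝ^N`. -/
abbrev Euc (N : ℕ) : Type := EuclideanSpace ℝ (Fin N)

/-- `ρ(x) = dist(x, ∂Ω)`, realized as the distance from `x` to the complement of `Ω`. -/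
def rho {N : ℕ} (Ω : Set (Euc N)) (x : Euc N) : ℝ := Metric.infDist x Ωᶜ

/-- The Laplacian (in the space variable) of `f : ℝ^N → ℝ`. -/
def lap {N : ℕ} (f : Euc N → ℝ) (x : Euc N) : ℝ :=
  ∑ i : Fin N, fderiv ℝ (fun y => fderiv ℝ f y (EuclideanSpace.single i 1)) x
    (EuclideanSpace.single i 1)

/-- The parabolic cylinder `Q_T = Ω × (0,T)`. -/
def QT {N : ℕ} (Ω : Set (Euc N)) (T : ℝ) : Set (Euc N × ℝ) := Ω ×ˢ Ioo 0 T

/-- `∂_t ζ + Δ ζ` for a function `ζ(x,t)` (curried). -/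
def heatAdj {N : ℕ} (ζ : Euc N → ℝ → ℝ) (p : Euc N × ℝ) : ℝ :=
  deriv (ζ p.1) p.2 + lap (fun y => ζ y p.2) p.1

/-- `C^{2,1}` regularity: `ζ`, `∂_t ζ`, `∇_x ζ` and `D²_x ζ` exist and are continuous. -/
def C21 {N : ℕ} (ζ : Euc N → ℝ → ℝ) : Prop :=
  Continuous (fun p : Euc N × ℝ => ζ p.1 p.2) ∧
  (∀ (x : Euc N) (t : ℝ), DifferentiableAt ℝ (ζ x) t) ∧
  Continuous (fun p : Euc N × ℝ => deriv (ζ p.1) p.2) ∧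
  (∀ (t : ℝ) (x : Euc N), DifferentiableAt ℝ (fun y => ζ y t) x) ∧
  Continuous (fun p : Euc N × ℝ => fderiv ℝ (fun y => ζ y p.2) p.1) ∧
  (∀ (t : ℝ) (x : Euc N), DifferentiableAt ℝ (fun y => fderiv ℝ (fun z => ζ z t) y) x) ∧
  Continuous (fun p : Euc N × ℝ => fderiv ℝ (fun y => fderiv ℝ (fun z => ζ z p.2) y) p.1)

/-- Membership in `C^{2,1}_{ℓ,0}(Q̄_T)` : `C^{2,1}` regularity together with
vanishing on `∂Ω × [0,T] ∪ Ω̄ × {T}`. -/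
def TestZero {N : ℕ} (Ω : Set (Euc N)) (T : ℝ) (ζ : Euc N → ℝ → ℝ) : Prop :=
  C21 ζ ∧ (∀ x ∈ frontier Ω, ∀ t ∈ Icc (0:ℝ) T, ζ x t = 0) ∧
  (∀ x ∈ closure Ω, ζ x T = 0)

/-- `g : ℝ → ℝ` continuous, nondecreasing and vanishing on `(-∞,0]`. -/
def GoodG (g : ℝ → ℝ) : Prop := Continuous g ∧ Monotone g ∧ ∀ r : ℝ, r ≤ 0 → g r = 0

/-- `μ ∈ M¹₊(Ω)` : a positive Radon measure on `Ω` with `∫_Ω ρ dμ < ∞`. -/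
def MemM1 {N : ℕ} (Ω : Set (Euc N)) (μ : Measure (Euc N)) : Prop :=
  μ Ωᶜ = 0 ∧ (∀ K : Set (Euc N), K ⊆ Ω → IsCompact K → μ K < ⊤) ∧
  (∫⁻ x, ENNReal.ofReal (rho Ω x) ∂μ) < ⊤

/-- A positive Radon measure on the (open) set `U`. -/
def RadonOn {N : ℕ} (U : Set (Euc N)) (ν : Measure (Euc N)) : Prop :=
  ν Uᶜ = 0 ∧ ∀ K : Set (Euc N), K ⊆ U → IsCompact K → ν K < ⊤

/-- Weak solution of `(P_μ)` : `∂_t u - Δu + g(u) = 0` in `Q_T`, `u = 0` on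
`∂Ω × (0,T)`, `u(·,0) = μ`. -/
def WeakSol {N : ℕ} (Ω : Set (Euc N)) (T : ℝ) (g : ℝ → ℝ) (μ : Measure (Euc N))
    (u : Euc N × ℝ → ℝ) : Prop :=
  IntegrableOn u (QT Ω T) ∧
  IntegrableOn (fun p => g (u p) * rho Ω p.1) (QT Ω T) ∧
  ∀ ζ : Euc N → ℝ → ℝ, TestZero Ω T ζ →
    (∫ p in QT Ω T,
      (-(u p) * deriv (ζ p.1) p.2 - u p * lap (fun y => ζ y p.2) p.1 + ζ p.1 p.2 * g (u p)))
      = ∫ x, ζ x 0 ∂μ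

/-- Weak subsolution of `(P_μ)`. -/
def WeakSubSol {N : ℕ} (Ω : Set (Euc N)) (T : ℝ) (g : ℝ → ℝ) (μ : Measure (Euc N))
    (u : Euc N × ℝ → ℝ) : Prop :=
  IntegrableOn u (QT Ω T) ∧
  IntegrableOn (fun p => g (u p) * rho Ω p.1) (QT Ω T) ∧
  ∀ ζ : Euc N → ℝ → ℝ, TestZero Ω T ζ → (∀ x t, 0 ≤ ζ x t) →
    (∫ p in QT Ω T,
      (-(u p) * deriv (ζ p.1) p.2 - u p * lap (fun y => ζ y p.2) p.1 + ζ p.1 p.2 * g (u p)))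
      ≤ ∫ x, ζ x 0 ∂μ

/-- `μ` is a good measure relative to `g` : `(P_μ)` admits a weak solution. -/
def GoodMeasure {N : ℕ} (Ω : Set (Euc N)) (T : ℝ) (g : ℝ → ℝ) (μ : Measure (Euc N)) : Prop :=
  ∃ u, WeakSol Ω T g μ u

/-- Essential limit of `F(t)` as `t → 0⁺` equals `L`. -/
def EssLimInit (F : ℝ → ℝ) (L : ℝ) : Prop :=
  Tendsto F ((𝓝[>] (0:ℝ)) ⊓ (ae (volume : Measure ℝ))) (𝓝 L)

/-- Essential limit of `F(t)` as `t → 0⁺` is `+∞`. -/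
def EssLimInitTop (F : ℝ → ℝ) : Prop :=
  Tendsto F ((𝓝[>] (0:ℝ)) ⊓ (ae (volume : Measure ℝ))) atTop

/-- `ν` is the initial trace of `u` on `U ⊆ Ω` : for every `φ ∈ C_c(U)`,
`ess lim_{t→0} ∫_Ω u(·,t) φ dx = ∫ φ dν`. -/
def InitTraceOn {N : ℕ} (Ω U : Set (Euc N)) (u : Euc N × ℝ → ℝ) (ν : Measure (Euc N)) : Prop :=
  ∀ φ : Euc N → ℝ, Continuous φ → HasCompactSupport φ → tsupport φ ⊆ U →
    EssLimInit (fun t => ∫ x in Ω, u (x, t) * φ x) (∫ x, φ x ∂ν)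

/-- `μstar` is the reduced measure of `μ` : the largest good measure `≤ μ`. -/
def IsReducedMeasure {N : ℕ} (Ω : Set (Euc N)) (T : ℝ) (g : ℝ → ℝ)
    (μ μstar : Measure (Euc N)) : Prop :=
  MemM1 Ω μstar ∧ μstar ≤ μ ∧ GoodMeasure Ω T g μstar ∧
  ∀ ν : Measure (Euc N), MemM1 Ω ν → GoodMeasure Ω T g ν → ν ≤ μ → ν ≤ μstar

/-- The `N`-dimensional Hausdorff measure on `ℝ^N`. -/
def hausN {N : ℕ} : Measure (Euc N) := MeasureTheory.Measure.hausdorffMeasure (N : ℝ)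

set_option linter.unusedVariables false
set_option linter.unusedSectionVars false

/-- explicit derivative data for a C21 function -/
structure HasC21 {N : ℕ} (ζ : Euc N → ℝ → ℝ) (a : Euc N → ℝ → ℝ) (b : Euc N → ℝ → (Euc N →L[ℝ] ℝ))
    (c : Euc N → ℝ → (Euc N →L[ℝ] (Euc N →L[ℝ] ℝ))) : Prop where
  cont : Continuous (fun p : Euc N × ℝ => ζ p.1 p.2)
  hd : ∀ x t, HasDerivAt (ζ x) (a x t) t
  hb : ∀ x t, HasFDerivAt (fun y => ζ y t) (b x t) x
  hc : ∀ x t, HasFDerivAt (fun y => b y t) (c x t) x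
  ca : Continuous (fun p : Euc N × ℝ => a p.1 p.2)
  cb : Continuous (fun p : Euc N × ℝ => b p.1 p.2)
  cc : Continuous (fun p : Euc N × ℝ => c p.1 p.2)

instance instCA {N : ℕ} : ContinuousAdd (Euc N →L[ℝ] (Euc N →L[ℝ] ℝ)) :=
  ⟨(ContinuousLinearMap.topologicalAddGroup (σ := RingHom.id ℝ) (E := Euc N)
    (F := Euc N →L[ℝ] ℝ)).toContinuousAdd.continuous_add⟩

/-- trace -/
def tr {N : ℕ} (c : Euc N →L[ℝ] (Euc N →L[ℝ] ℝ)) : ℝ :=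
  ∑ i : Fin N, c (EuclideanSpace.single i 1) (EuclideanSpace.single i 1)

theorem continuous_tr {N : ℕ} : Continuous (tr (N := N)) := by
  unfold tr; fun_prop

theorem C21.has {N : ℕ} {ζ : Euc N → ℝ → ℝ} (h : C21 ζ) :
    ∃ a b c, HasC21 ζ a b c := by
  obtain ⟨h1, h2, h3, h4, h5, h6, h7⟩ := h
  exact ⟨fun x t => deriv (ζ x) t, fun x t => fderiv ℝ (fun y => ζ y t) x,
    fun x t => fderiv ℝ (fun y => fderiv ℝ (fun z => ζ z t) y) x,
    h1, fun x t => (h2 x t).hasDerivAt, fun x t => (h4 t x).hasFDerivAt,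
    fun x t => (h6 t x).hasFDerivAt, h3, h5, h7⟩

namespace HasC21
variable {N : ℕ} {ζ : Euc N → ℝ → ℝ} {a : Euc N → ℝ → ℝ} {b : Euc N → ℝ → (Euc N →L[ℝ] ℝ)}
    {c : Euc N → ℝ → (Euc N →L[ℝ] (Euc N →L[ℝ] ℝ))}

theorem lap_eq (h : HasC21 ζ a b c) (x : Euc N) (t : ℝ) : lap (fun y => ζ y t) x = tr (c x t) := by
  unfold lap tr
  refine Finset.sum_congr rfl fun i _ => ?_
  have : (fun y => fderiv ℝ (fun y => ζ y t) y (EuclideanSpace.single i 1)) =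
      fun y => b y t (EuclideanSpace.single i 1) := by
    funext y; rw [(h.hb y t).fderiv]
  rw [this]
  have h2 := (h.hc x t).clm_apply (hasFDerivAt_const (EuclideanSpace.single i (1:ℝ)) x)
  rw [h2.fderiv]; simp

theorem heat_eq (h : HasC21 ζ a b c) (p : Euc N × ℝ) :
    heatAdj ζ p = a p.1 p.2 + tr (c p.1 p.2) := by
  unfold heatAdj; rw [h.lap_eq, (h.hd p.1 p.2).deriv]

theorem c21 (h : HasC21 ζ a b c) : C21 ζ := by
  have e1 : (fun p : Euc N × ℝ => deriv (ζ p.1) p.2) = fun p => a p.1 p.2 := by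
    funext p; exact (h.hd _ _).deriv
  have e2 : ∀ x t, fderiv ℝ (fun y => ζ y t) x = b x t := fun x t => (h.hb x t).fderiv
  have e3 : ∀ t, (fun y => fderiv ℝ (fun z => ζ z t) y) = fun y => b y t := by
    intro t; funext y; exact e2 y t
  refine ⟨h.cont, fun x t => (h.hd x t).differentiableAt, by rw [e1]; exact h.ca,
    fun t x => (h.hb x t).differentiableAt, ?_, ?_, ?_⟩
  · simp only [e2]; exact h.cb
  · intro t x; rw [e3]; exact (h.hc x t).differentiableAt
  · have : (fun p : Euc N × ℝ => fderiv ℝ (fun y => fderiv ℝ (fun z => ζ z p.2) y) p.1)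
       = fun p => c p.1 p.2 := by
      funext p; rw [e3]; exact (h.hc _ _).fderiv
    rw [this]; exact h.cc

theorem comp (h : HasC21 ζ a b c) {j j1 j2 : ℝ → ℝ} (hj : ∀ s, HasDerivAt j (j1 s) s)
    (hj1 : ∀ s, HasDerivAt j1 (j2 s) s) (hj2 : Continuous j2) :
    HasC21 (fun x t => j (ζ x t)) (fun x t => j1 (ζ x t) * a x t) (fun x t => j1 (ζ x t) • b x t)
      (fun x t => j1 (ζ x t) • c x t + (j2 (ζ x t) • b x t).smulRight (b x t)) := by
  have cj : Continuous j := continuous_iff_continuousAt.2 fun s => (hj s).continuousAt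
  have cj1 : Continuous j1 := continuous_iff_continuousAt.2 fun s => (hj1 s).continuousAt
  refine ⟨cj.comp h.cont, fun x t => (hj _).comp t (h.hd x t),
    fun x t => (hj _).comp_hasFDerivAt x (h.hb x t), fun x t => ?_, ?_, ?_, ?_⟩
  · have := ((hj1 (ζ x t)).comp_hasFDerivAt (f := fun y => ζ y t) x (h.hb x t)).smul (h.hc x t)
    exact this
  · exact (cj1.comp h.cont).mul h.ca
  · exact (cj1.comp h.cont).smul h.cb
  · refine ((cj1.comp h.cont).smul h.cc).add ?_
    have h1 : Continuous (fun p : Euc N × ℝ => j2 (ζ p.1 p.2) • b p.1 p.2) :=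
      (hj2.comp h.cont).smul h.cb
    exact ((ContinuousLinearMap.smulRightL ℝ (Euc N) (Euc N →L[ℝ] ℝ)).continuous.comp h1).clm_apply
      h.cb

theorem heat_comp (h : HasC21 ζ a b c) {j j1 j2 : ℝ → ℝ} (hj : ∀ s, HasDerivAt j (j1 s) s)
    (hj1 : ∀ s, HasDerivAt j1 (j2 s) s) (hj2 : Continuous j2) (hp : ∀ s, 0 ≤ j2 s)
    (p : Euc N × ℝ) :
    j1 (ζ p.1 p.2) * heatAdj ζ p ≤ heatAdj (fun x t => j (ζ x t)) p := by
  rw [(h.comp hj hj1 hj2).heat_eq, h.heat_eq, mul_add]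
  gcongr
  unfold tr
  rw [Finset.mul_sum]
  gcongr with i
  simp
  have := mul_nonneg (hp (ζ p.1 p.2)) (mul_self_nonneg (b p.1 p.2 (EuclideanSpace.single i 1)))
  linarith

theorem mulT (h : HasC21 ζ a b c) {θ θ' : ℝ → ℝ} (hθ : ∀ s, HasDerivAt θ (θ' s) s)
    (hθ' : Continuous θ') :
    HasC21 (fun x t => θ t * ζ x t) (fun x t => θ' t * ζ x t + θ t * a x t)
     (fun x t => θ t • b x t) (fun x t => θ t • c x t) := by
  have cj : Continuous θ := continuous_iff_continuousAt.2 fun s => (hθ s).continuousAt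
  refine ⟨(cj.comp continuous_snd).mul h.cont, fun x t => (hθ t).mul (h.hd x t),
   fun x t => (h.hb x t).const_mul (θ t), fun x t => (h.hc x t).const_smul (θ t), ?_, ?_, ?_⟩
  · exact ((hθ'.comp continuous_snd).mul h.cont).add ((cj.comp continuous_snd).mul h.ca)
  · exact (cj.comp continuous_snd).smul h.cb
  · exact (cj.comp continuous_snd).smul h.cc

theorem add {ζ' a' b' c'} (h : HasC21 ζ a b c) (h' : HasC21 (N := N) ζ' a' b' c') :
    HasC21 (fun x t => ζ x t + ζ' x t) (fun x t => a x t + a' x t) (fun x t => b x t + b' x t)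
      (fun x t => c x t + c' x t) :=
  ⟨h.cont.add h'.cont, fun x t => (h.hd x t).add (h'.hd x t), fun x t => (h.hb x t).add (h'.hb x t),
   fun x t => (h.hc x t).add (h'.hc x t), h.ca.add h'.ca, h.cb.add h'.cb, h.cc.add h'.cc⟩

theorem smul (h : HasC21 ζ a b c) (r : ℝ) :
    HasC21 (fun x t => r * ζ x t) (fun x t => r * a x t) (fun x t => r • b x t)
      (fun x t => r • c x t) :=
  ⟨h.cont.const_mul r, fun x t => (h.hd x t).const_mul r, fun x t => (h.hb x t).const_mul r,
   fun x t => (h.hc x t).const_smul r, h.ca.const_mul r, h.cb.const_smul r, h.cc.const_smul r⟩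

end HasC21

theorem tr_add {N : ℕ} (c d : Euc N →L[ℝ] (Euc N →L[ℝ] ℝ)) : tr (c + d) = tr c + tr d := by
  simp [tr, Finset.sum_add_distrib]
theorem tr_smul {N : ℕ} (r : ℝ) (c : Euc N →L[ℝ] (Euc N →L[ℝ] ℝ)) : tr (r • c) = r * tr c := by
  simp [tr, Finset.mul_sum]

theorem C21.cont_heat {N : ℕ} {ζ : Euc N → ℝ → ℝ} (h : C21 ζ) : Continuous (heatAdj ζ) := by
  obtain ⟨a, b, c, h⟩ := h.has
  rw [show heatAdj ζ = fun p => a p.1 p.2 + tr (c p.1 p.2) from funext h.heat_eq]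
  exact h.ca.add (continuous_tr.comp h.cc)

theorem heat_congr {N : ℕ} {ζ ζ' : Euc N → ℝ → ℝ} {p : Euc N × ℝ}
    (h : ∀ᶠ q in 𝓝 p, ζ q.1 q.2 = ζ' q.1 q.2) : heatAdj ζ p = heatAdj ζ' p := by
  unfold heatAdj lap
  obtain ⟨x, t⟩ := p
  have h1 : ∀ᶠ s in 𝓝 t, ζ x s = ζ' x s :=
    (Continuous.tendsto (f := fun s : ℝ => (x, s)) (by fun_prop) t).eventually h
  have h2 : ∀ᶠ y in 𝓝 x, ζ y t = ζ' y t :=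
    (Continuous.tendsto (f := fun y : Euc N => (y, t)) (by fun_prop) x).eventually h
  congr 1
  · exact Filter.EventuallyEq.deriv_eq h1
  · refine Finset.sum_congr rfl fun i _ => ?_
    have : (fun y => fderiv ℝ (fun y => ζ y t) y (EuclideanSpace.single i 1)) =ᶠ[𝓝 x]
      (fun y => fderiv ℝ (fun y => ζ' y t) y (EuclideanSpace.single i 1)) := by
      have h3 : (fun y => ζ y t) =ᶠ[𝓝 x] (fun y => ζ' y t) := h2
      filter_upwards [h3.fderiv (𝕜 := ℝ)] with y hy
      rw [hy]
    rw [this.fderiv_eq]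

/-- C21 is local -/
theorem C21.of_local {N : ℕ} {ψ : Euc N → ℝ → ℝ}
    (h : ∀ p : Euc N × ℝ, ∃ ζ, C21 ζ ∧ ∀ᶠ q in 𝓝 p, ψ q.1 q.2 = ζ q.1 q.2) : C21 ψ := by
  have key1 : ∀ p : Euc N × ℝ, ∀ ζ : Euc N → ℝ → ℝ, (∀ᶠ q in 𝓝 p, ψ q.1 q.2 = ζ q.1 q.2) →
      (∀ᶠ s in 𝓝 p.2, ψ p.1 s = ζ p.1 s) ∧ (∀ᶠ y in 𝓝 p.1, ψ y p.2 = ζ y p.2) := by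
    rintro ⟨x, t⟩ ζ h
    exact ⟨(Continuous.tendsto (f := fun s : ℝ => (x, s)) (by fun_prop) t).eventually h,
      (Continuous.tendsto (f := fun y : Euc N => (y, t)) (by fun_prop) x).eventually h⟩
  refine ⟨?_, ?_, ?_, ?_, ?_, ?_, ?_⟩
  · rw [continuous_iff_continuousAt]; intro p
    obtain ⟨ζ, hζ, he⟩ := h p
    exact hζ.1.continuousAt.congr (he.mono fun q hq => hq.symm)
  · intro x t
    obtain ⟨ζ, hζ, he⟩ := h (x, t)
    exact (hζ.2.1 x t).congr_of_eventuallyEq (key1 _ _ he).1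
  · rw [continuous_iff_continuousAt]; intro p
    obtain ⟨ζ, hζ, he⟩ := h p
    refine hζ.2.2.1.continuousAt.congr ?_
    filter_upwards [he.eventually_nhds] with q hq
    exact (Filter.EventuallyEq.deriv_eq (key1 _ _ hq).1).symm
  · intro t x
    obtain ⟨ζ, hζ, he⟩ := h (x, t)
    exact (hζ.2.2.2.1 t x).congr_of_eventuallyEq (key1 _ _ he).2
  · rw [continuous_iff_continuousAt]; intro p
    obtain ⟨ζ, hζ, he⟩ := h p
    refine hζ.2.2.2.2.1.continuousAt.congr ?_
    filter_upwards [he.eventually_nhds] with q hq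
    exact (Filter.EventuallyEq.fderiv_eq (key1 _ _ hq).2).symm
  · intro t x
    obtain ⟨ζ, hζ, he⟩ := h (x, t)
    have h3 : (fun y => ψ y t) =ᶠ[𝓝 x] (fun y => ζ y t) := (key1 _ _ he).2
    exact (hζ.2.2.2.2.2.1 t x).congr_of_eventuallyEq (h3.fderiv (𝕜 := ℝ))
  · rw [continuous_iff_continuousAt]; intro p
    obtain ⟨ζ, hζ, he⟩ := h p
    refine hζ.2.2.2.2.2.2.continuousAt.congr ?_
    filter_upwards [he.eventually_nhds] with q hq
    have h3 : (fun y => ψ y q.2) =ᶠ[𝓝 q.1] (fun y => ζ y q.2) := (key1 _ _ hq).2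
    exact (Filter.EventuallyEq.fderiv_eq (h3.fderiv (𝕜 := ℝ))).symm

/-- regularized positive part -/
theorem exists_j (e : ℝ) (he : 0 < e) : ∃ j j1 j2 : ℝ → ℝ, (∀ s, HasDerivAt j (j1 s) s) ∧
    (∀ s, HasDerivAt j1 (j2 s) s) ∧ Continuous j2 ∧ (∀ s, 0 ≤ j2 s) ∧ (∀ s, 0 ≤ j1 s) ∧
    (∀ s, j1 s ≤ 1) ∧ (∀ s, s ≤ e → j1 s = 0) ∧ (∀ s, s ≤ e → j s = 0) ∧ (∀ s, 2 * e ≤ s → j1 s = 1)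
    ∧ (∀ s, 0 ≤ j s) ∧ (∀ s, j s ≤ max s 0) ∧ (∀ s, max s 0 - 2 * e ≤ j s) ∧
    ContDiff ℝ 2 j := by
  set j1 : ℝ → ℝ := fun s => Real.smoothTransition (s / e - 1) with hj1
  have cd1 : ContDiff ℝ 2 j1 := by
    exact (Real.smoothTransition.contDiff (n := 2)).comp (by fun_prop)
  have c1 : Continuous j1 := cd1.continuous
  set j : ℝ → ℝ := fun s => ∫ r in (0:ℝ)..s, j1 r with hj
  have hd : ∀ s, HasDerivAt j (j1 s) s := fun s =>
    intervalIntegral.integral_hasDerivAt_right (c1.intervalIntegrable _ _)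
      (c1.stronglyMeasurableAtFilter _ _) c1.continuousAt
  have hd1 : ∀ s, HasDerivAt j1 (deriv j1 s) s := fun s =>
    (cd1.differentiable (by norm_num) s).hasDerivAt
  have mono : Monotone j1 := by
    intro a b hab
    apply Real.smoothTransition.monotone
    gcongr
  have z1 : ∀ s, s ≤ e → j1 s = 0 := fun s hs => by
    apply Real.smoothTransition.zero_of_nonpos
    rw [sub_nonpos, div_le_one he]; exact hs
  have o1 : ∀ s, 2 * e ≤ s → j1 s = 1 := fun s hs => by
    apply Real.smoothTransition.one_of_one_le
    rw [le_sub_iff_add_le, le_div_iff₀ he]; linarith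
  have n1 : ∀ s, 0 ≤ j1 s := fun s => Real.smoothTransition.nonneg _
  have l1 : ∀ s, j1 s ≤ 1 := fun s => Real.smoothTransition.le_one _
  have jm : Monotone j := monotone_of_deriv_nonneg (fun s => (hd s).differentiableAt)
    (fun s => by rw [(hd s).deriv]; exact n1 s)
  have j0 : j 0 = 0 := by simp [hj]
  have zj : ∀ s, s ≤ e → j s = 0 := by
    intro s hs
    have : EqOn j1 0 (uIcc 0 s) := by
      intro r hr
      apply z1
      have := hr.2
      exact this.trans (max_le he.le hs)
    simp only [hj]
    rw [intervalIntegral.integral_congr this]; simp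
  have m2 : Monotone (fun s => s - j s) := monotone_of_deriv_nonneg
    (fun s => differentiableAt_id.sub (hd s).differentiableAt)
    (fun s => by
      rw [((hasDerivAt_id' s).fun_sub (hd s)).deriv]; linarith [l1 s])
  have nj : ∀ s, 0 ≤ j s := fun s => by
    rcases le_total s e with h | h
    · rw [zj s h]
    · rw [← j0]; exact jm (he.le.trans h)
  refine ⟨j, j1, deriv j1, hd, hd1, cd1.continuous_deriv (by norm_num),
    fun s => mono.deriv_nonneg, n1, l1, z1, zj, o1, nj, ?_, ?_, ?_⟩
  · intro s
    rcases le_total s 0 with h | h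
    · rw [zj s (h.trans he.le)]; simp
    · have := m2 h
      simp only [j0] at this
      exact le_trans (by linarith) (le_max_left _ _)
  · intro s
    rcases le_total s (2 * e) with h | h
    · have : max s 0 ≤ 2 * e := max_le h (by linarith)
      linarith [nj s]
    · have h4 : j s = j (2*e) + (s - 2 * e) := by
        have : ∫ r in (2*e)..s, j1 r = s - 2 * e := by
          rw [intervalIntegral.integral_congr (g := fun _ => (1:ℝ))]
          · simp
          · intro r hr
            rw [uIcc_of_le h] at hr
            exact o1 r hr.1
        simp only [hj]
        rw [← this, intervalIntegral.integral_add_adjacent_intervals] <;>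
        exact c1.intervalIntegrable _ _
      rw [h4, max_eq_left (by linarith)]; linarith [nj (2*e)]
  · have : deriv j = j1 := funext fun s => (hd s).deriv
    rw [show (2 : WithTop ℕ∞) = 1 + 1 by norm_num, contDiff_succ_iff_deriv]
    refine ⟨fun s => (hd s).differentiableAt, by simp, ?_⟩
    rw [this]; exact cd1.of_le (by norm_num)

theorem HB {α : Type*} [MeasurableSpace α] (m : Measure α) (W : α → ℝ) (hW0 : ∀ p, 0 ≤ W p)
    (hW : Integrable W m) {V : Type*} [AddCommGroup V] [Module ℝ V] (A : V →ₗ[ℝ] (α → ℝ))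
    (hAm : ∀ v, AEStronglyMeasurable (A v) m) (hAb : ∀ v, ∃ C, ∀ᵐ p ∂m, |A v p| ≤ C)
    (F : V →ₗ[ℝ] ℝ) (h : ∀ v, F v ≤ ∫ p, W p * max (A v p) 0 ∂m) :
    ∃ u : α → ℝ, AEStronglyMeasurable u m ∧ (∀ p, 0 ≤ u p) ∧ (∀ p, u p ≤ W p) ∧
      ∀ v, ∫ p, u p * A v p ∂m = F v := by
  set m' : Measure α := m.withDensity (fun p => ENNReal.ofReal (W p)) with hm'
  have hfin : IsFiniteMeasure m' := isFiniteMeasure_withDensity_ofReal hW.2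
  have hac : m' ≪ m := withDensity_absolutelyContinuous _ _
  have hint : ∀ φ : α → ℝ, ∫ p, φ p ∂m' = ∫ p, W p * φ p ∂m := by
    intro φ
    rw [hm', integral_withDensity_eq_integral_toReal_smul₀ (hW.1.aemeasurable.ennreal_ofReal)
      (by simp)]
    refine integral_congr_ae (Eventually.of_forall fun p => ?_)
    simp [ENNReal.toReal_ofReal (hW0 p)]
  have hmem : ∀ v, MemLp (A v) 2 m' := by
    intro v
    obtain ⟨C, hC⟩ := hAb v
    exact MemLp.of_bound ((hAm v).mono_ac hac) C (hac.ae_le hC)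
  let A' : V →ₗ[ℝ] Lp ℝ 2 m' :=
    { toFun := fun v => (hmem v).toLp
      map_add' := fun v w => by
        rw [← MemLp.toLp_add]; congr 1; simp
      map_smul' := fun r v => by
        rw [RingHom.id_apply, ← MemLp.toLp_const_smul]; congr 1; simp }
  have hA' : ∀ v, (A' v : α → ℝ) =ᵐ[m'] A v := fun v => (hmem v).coeFn_toLp
  let P : Lp ℝ 2 m' → ℝ := fun φ => ∫ p, max (φ p) 0 ∂m'
  have hPi : ∀ φ : Lp ℝ 2 m', Integrable (fun p => max (φ p) 0) m' := fun φ =>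
    ((Lp.memLp φ).integrable (by norm_num)).pos_part
  have hFP : ∀ v, F v ≤ P (A' v) := by
    intro v
    refine (h v).trans (le_of_eq ?_)
    rw [← hint (fun p => max (A v p) 0)]
    refine integral_congr_ae ?_
    filter_upwards [hA' v] with p hp
    rw [hp]
  obtain ⟨s, hs⟩ := LinearMap.exists_rightInverse_of_surjective A'.rangeRestrict
    A'.range_rangeRestrict
  have hs' : ∀ y : LinearMap.range A', A' (s y) = y := fun y => by
    have := LinearMap.congr_fun hs y
    exact congrArg Subtype.val this
  have hker : ∀ v, A' v = 0 → F v = 0 := by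
    intro v hv
    have P0 : P 0 = 0 := by
      have : (fun p => max ((0 : Lp ℝ 2 m') p) 0) =ᵐ[m'] fun _ => (0:ℝ) := by
        filter_upwards [Lp.coeFn_zero ℝ 2 m'] with p hp
        rw [hp]; simp
      simp only [P]; rw [integral_congr_ae this]; simp
    have h1 := hFP v
    have h2 := hFP (-v)
    rw [map_neg, map_neg, hv, neg_zero, P0] at h2
    rw [hv, P0] at h1
    linarith
  obtain ⟨Λ, hΛ1, hΛ2⟩ := exists_extension_of_le_sublinear
    (⟨LinearMap.range A', F.comp s⟩ : Lp ℝ 2 m' →ₗ.[ℝ] ℝ) P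
    (by
      intro c hc φ
      simp only [P]
      rw [← integral_const_mul]
      refine integral_congr_ae ?_
      filter_upwards [Lp.coeFn_smul c φ] with p hp
      rw [hp, Pi.smul_apply, smul_eq_mul, mul_max_of_nonneg _ _ hc.le, mul_zero])
    (by
      intro φ ψ
      simp only [P]
      rw [← integral_add (hPi φ) (hPi ψ)]
      refine integral_mono_ae (hPi _) ((hPi φ).add (hPi ψ)) ?_
      filter_upwards [Lp.coeFn_add φ ψ] with p hp
      rw [hp, Pi.add_apply]
      exact max_le (add_le_add (le_max_left _ _) (le_max_left _ _))
        (add_nonneg (le_max_right _ _) (le_max_right _ _)))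
    (by
      intro y
      change F (s y) ≤ P y
      rw [← hs' y]; exact hFP _)
  have hΛF : ∀ v, Λ (A' v) = F v := by
    intro v
    have h1 := hΛ1 ⟨A' v, LinearMap.mem_range_self A' v⟩
    rw [h1]
    change F (s ⟨A' v, LinearMap.mem_range_self A' v⟩) = F v
    have := hker (s ⟨A' v, LinearMap.mem_range_self A' v⟩ - v) (by rw [map_sub, hs']; simp)
    rw [map_sub] at this; linarith
  have hPle : ∀ φ : Lp ℝ 2 m', P φ ≤ (m'.real univ) ^ (1/2:ℝ) * ‖φ‖ := by
    intro φ
    have h1 : P φ ≤ ∫ p, ‖φ p‖ ∂m' := by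
      refine integral_mono (hPi φ) ((Lp.memLp φ).integrable (by norm_num)).norm ?_
      intro p
      exact max_le (le_abs_self _) (norm_nonneg _)
    refine h1.trans ?_
    rw [integral_norm_eq_lintegral_enorm (Lp.aestronglyMeasurable φ), ← eLpNorm_one_eq_lintegral_enorm]
    have h2 := eLpNorm_le_eLpNorm_mul_rpow_measure_univ (μ := m') (p := 1) (q := 2) (by norm_num)
      (Lp.aestronglyMeasurable φ)
    have h3 := ENNReal.toReal_mono (by
      refine ENNReal.mul_ne_top (Lp.memLp φ).2.ne ?_
      exact ENNReal.rpow_ne_top_of_nonneg (by norm_num) (measure_ne_top _ _)) h2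
    refine h3.trans (le_of_eq ?_)
    rw [ENNReal.toReal_mul, ← ENNReal.toReal_rpow, Lp.norm_def, mul_comm]
    norm_num [Measure.real]
  let Λc : Lp ℝ 2 m' →L[ℝ] ℝ := Λ.mkContinuous ((m'.real univ) ^ (1/2:ℝ)) (by
    intro φ
    rw [Real.norm_eq_abs, abs_le]
    constructor
    · have := (hΛ2 (-φ)).trans (hPle (-φ))
      rw [map_neg, norm_neg] at this
      linarith
    · exact (hΛ2 φ).trans (hPle φ))
  let k : Lp ℝ 2 m' := (InnerProductSpace.toDual ℝ (Lp ℝ 2 m')).symm Λc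
  have hk : ∀ φ, Λ φ = ∫ p, k p * φ p ∂m' := by
    intro φ
    have : Λ φ = inner ℝ k φ := by
      rw [InnerProductSpace.toDual_symm_apply]; rfl
    rw [this, L2.inner_def]
    refine integral_congr_ae (Eventually.of_forall fun p => ?_)
    simp [mul_comm]
  have hki : Integrable k m' := (Lp.memLp k).integrable (by norm_num)
  have hind : ∀ (B : Set α) (hB : MeasurableSet B) (c : ℝ),
      c * ∫ p in B, k p ∂m' ≤ max c 0 * m'.real B := by
    intro B hB c
    have h1 := hΛ2 (indicatorConstLp 2 hB (measure_ne_top m' B) c)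
    rw [hk] at h1
    have e := indicatorConstLp_coeFn (p := 2) (hs := hB) (hμs := measure_ne_top m' B) (c := c)
    have l : ∫ p, k p * (indicatorConstLp 2 hB (measure_ne_top m' B) c : α → ℝ) p ∂m'
        = c * ∫ p in B, k p ∂m' := by
      rw [← integral_indicator hB, ← integral_const_mul]
      refine integral_congr_ae ?_
      filter_upwards [e] with p hp
      rw [hp]; by_cases hpB : p ∈ B <;> simp [hpB, mul_comm]
    have r : P (indicatorConstLp 2 hB (measure_ne_top m' B) c) = max c 0 * m'.real B := by
      simp only [P]
      have : (fun p => max ((indicatorConstLp 2 hB (measure_ne_top m' B) c : α → ℝ) p) 0)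
         =ᵐ[m'] B.indicator (fun _ => max c 0) := by
        filter_upwards [e] with p hp
        rw [hp]; by_cases hpB : p ∈ B <;> simp [hpB]
      rw [integral_congr_ae this, integral_indicator hB]; simp [mul_comm]
    rw [l, r] at h1; exact h1
  have hk0 : 0 ≤ᵐ[m'] k := by
    refine ae_nonneg_of_forall_setIntegral_nonneg hki fun B hB _ => ?_
    have := hind B hB (-1)
    simp at this; linarith
  have hk1 : 0 ≤ᵐ[m'] (fun p => 1 - k p) := by
    refine ae_nonneg_of_forall_setIntegral_nonneg ((integrable_const 1).sub hki) fun B hB _ => ?_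
    rw [integral_sub (integrable_const _) hki.integrableOn]
    have := hind B hB 1
    simp at this ⊢; linarith
  obtain ⟨k', hk'm, hk'⟩ := Lp.aestronglyMeasurable k
  let q : α → ℝ := fun p => max 0 (min 1 (k' p))
  have hq : q =ᵐ[m'] k := by
    filter_upwards [hk0, hk1, hk'] with p h0 h1 h2
    simp only [q]; rw [← h2]
    have : k p ≤ 1 := by simpa using h1
    rw [min_eq_right this, max_eq_right (show (0:ℝ) ≤ k p from h0)]
  have hqm : StronglyMeasurable q :=
    (stronglyMeasurable_const).sup ((stronglyMeasurable_const).inf hk'm)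
  refine ⟨fun p => W p * q p, hW.1.mul hqm.aestronglyMeasurable,
    fun p => mul_nonneg (hW0 p) (le_max_left _ _), fun p => ?_, fun v => ?_⟩
  · refine mul_le_of_le_one_right (hW0 p) (max_le zero_le_one (min_le_left _ _))
  · rw [← hΛF, hk]
    simp only [mul_assoc]
    rw [← hint (fun p => q p * A v p)]
    refine integral_congr_ae ?_
    filter_upwards [hq, hA' v] with p h1 h2
    rw [h1, h2]

/-- properties of regularized positive parts -/
def IsJ (e : ℝ) (j j1 j2 : ℝ → ℝ) : Prop := (∀ s, HasDerivAt j (j1 s) s) ∧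
    (∀ s, HasDerivAt j1 (j2 s) s) ∧ Continuous j2 ∧ (∀ s, 0 ≤ j2 s) ∧ (∀ s, 0 ≤ j1 s) ∧
    (∀ s, j1 s ≤ 1) ∧ (∀ s, s ≤ e → j1 s = 0) ∧ (∀ s, s ≤ e → j s = 0) ∧ (∀ s, 2 * e ≤ s → j1 s = 1)
    ∧ (∀ s, 0 ≤ j s) ∧ (∀ s, j s ≤ max s 0) ∧ (∀ s, max s 0 - 2 * e ≤ j s) ∧
    ContDiff ℝ 2 j

/-- weak equation -/
def EQ {N : ℕ} (Ω : Set (Euc N)) (T : ℝ) (ν : Measure (Euc N)) (u f : Euc N × ℝ → ℝ) : Prop :=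
  ∀ ζ, TestZero Ω T ζ → ∫ p in QT Ω T, (-(u p) * heatAdj ζ p + ζ p.1 p.2 * f p) = ∫ x, ζ x 0 ∂ν

/-- Kato form -/
def KF {N : ℕ} (Ω : Set (Euc N)) (T : ℝ) (ν : Measure (Euc N)) (u f : Euc N × ℝ → ℝ) : Prop :=
  ∀ ζ, TestZero Ω T ζ → ∫ x, max (ζ x 0) 0 ∂ν ≤
    ∫ p in QT Ω T, (if 0 < ζ p.1 p.2 then (-(u p) * heatAdj ζ p + ζ p.1 p.2 * f p) else 0)

theorem QT_meas {N : ℕ} {Ω : Set (Euc N)} (hΩo : IsOpen Ω) (T : ℝ) : MeasurableSet (QT Ω T) :=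
  (hΩo.prod isOpen_Ioo).measurableSet

theorem QT_bdd {N : ℕ} {Ω : Set (Euc N)} (hΩb : Bornology.IsBounded Ω) (T : ℝ)
    {X : Type*} [NormedAddCommGroup X] {f : Euc N × ℝ → X}
    (hf : Continuous f) : ∃ C, 0 ≤ C ∧ ∀ p ∈ QT Ω T, ‖f p‖ ≤ C := by
  have hc : IsCompact (closure Ω ×ˢ Icc (0:ℝ) T) := hΩb.isCompact_closure.prod isCompact_Icc
  obtain ⟨C, hC⟩ := hc.exists_bound_of_continuousOn hf.continuousOn
  refine ⟨max C 0, le_max_right _ _, fun p hp => (hC p ⟨subset_closure hp.1, ?_⟩).trans (le_max_left _ _)⟩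
  exact Ioo_subset_Icc_self hp.2

theorem QT_vol {N : ℕ} {Ω : Set (Euc N)} (hΩb : Bornology.IsBounded Ω) (T : ℝ) :
    volume (QT Ω T) < ⊤ :=
  (hΩb.prod (Metric.isBounded_Ioo 0 T)).measure_lt_top

theorem QT_int {N : ℕ} {Ω : Set (Euc N)} (hΩo : IsOpen Ω) (hΩb : Bornology.IsBounded Ω) (T : ℝ)
    {f u : Euc N × ℝ → ℝ} (hf : Continuous f) (hu : IntegrableOn u (QT Ω T)) :
    IntegrableOn (fun p => f p * u p) (QT Ω T) := by
  obtain ⟨C, hC0, hC⟩ := QT_bdd hΩb T hf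
  refine Integrable.bdd_mul (c := C) hu hf.aestronglyMeasurable ?_
  exact (ae_restrict_mem (QT_meas hΩo T)).mono hC

section
variable {N : ℕ} {Ω : Set (Euc N)} (hΩo : IsOpen Ω) (hΩb : Bornology.IsBounded Ω) (T : ℝ)
  {ν : Measure (Euc N)} [IsFiniteMeasure ν] (hν : ν Ωᶜ = 0)

theorem nu_bdd (hΩb : Bornology.IsBounded Ω) (hν : ν Ωᶜ = 0) {f : Euc N → ℝ} (hf : Continuous f) : ∃ C, ∀ᵐ x ∂ν, ‖f x‖ ≤ C := by
  obtain ⟨C, hC⟩ := hΩb.isCompact_closure.exists_bound_of_continuousOn hf.continuousOn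
  refine ⟨C, ?_⟩
  have : ∀ᵐ x ∂ν, x ∈ Ω := by rw [ae_iff]; exact hν
  exact this.mono fun x hx => hC x (subset_closure hx)

theorem nu_int (hΩb : Bornology.IsBounded Ω) (hν : ν Ωᶜ = 0) {f : Euc N → ℝ} (hf : Continuous f) : Integrable f ν := by
  obtain ⟨C, hC⟩ := nu_bdd hΩb hν hf
  exact Integrable.of_bound hf.aestronglyMeasurable C hC

theorem IsJ.cont {e : ℝ} {j j1 j2 : ℝ → ℝ} (h : IsJ e j j1 j2) : Continuous j :=
  continuous_iff_continuousAt.2 fun s => (h.1 s).continuousAt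
theorem IsJ.cont1 {e : ℝ} {j j1 j2 : ℝ → ℝ} (h : IsJ e j j1 j2) : Continuous j1 :=
  continuous_iff_continuousAt.2 fun s => (h.2.1 s).continuousAt

theorem TestZero.comp {ζ : Euc N → ℝ → ℝ} {T : ℝ} (h : TestZero Ω T ζ) {e : ℝ} (he : 0 < e) {j j1 j2 : ℝ → ℝ}
    (hj : IsJ e j j1 j2) : TestZero Ω T (fun x t => j (ζ x t)) := by
  obtain ⟨h1, h2, h3⟩ := h
  obtain ⟨a, b, c, h1⟩ := h1.has
  refine ⟨(h1.comp hj.1 hj.2.1 hj.2.2.1).c21, fun x hx t ht => ?_, fun x hx => ?_⟩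
  · simp only [h2 x hx t ht]; exact hj.2.2.2.2.2.2.2.1 0 he.le
  · simp only [h3 x hx]; exact hj.2.2.2.2.2.2.2.1 0 he.le

theorem C21.cont_fix {ζ : Euc N → ℝ → ℝ} (h : C21 ζ) (t : ℝ) : Continuous (fun x => ζ x t) :=
  h.1.comp (f := fun x => (x, t)) (by fun_prop)

include hΩo hΩb hν in
theorem KF_of {u f : Euc N × ℝ → ℝ} (hu0 : ∀ p, 0 ≤ u p) (hu : IntegrableOn u (QT Ω T))
    (hf : IntegrableOn f (QT Ω T))
    (H : ∀ e > 0, ∀ j j1 j2, IsJ e j j1 j2 → ∀ ζ, TestZero Ω T ζ →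
      ∫ x, j (ζ x 0) ∂ν ≤ ∫ p in QT Ω T, (-(u p) * heatAdj (fun x t => j (ζ x t)) p + j (ζ p.1 p.2) * f p)) :
    KF Ω T ν u f := by
  intro ζ hζ
  have hep : ∀ n : ℕ, (0:ℝ) < 1 / ((n:ℝ) + 1) := fun n => by positivity
  choose j j1 j2 hj using fun n : ℕ => exists_j (1 / ((n:ℝ) + 1)) (hep n)
  have hJ : ∀ n : ℕ, IsJ (1 / ((n:ℝ) + 1)) (j n) (j1 n) (j2 n) := hj
  have hlim0 : Tendsto (fun n : ℕ => 1 / ((n:ℝ) + 1)) atTop (𝓝 0) := tendsto_one_div_add_atTop_nhds_zero_nat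
  have hcζ := hζ.1.1
  have hcL := hζ.1.cont_heat
  have hiL := QT_int hΩo hΩb T hcL hu
  have hiζ := QT_int hΩo hΩb T hcζ hf
  have jlim : ∀ s, Tendsto (fun n => j n s) atTop (𝓝 (max s 0)) := by
    intro s
    have h1 : Tendsto (fun n : ℕ => max s 0 - 2 * (1 / ((n:ℝ) + 1))) atTop (𝓝 (max s 0 - 2 * 0)) :=
      (hlim0.const_mul 2).const_sub _
    rw [mul_zero, sub_zero] at h1
    refine tendsto_of_tendsto_of_tendsto_of_le_of_le h1 tendsto_const_nhds (fun n => ?_) (fun n => ?_)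
    · exact (hJ n).2.2.2.2.2.2.2.2.2.2.2.1 s
    · exact (hJ n).2.2.2.2.2.2.2.2.2.2.1 s
  have jabs : ∀ n s, |j n s| ≤ |s| := by
    intro n s
    rw [abs_of_nonneg ((hJ n).2.2.2.2.2.2.2.2.2.1 s)]
    exact ((hJ n).2.2.2.2.2.2.2.2.2.2.1 s).trans (max_le (le_abs_self _) (abs_nonneg _))
  have j1abs : ∀ n s, |j1 n s| ≤ 1 := by
    intro n s
    rw [abs_of_nonneg ((hJ n).2.2.2.2.1 s)]
    exact (hJ n).2.2.2.2.2.1 s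
  have L1 : Tendsto (fun n => ∫ x, j n (ζ x 0) ∂ν) atTop (𝓝 (∫ x, max (ζ x 0) 0 ∂ν)) := by
    refine tendsto_integral_of_dominated_convergence (fun x => |ζ x 0|) ?_ ?_ ?_ ?_
    · exact fun n => ((hJ n).cont.comp (hζ.1.cont_fix 0)).aestronglyMeasurable
    · exact (nu_int hΩb hν (hζ.1.cont_fix 0)).abs
    · exact fun n => Eventually.of_forall fun x => jabs n _
    · exact Eventually.of_forall fun x => jlim _
  have L2 : Tendsto (fun n => ∫ p in QT Ω T, (-(u p) * (j1 n (ζ p.1 p.2) * heatAdj ζ p) + j n (ζ p.1 p.2) * f p)) atTop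
     (𝓝 (∫ p in QT Ω T, (if 0 < ζ p.1 p.2 then (-(u p) * heatAdj ζ p + ζ p.1 p.2 * f p) else 0))) := by
    refine tendsto_integral_of_dominated_convergence (fun p => |heatAdj ζ p * u p| + |ζ p.1 p.2 * f p|) ?_ ?_ ?_ ?_
    · intro n
      refine ((hu.1.neg).mul ?_).add (AEStronglyMeasurable.mul ?_ hf.1)
      · exact (((hJ n).cont1.comp hcζ).mul hcL).aestronglyMeasurable
      · exact ((hJ n).cont.comp hcζ).aestronglyMeasurable
    · exact hiL.abs.add hiζ.abs
    · refine fun n => Eventually.of_forall fun p => ?_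
      rw [Real.norm_eq_abs]
      refine (abs_add_le _ _).trans (add_le_add ?_ ?_)
      · rw [abs_mul, abs_mul, abs_neg, abs_mul, mul_comm]
        have := mul_le_mul_of_nonneg_right (j1abs n (ζ p.1 p.2)) (abs_nonneg (heatAdj ζ p))
        rw [one_mul] at this
        exact mul_le_mul_of_nonneg_right this (abs_nonneg _)
      · rw [abs_mul, abs_mul]
        exact mul_le_mul_of_nonneg_right (jabs n _) (abs_nonneg _)
    · refine Eventually.of_forall fun p => ?_
      by_cases h : 0 < ζ p.1 p.2
      · simp only [h, if_true]
        have h1 : Tendsto (fun n => j1 n (ζ p.1 p.2)) atTop (𝓝 1) := by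
          have : ∀ᶠ n : ℕ in atTop, (1 / ((n:ℝ) + 1)) < ζ p.1 p.2 / 2 := hlim0.eventually_lt_const (by linarith)
          refine tendsto_const_nhds.congr' (this.mono fun n hn => ?_)
          exact ((hJ n).2.2.2.2.2.2.2.2.1 _ (by linarith)).symm
        have h2 := jlim (ζ p.1 p.2)
        rw [max_eq_left h.le] at h2
        have := ((h1.mul_const (heatAdj ζ p)).const_mul (-(u p))).add (h2.mul_const (f p))
        rwa [one_mul] at this
      · simp only [h, if_false]
        have h0 : ζ p.1 p.2 ≤ 0 := not_lt.1 h
        refine tendsto_const_nhds.congr fun n => ?_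
        rw [(hJ n).2.2.2.2.2.2.1 _ (h0.trans (hep n).le), (hJ n).2.2.2.2.2.2.2.1 _ (h0.trans (hep n).le)]
        ring
  refine le_of_tendsto_of_tendsto L1 L2 (Eventually.of_forall fun n => ?_)
  obtain ⟨a, b, c, hz⟩ := hζ.1.has
  have hT2 := hζ.comp (hep n) (hJ n)
  refine (H _ (hep n) _ _ _ (hJ n) ζ hζ).trans ?_
  have hij : IntegrableOn (fun p => j n (ζ p.1 p.2) * f p) (QT Ω T) :=
    QT_int hΩo hΩb T ((hJ n).cont.comp hcζ) hf
  refine integral_mono ?_ ?_ fun p => ?_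
  · refine Integrable.add ?_ hij
    refine (QT_int hΩo hΩb T hT2.1.cont_heat hu).neg.congr (Eventually.of_forall fun p => ?_)
    simp only [Pi.neg_apply]; ring
  · refine Integrable.add ?_ hij
    refine (QT_int hΩo hΩb T (((hJ n).cont1.comp hcζ).mul hcL) hu).neg.congr (Eventually.of_forall fun p => ?_)
    simp only [Pi.neg_apply, Pi.mul_apply, Function.comp]; ring
  · have := hz.heat_comp (hJ n).1 (hJ n).2.1 (hJ n).2.2.1 (hJ n).2.2.2.1 p
    have := mul_le_mul_of_nonneg_left this (hu0 p)
    simp only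
    linarith

include hΩo hΩb hν in
theorem EQ.kf {u f : Euc N × ℝ → ℝ} (hu0 : ∀ p, 0 ≤ u p) (hu : IntegrableOn u (QT Ω T))
    (hf : IntegrableOn f (QT Ω T)) (h : EQ Ω T ν u f) : KF Ω T ν u f :=
  KF_of hΩo hΩb T hν hu0 hu hf fun e he j j1 j2 hj ζ hζ => (h _ (hζ.comp he hj)).ge

include hΩo hΩb in
theorem kf_int {u f : Euc N × ℝ → ℝ} (hu : IntegrableOn u (QT Ω T))
    (hf : IntegrableOn f (QT Ω T)) {ζ} (hζ : C21 ζ) : IntegrableOn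
     (fun p => if 0 < ζ p.1 p.2 then (-(u p) * heatAdj ζ p + ζ p.1 p.2 * f p) else 0) (QT Ω T) := by
  have hs : MeasurableSet {p : Euc N × ℝ | 0 < ζ p.1 p.2} := (isOpen_lt continuous_const hζ.1).measurableSet
  have : Integrable (fun p => -(u p) * heatAdj ζ p + ζ p.1 p.2 * f p) (volume.restrict (QT Ω T)) := by
    refine Integrable.add ?_ (QT_int hΩo hΩb T hζ.1 hf)
    refine (QT_int hΩo hΩb T hζ.cont_heat hu).neg.congr (Eventually.of_forall fun p => ?_)
    simp only [Pi.neg_apply]; ring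
  refine (this.indicator hs).congr (Eventually.of_forall fun p => ?_)
  simp [indicator]

include hΩo hΩb in
theorem KF.mono {u f f' : Euc N × ℝ → ℝ} (hu : IntegrableOn u (QT Ω T))
    (hf : IntegrableOn f (QT Ω T)) (hf' : IntegrableOn f' (QT Ω T)) (hff : ∀ p, f p ≤ f' p)
    (h : KF Ω T ν u f) : KF Ω T ν u f' := by
  intro ζ hζ
  refine (h ζ hζ).trans (integral_mono (kf_int hΩo hΩb T hu hf hζ.1) (kf_int hΩo hΩb T hu hf' hζ.1) fun p => ?_)
  simp only
  split_ifs with h0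
  · have := mul_le_mul_of_nonneg_left (hff p) h0.le
    linarith
  · exact le_rfl

end

theorem heat_add {N : ℕ} {ζ ζ' : Euc N → ℝ → ℝ} (h : C21 ζ) (h' : C21 ζ') :
    heatAdj (ζ + ζ') = heatAdj ζ + heatAdj ζ' := by
  obtain ⟨a, b, c, h⟩ := h.has
  obtain ⟨a', b', c', h'⟩ := h'.has
  funext p
  have := (h.add h').heat_eq p
  rw [Pi.add_apply, h.heat_eq, h'.heat_eq]
  refine this.trans ?_
  rw [tr_add]; ring

theorem heat_smul {N : ℕ} {ζ : Euc N → ℝ → ℝ} (h : C21 ζ) (r : ℝ) :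
    heatAdj (r • ζ) = r • heatAdj ζ := by
  obtain ⟨a, b, c, h⟩ := h.has
  funext p
  have := (h.smul r).heat_eq p
  rw [Pi.smul_apply, h.heat_eq]
  refine this.trans ?_
  rw [tr_smul, smul_eq_mul]; ring

/-- space of test functions -/
def TZ {N : ℕ} (Ω : Set (Euc N)) (T : ℝ) : Submodule ℝ (Euc N → ℝ → ℝ) where
  carrier := {ζ | TestZero Ω T ζ}
  add_mem' := by
    rintro ζ ζ' ⟨h1, h2, h3⟩ ⟨h1', h2', h3'⟩
    obtain ⟨a, b, c, h⟩ := h1.has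
    obtain ⟨a', b', c', h'⟩ := h1'.has
    refine ⟨(h.add h').c21, fun x hx t ht => ?_, fun x hx => ?_⟩
    · simp [h2 x hx t ht, h2' x hx t ht]
    · simp [h3 x hx, h3' x hx]
  zero_mem' := by
    refine ⟨?_, by simp, by simp⟩
    refine HasC21.c21 (a := 0) (b := 0) (c := 0) ?_
    exact ⟨continuous_const, fun x t => hasDerivAt_const _ _, fun x t => hasFDerivAt_const _ _,
      fun x t => hasFDerivAt_const _ _, continuous_const, continuous_const, continuous_const⟩
  smul_mem' := by
    rintro r ζ ⟨h1, h2, h3⟩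
    obtain ⟨a, b, c, h⟩ := h1.has
    refine ⟨(h.smul r).c21, fun x hx t ht => ?_, fun x hx => ?_⟩
    · simp [h2 x hx t ht]
    · simp [h3 x hx]

section
variable {N : ℕ} {Ω : Set (Euc N)} (hΩo : IsOpen Ω) (hΩb : Bornology.IsBounded Ω) (T : ℝ)
  {ν : Measure (Euc N)} [IsFiniteMeasure ν] (hν : ν Ωᶜ = 0)

/-- operator lam ζ - L ζ -/
def Aop (Ω : Set (Euc N)) (T lam : ℝ) : TZ Ω T →ₗ[ℝ] (Euc N × ℝ → ℝ) where
  toFun ζ := fun p => lam * ζ.1 p.1 p.2 - heatAdj ζ.1 p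
  map_add' := by
    intro ζ ζ'
    funext p
    simp only [Submodule.coe_add, heat_add ζ.2.1 ζ'.2.1, Pi.add_apply]; ring
  map_smul' := by
    intro r ζ
    funext p
    simp only [Submodule.coe_smul, heat_smul ζ.2.1, Pi.smul_apply, RingHom.id_apply, smul_eq_mul]; ring

/-- functional -/
def Fop (hΩo : IsOpen Ω) (hΩb : Bornology.IsBounded Ω) (T : ℝ)
  (hν : ν Ωᶜ = 0) (w : Euc N × ℝ → ℝ) (hw : IntegrableOn w (QT Ω T)) : TZ Ω T →ₗ[ℝ] ℝ where
  toFun ζ := ∫ x, ζ.1 x 0 ∂ν + ∫ p in QT Ω T, ζ.1 p.1 p.2 * w p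
  map_add' := by
    intro ζ ζ'
    have h1 : ∫ x, (ζ + ζ').1 x 0 ∂ν = ∫ x, ζ.1 x 0 ∂ν + ∫ x, ζ'.1 x 0 ∂ν := by
      rw [← integral_add (nu_int hΩb hν (ζ.2.1.cont_fix 0)) (nu_int hΩb hν (ζ'.2.1.cont_fix 0))]
      rfl
    have h2 : ∫ p in QT Ω T, (ζ + ζ').1 p.1 p.2 * w p =
        (∫ p in QT Ω T, ζ.1 p.1 p.2 * w p) + ∫ p in QT Ω T, ζ'.1 p.1 p.2 * w p := by
      rw [← integral_add (QT_int hΩo hΩb T ζ.2.1.1 hw) (QT_int hΩo hΩb T ζ'.2.1.1 hw)]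
      refine integral_congr_ae (Eventually.of_forall fun p => ?_)
      simp only [Submodule.coe_add, Pi.add_apply]; ring
    rw [h1, h2]; ring
  map_smul' := by
    intro r ζ
    have h1 : ∫ x, (r • ζ).1 x 0 ∂ν = r * ∫ x, ζ.1 x 0 ∂ν := by
      rw [← integral_const_mul]; rfl
    have h2 : ∫ p in QT Ω T, (r • ζ).1 p.1 p.2 * w p = r * ∫ p in QT Ω T, ζ.1 p.1 p.2 * w p := by
      rw [← integral_const_mul]
      refine integral_congr_ae (Eventually.of_forall fun p => ?_)
      simp only [Submodule.coe_smul, Pi.smul_apply, smul_eq_mul]; ring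
    rw [h1, h2]; simp only [RingHom.id_apply, smul_eq_mul]; ring

/-- good Lipschitz nonlinearity -/
structure LipG (lam : ℝ) (G : ℝ → ℝ) : Prop where
  cont : Continuous G
  mono : Monotone G
  zero : ∀ s ≤ 0, G s = 0
  lam : Monotone (fun s => lam * s - G s)

theorem LipG.le {lam : ℝ} {G : ℝ → ℝ} (h : LipG lam G) {s : ℝ} (hs : 0 ≤ s) : G s ≤ lam * s := by
  have := h.lam hs
  simp only [h.zero 0 le_rfl] at this
  linarith

theorem LipG.nonneg {lam : ℝ} {G : ℝ → ℝ} (h : LipG lam G) (s : ℝ) : 0 ≤ G s := by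
  rcases le_total s 0 with hs | hs
  · rw [h.zero s hs]
  · rw [← h.zero 0 le_rfl]; exact h.mono hs

theorem LipG.int {lam : ℝ} {G : ℝ → ℝ} (h : LipG lam G) {X : Type*} [MeasurableSpace X] {m : Measure X}
    {u : X → ℝ} (hu0 : ∀ p, 0 ≤ u p) (hu : Integrable u m) : Integrable (fun p => G (u p)) m := by
  refine (hu.const_mul lam).mono' (h.cont.comp_aestronglyMeasurable hu.1) (Eventually.of_forall fun p => ?_)
  rw [Real.norm_eq_abs, abs_of_nonneg (h.nonneg _)]
  exact h.le (hu0 p)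

include hΩo hΩb hν in
theorem step {lam : ℝ} {G : ℝ → ℝ} (hG : LipG lam G) {u : Euc N × ℝ → ℝ} (hu0 : ∀ p, 0 ≤ u p)
    (hu : IntegrableOn u (QT Ω T)) (hk : KF Ω T ν u (fun p => G (u p))) :
    ∃ v : Euc N × ℝ → ℝ, (∀ p, 0 ≤ v p) ∧ (∀ p, v p ≤ u p) ∧ IntegrableOn v (QT Ω T) ∧
      EQ Ω T ν v (fun p => lam * v p - lam * u p + G (u p)) ∧ KF Ω T ν v (fun p => G (v p)) := by
  have hGu : IntegrableOn (fun p => G (u p)) (QT Ω T) := hG.int hu0 hu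
  have hw : IntegrableOn (fun p => lam * u p - G (u p)) (QT Ω T) := (hu.const_mul lam).sub hGu
  obtain ⟨v, hvm, hv0, hvu, hv⟩ := HB (volume.restrict (QT Ω T)) u hu0 hu (Aop Ω T lam)
    (fun ζ => ((ζ.2.1.1.const_mul lam).sub ζ.2.1.cont_heat).aestronglyMeasurable)
    (fun ζ => by
      obtain ⟨C, hC0, hC⟩ := QT_bdd hΩb T ((ζ.2.1.1.const_mul lam).sub ζ.2.1.cont_heat)
      exact ⟨C, (ae_restrict_mem (QT_meas hΩo T)).mono hC⟩)
    (Fop hΩo hΩb T hν _ hw) (by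
      intro ζ
      have hAc : Continuous (Aop Ω T lam ζ) := (ζ.2.1.1.const_mul lam).sub ζ.2.1.cont_heat
      have h1 : ∫ x, ζ.1 x 0 ∂ν ≤ ∫ x, max (ζ.1 x 0) 0 ∂ν :=
        integral_mono (nu_int hΩb hν (ζ.2.1.cont_fix 0)) 
          (nu_int hΩb hν ((ζ.2.1.cont_fix 0).max continuous_const)) fun x => le_max_left _ _
      have h2 := h1.trans (hk ζ.1 ζ.2)
      have i1 := kf_int hΩo hΩb T hu hGu ζ.2.1
      have i2 := QT_int hΩo hΩb T ζ.2.1.1 hw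
      have i3 : IntegrableOn (fun p => u p * max (Aop Ω T lam ζ p) 0) (QT Ω T) := by
        refine (QT_int hΩo hΩb T (hAc.max continuous_const) hu).congr (Eventually.of_forall fun p => mul_comm _ _)
      have h3 : (∫ p in QT Ω T, (if 0 < ζ.1 p.1 p.2 then (-(u p) * heatAdj ζ.1 p + ζ.1 p.1 p.2 * G (u p)) else 0))
         + ∫ p in QT Ω T, ζ.1 p.1 p.2 * (lam * u p - G (u p)) ≤ ∫ p in QT Ω T, u p * max (Aop Ω T lam ζ p) 0 := by
        rw [← integral_add i1 i2]
        refine integral_mono (i1.add i2) i3 fun p => ?_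
        have hw0 : 0 ≤ lam * u p - G (u p) := by linarith [hG.le (hu0 p)]
        have e1 : Aop Ω T lam ζ p = lam * ζ.1 p.1 p.2 - heatAdj ζ.1 p := rfl
        simp only
        split_ifs with h0
        · have := mul_le_mul_of_nonneg_left (le_max_left (Aop Ω T lam ζ p) 0) (hu0 p)
          rw [e1] at this ⊢
          linarith
        · have := mul_nonneg (hu0 p) (le_max_right (Aop Ω T lam ζ p) 0)
          have := mul_nonneg hw0 (neg_nonneg.2 (not_lt.1 h0))
          linarith
      have : Fop hΩo hΩb T hν _ hw ζ = ∫ x, ζ.1 x 0 ∂ν + ∫ p in QT Ω T, ζ.1 p.1 p.2 * (lam * u p - G (u p)) := rfl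
      rw [this]
      linarith)
  have hvi : IntegrableOn v (QT Ω T) := hu.mono' hvm (Eventually.of_forall fun p => by
    rw [Real.norm_eq_abs, abs_of_nonneg (hv0 p)]; exact hvu p)
  have hfi : IntegrableOn (fun p => lam * v p - lam * u p + G (u p)) (QT Ω T) :=
    ((hvi.const_mul lam).sub (hu.const_mul lam)).add hGu
  have heq : EQ Ω T ν v (fun p => lam * v p - lam * u p + G (u p)) := by
    intro ζ hζ
    have h1 := hv ⟨ζ, hζ⟩
    have : Fop hΩo hΩb T hν _ hw ⟨ζ, hζ⟩ = ∫ x, ζ x 0 ∂ν + ∫ p in QT Ω T, ζ p.1 p.2 * (lam * u p - G (u p)) := rfl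
    rw [this] at h1
    rw [← sub_eq_iff_eq_add] at h1
    rw [← h1, ← integral_sub]
    · refine integral_congr_ae (Eventually.of_forall fun p => ?_)
      have e1 : Aop Ω T lam ⟨ζ, hζ⟩ p = lam * ζ p.1 p.2 - heatAdj ζ p := rfl
      simp only [e1]; ring
    · have hAc : Continuous (Aop Ω T lam ⟨ζ, hζ⟩) := (hζ.1.1.const_mul lam).sub hζ.1.cont_heat
      exact (QT_int hΩo hΩb T hAc hvi).congr (Eventually.of_forall fun p => mul_comm _ _)
    · exact QT_int hΩo hΩb T hζ.1.1 hw
  refine ⟨v, hv0, hvu, hvi, heq, ?_⟩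
  refine (heq.kf hΩo hΩb T hν hv0 hvi hfi).mono hΩo hΩb T hvi hfi (hG.int hv0 hvi) fun p => ?_
  have := hG.lam (hvu p)
  simp only at this
  linarith

include hΩo hΩb in
/-- passing to the limit in the weak equation -/
theorem EQ_lim {u f : ℕ → Euc N × ℝ → ℝ} {u' f' : Euc N × ℝ → ℝ} {W : Euc N × ℝ → ℝ}
    (h : ∀ n, EQ Ω T ν (u n) (f n)) (hW : IntegrableOn W (QT Ω T))
    (hum : ∀ n, IntegrableOn (u n) (QT Ω T)) (huW : ∀ n p, |u n p| ≤ W p)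
    (hul : ∀ p, Tendsto (fun n => u n p) atTop (𝓝 (u' p)))
    (hfi : ∀ n, IntegrableOn (f n) (QT Ω T)) (hfi' : IntegrableOn f' (QT Ω T))
    (hfl : Tendsto (fun n => ∫ p in QT Ω T, |f n p - f' p|) atTop (𝓝 0)) : EQ Ω T ν u' f' := by
  intro ζ hζ
  obtain ⟨C, hC0, hC⟩ := QT_bdd hΩb T hζ.1.cont_heat
  obtain ⟨D, hD0, hD⟩ := QT_bdd hΩb T hζ.1.1
  have hu'W : ∀ p, |u' p| ≤ W p := fun p => le_of_tendsto (hul p).abs (Eventually.of_forall fun n => huW n p)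
  have hu'm : AEStronglyMeasurable u' (volume.restrict (QT Ω T)) :=
    aestronglyMeasurable_of_tendsto_ae atTop (fun n => (hum n).1) (Eventually.of_forall hul)
  have hui' : IntegrableOn u' (QT Ω T) := hW.mono' hu'm (Eventually.of_forall hu'W)
  have key : ∀ v k : Euc N × ℝ → ℝ, IntegrableOn v (QT Ω T) → IntegrableOn k (QT Ω T) →
     ∫ p in QT Ω T, (-(v p) * heatAdj ζ p + ζ p.1 p.2 * k p) =
      (∫ p in QT Ω T, (-(v p) * heatAdj ζ p)) + ∫ p in QT Ω T, ζ p.1 p.2 * k p := by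
    intro v k hv hk
    refine integral_add ?_ (QT_int hΩo hΩb T hζ.1.1 hk)
    refine (QT_int hΩo hΩb T hζ.1.cont_heat hv).neg.congr (Eventually.of_forall fun p => ?_)
    simp only [Pi.neg_apply]; ring
  have h1 : Tendsto (fun n => ∫ p in QT Ω T, (-(u n p) * heatAdj ζ p)) atTop
      (𝓝 (∫ p in QT Ω T, (-(u' p) * heatAdj ζ p))) := by
    refine tendsto_integral_of_dominated_convergence (fun p => |heatAdj ζ p * W p|) ?_ ?_ ?_ ?_
    · exact fun n => (hum n).1.neg.mul hζ.1.cont_heat.aestronglyMeasurable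
    · exact (QT_int hΩo hΩb T hζ.1.cont_heat hW).abs
    · refine fun n => Eventually.of_forall fun p => ?_
      rw [Real.norm_eq_abs, abs_mul, abs_neg, abs_mul, mul_comm]
      exact mul_le_mul_of_nonneg_left ((huW n p).trans (le_abs_self _)) (abs_nonneg _)
    · exact Eventually.of_forall fun p => (hul p).neg.mul_const _
  have h2 : Tendsto (fun n => ∫ p in QT Ω T, ζ p.1 p.2 * f n p) atTop
      (𝓝 (∫ p in QT Ω T, ζ p.1 p.2 * f' p)) := by
    rw [tendsto_iff_dist_tendsto_zero]
    have h3 := hfl.const_mul D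
    rw [mul_zero] at h3
    refine squeeze_zero (fun n => dist_nonneg) (fun n => ?_) h3
    rw [Real.dist_eq, ← integral_sub (QT_int hΩo hΩb T hζ.1.1 (hfi n)) (QT_int hΩo hΩb T hζ.1.1 hfi'),
      ← integral_const_mul]
    refine (abs_integral_le_integral_abs).trans ?_
    refine integral_mono_ae ?_ (((hfi n).sub hfi').abs.const_mul D) ?_
    · exact ((QT_int hΩo hΩb T hζ.1.1 (hfi n)).sub (QT_int hΩo hΩb T hζ.1.1 hfi')).abs
    · filter_upwards [ae_restrict_mem (QT_meas hΩo T)] with p hp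
      rw [← mul_sub, abs_mul]
      exact mul_le_mul_of_nonneg_right (hD p hp) (abs_nonneg _)
  rw [key _ _ hui' hfi']
  have h3 := h1.add h2
  refine tendsto_nhds_unique h3 ?_
  refine tendsto_const_nhds.congr fun n => ?_
  rw [← key _ _ (hum n) (hfi n), h n ζ hζ]

include hΩo hΩb hν in
theorem lemB {lam : ℝ} {G : ℝ → ℝ} (hG : LipG lam G) {u : Euc N × ℝ → ℝ} (hu0 : ∀ p, 0 ≤ u p)
    (hu : IntegrableOn u (QT Ω T)) (hk : KF Ω T ν u (fun p => G (u p))) :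
    ∃ v : Euc N × ℝ → ℝ, (∀ p, 0 ≤ v p) ∧ (∀ p, v p ≤ u p) ∧ IntegrableOn v (QT Ω T) ∧
      EQ Ω T ν v (fun p => G (v p)) := by
  let S := {w : Euc N × ℝ → ℝ // (∀ p, 0 ≤ w p) ∧ IntegrableOn w (QT Ω T) ∧ KF Ω T ν w (fun p => G (w p))}
  have hst : ∀ w : S, ∃ w' : S, (∀ p, w'.1 p ≤ w.1 p) ∧
      EQ Ω T ν w'.1 (fun p => lam * w'.1 p - lam * w.1 p + G (w.1 p)) := by
    rintro ⟨w, h0, h1, h2⟩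
    obtain ⟨v, a, b, c, d, e⟩ := step hΩo hΩb T hν hG h0 h1 h2
    exact ⟨⟨v, a, c, e⟩, b, d⟩
  choose nx hnx1 hnx2 using hst
  let U : ℕ → S := fun n => nx^[n] ⟨u, hu0, hu, hk⟩
  have hU0 : (U 0).1 = u := rfl
  have hUs : ∀ n, U (n+1) = nx (U n) := fun n => Function.iterate_succ_apply' _ _ _
  have hanti : ∀ p, Antitone (fun n => (U n).1 p) := fun p => antitone_nat_of_succ_le fun n => by
    rw [hUs]; exact hnx1 _ p
  have hUu : ∀ n p, (U n).1 p ≤ u p := fun n p => hanti p (Nat.zero_le n)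
  have hlam : ∀ p, 0 ≤ lam * u p := fun p => (hG.nonneg _).trans (hG.le (hu0 p))
  let v : Euc N × ℝ → ℝ := fun p => ⨅ n, (U n).1 p
  have hbd : ∀ p, BddBelow (range fun n => (U n).1 p) := fun p => ⟨0, by rintro _ ⟨n, rfl⟩; exact (U n).2.1 p⟩
  have hl : ∀ p, Tendsto (fun n => (U n).1 p) atTop (𝓝 (v p)) := fun p =>
    tendsto_atTop_ciInf (hanti p) (hbd p)
  have hv0 : ∀ p, 0 ≤ v p := fun p => le_ciInf fun n => (U n).2.1 p
  have hvu : ∀ p, v p ≤ u p := fun p => ciInf_le (hbd p) 0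
  have hvm : AEStronglyMeasurable v (volume.restrict (QT Ω T)) :=
    aestronglyMeasurable_of_tendsto_ae atTop (fun n => (U n).2.2.1.1) (Eventually.of_forall hl)
  have hvi : IntegrableOn v (QT Ω T) := hu.mono' hvm (Eventually.of_forall fun p => by
    rw [Real.norm_eq_abs, abs_of_nonneg (hv0 p)]; exact hvu p)
  refine ⟨v, hv0, hvu, hvi, ?_⟩
  have hfi : ∀ n, IntegrableOn (fun p => lam * (U (n+1)).1 p - lam * (U n).1 p + G ((U n).1 p)) (QT Ω T) := fun n =>
     (((U (n+1)).2.2.1.const_mul lam).sub ((U n).2.2.1.const_mul lam)).add (hG.int (U n).2.1 (U n).2.2.1)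
  refine EQ_lim hΩo hΩb T (u := fun n => (U (n+1)).1) (f := fun n p => lam * (U (n+1)).1 p - lam * (U n).1 p + G ((U n).1 p))
    (W := u) (fun n => ?_) hu (fun n => (U (n+1)).2.2.1) (fun n p => ?_) (fun p => (hl p).comp (tendsto_add_atTop_nat 1))
    hfi (hG.int hv0 hvi) ?_
  · rw [hUs]; exact hnx2 _
  · rw [abs_of_nonneg ((U (n+1)).2.1 p)]; exact hUu _ p
  · have : Tendsto (fun n => ∫ p in QT Ω T, |lam * (U (n+1)).1 p - lam * (U n).1 p + G ((U n).1 p) - G (v p)|) atTop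
       (𝓝 (∫ p in QT Ω T, (0:ℝ))) := by
      refine tendsto_integral_of_dominated_convergence (fun p => |lam| * u p + |lam| * u p + |lam| * u p + |lam| * u p) (fun n => ?_) ?_ (fun n => Eventually.of_forall fun p => ?_)
        (Eventually.of_forall fun p => ?_)
      · exact ((hfi n).sub (hG.int hv0 hvi)).abs.1
      · exact ((((hu.const_mul |lam|).add (hu.const_mul |lam|)).add (hu.const_mul |lam|)).add (hu.const_mul |lam|))
      · rw [Real.norm_eq_abs, abs_abs]
        have b1 : ∀ n, |lam * (U n).1 p| ≤ |lam| * u p := fun n => by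
          rw [abs_mul, abs_of_nonneg ((U n).2.1 p)]
          exact mul_le_mul_of_nonneg_left (hUu n p) (abs_nonneg _)
        have b2 : ∀ s, 0 ≤ s → s ≤ u p → |G s| ≤ |lam| * u p := fun s h0 h1 => by
          rw [abs_of_nonneg (hG.nonneg _)]
          exact (hG.mono h1).trans ((hG.le (hu0 p)).trans (mul_le_mul_of_nonneg_right (le_abs_self _) (hu0 p)))
        refine (abs_sub _ _).trans (add_le_add ((abs_add_le _ _).trans (add_le_add ((abs_sub _ _).trans (add_le_add ?_ ?_)) ?_)) ?_)
        · exact b1 _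
        · exact b1 _
        · exact b2 _ ((U n).2.1 p) (hUu n p)
        · exact b2 _ (hv0 p) (hvu p)
      · have t1 := (((((hl p).comp (tendsto_add_atTop_nat 1)).const_mul lam).sub ((hl p).const_mul lam)).add
          ((hG.cont.tendsto _).comp (hl p))).sub_const (G (v p)) |>.abs
        simp only [sub_self, zero_add, abs_zero] at t1
        exact t1
    simpa using this

end

/-- Lipschitz approximations of `g` -/
def gn (g : ℝ → ℝ) (n : ℕ) (s : ℝ) : ℝ := ⨅ r : ℝ, (g (s - r) + n * |r|)

section
variable {g : ℝ → ℝ} (hg : GoodG g)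
include hg

theorem GoodG.nonneg (s : ℝ) : 0 ≤ g s := by
  rcases le_total s 0 with hs | hs
  · rw [hg.2.2 s hs]
  · rw [← hg.2.2 0 le_rfl]; exact hg.2.1 hs

theorem gn_bdd (n : ℕ) (s : ℝ) : BddBelow (range fun r : ℝ => (g (s - r) + n * |r|)) :=
  ⟨0, by rintro _ ⟨r, rfl⟩; exact add_nonneg (hg.nonneg _) (by positivity)⟩

theorem gn_nonneg (n : ℕ) (s : ℝ) : 0 ≤ gn g n s :=
  le_ciInf fun r => add_nonneg (hg.nonneg _) (by positivity)

theorem gn_le (n : ℕ) (s : ℝ) : gn g n s ≤ g s := by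
  have := ciInf_le (gn_bdd hg n s) 0
  simpa [gn] using this

theorem gn_lip (n : ℕ) : LipG n (gn g n) := by
  have hm : Monotone (gn g n) := fun s s' h => by
    refine ciInf_mono (gn_bdd hg n s) fun r => ?_
    have := hg.2.1 (sub_le_sub_right h r)
    linarith
  have hl : Monotone (fun s => n * s - gn g n s) := fun s s' h => by
    have : gn g n s' - n * (s' - s) ≤ gn g n s := by
      refine le_ciInf fun r => ?_
      have h1 := ciInf_le (gn_bdd hg n s') (r + (s' - s))
      rw [show s' - (r + (s' - s)) = s - r by ring] at h1
      have h2 : |r + (s' - s)| ≤ |r| + (s' - s) := (abs_add_le _ _).trans (by rw [abs_of_nonneg (sub_nonneg.2 h)])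
      have := mul_le_mul_of_nonneg_left h2 (Nat.cast_nonneg (α := ℝ) n)
      unfold gn
      linarith
    simp only
    linarith
  refine ⟨?_, hm, fun s hs => le_antisymm ((gn_le hg n s).trans (hg.2.2 s hs).le) (gn_nonneg hg n s), hl⟩
  refine (LipschitzWith.of_dist_le_mul (K := n) fun s s' => ?_).continuous
  rw [Real.dist_eq, Real.dist_eq, NNReal.coe_natCast]
  rcases le_total s s' with h | h
  · rw [abs_sub_comm, abs_of_nonneg (sub_nonneg.2 (hm h)), abs_sub_comm, abs_of_nonneg (sub_nonneg.2 h)]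
    have := hl h
    simp only at this
    linarith
  · rw [abs_of_nonneg (sub_nonneg.2 (hm h)), abs_of_nonneg (sub_nonneg.2 h)]
    have := hl h
    simp only at this
    linarith

theorem gn_mono {n m : ℕ} (h : n ≤ m) (s : ℝ) : gn g n s ≤ gn g m s := by
  refine ciInf_mono (gn_bdd hg n s) fun r => ?_
  have : (n:ℝ) ≤ m := by exact_mod_cast h
  gcongr

theorem gn_tendsto (s : ℝ) : Tendsto (fun n => gn g n s) atTop (𝓝 (g s)) := by
  rw [Metric.tendsto_atTop]
  intro e he
  obtain ⟨d, hd, hd2⟩ := Metric.continuous_iff.1 hg.1 s (e/2) (by positivity)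
  obtain ⟨n, hn⟩ := exists_nat_ge (g s / d)
  refine ⟨n, fun m hm => ?_⟩
  have hm' : g s / d ≤ m := hn.trans (by exact_mod_cast hm)
  rw [div_le_iff₀ hd] at hm'
  rw [Real.dist_eq, abs_sub_comm, abs_of_nonneg (sub_nonneg.2 (gn_le hg m s))]
  have : g s - e/2 ≤ gn g m s := by
    refine le_ciInf fun r => ?_
    have hn0 : (0:ℝ) ≤ m * |r| := by positivity
    rcases lt_or_ge |r| d with h | h
    · have := hd2 (s - r) (by rw [Real.dist_eq]; simpa using h)
      rw [Real.dist_eq] at this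
      have := (abs_lt.1 this).1
      linarith
    · have := mul_le_mul_of_nonneg_left h (Nat.cast_nonneg (α := ℝ) m)
      have := hg.nonneg (s - r)
      linarith
  linarith

theorem gn_tendsto' {u : ℕ → ℝ} {v : ℝ} (hu : Tendsto u atTop (𝓝 v)) (huv : ∀ n, v ≤ u n) :
    Tendsto (fun n => gn g n (u n)) atTop (𝓝 (g v)) := by
  refine tendsto_of_tendsto_of_tendsto_of_le_of_le (gn_tendsto hg v) ((hg.1.tendsto v).comp hu)
    (fun n => (gn_lip hg n).mono (huv n)) (fun n => gn_le hg n _)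

end

section
variable {N : ℕ} {Ω : Set (Euc N)} (hΩo : IsOpen Ω) (hΩb : Bornology.IsBounded Ω) (T : ℝ)
  {ν : Measure (Euc N)} [IsFiniteMeasure ν] (hν : ν Ωᶜ = 0)

include hΩo hΩb hν in
theorem lemD {g : ℝ → ℝ} (hg : GoodG g) {W : Euc N × ℝ → ℝ} (hW0 : ∀ p, 0 ≤ W p)
    (hW : IntegrableOn W (QT Ω T)) (hk : KF Ω T ν W (fun _ => 0)) :
    ∃ u : ℕ → Euc N × ℝ → ℝ, (∀ n p, 0 ≤ u n p) ∧ (∀ n p, u n p ≤ W p) ∧ (∀ p, Antitone fun n => u n p) ∧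
      (∀ n, IntegrableOn (u n) (QT Ω T)) ∧ ∀ n, EQ Ω T ν (u n) (fun p => gn g n (u n p)) := by
  let P : ℕ → (Euc N × ℝ → ℝ) → Prop := fun n w => (∀ p, 0 ≤ w p) ∧ (∀ p, w p ≤ W p) ∧
    IntegrableOn w (QT Ω T) ∧ EQ Ω T ν w (fun p => gn g n (w p))
  have h0 : ∃ w, P 0 w := by
    obtain ⟨v, a, b, c, d⟩ := lemB hΩo hΩb T hν (gn_lip hg 0) hW0 hW
      (hk.mono hΩo hΩb T hW (integrable_zero _ _ _) ((gn_lip hg 0).int hW0 hW) fun p => gn_nonneg hg _ _)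
    exact ⟨v, a, b, c, d⟩
  have hs : ∀ n w, P n w → ∃ w', P (n+1) w' ∧ ∀ p, w' p ≤ w p := by
    rintro n w ⟨a, b, c, d⟩
    obtain ⟨v, a', b', c', d'⟩ := lemB hΩo hΩb T hν (gn_lip hg (n+1)) a c
      ((d.kf hΩo hΩb T hν a c ((gn_lip hg n).int a c)).mono hΩo hΩb T c ((gn_lip hg n).int a c)
       ((gn_lip hg (n+1)).int a c) fun p => gn_mono hg (Nat.le_succ n) _)
    exact ⟨v, ⟨a', fun p => (b' p).trans (b p), c', d'⟩, b'⟩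
  choose! nx h1 h2 using hs
  obtain ⟨w0, hw0⟩ := h0
  let u : ℕ → Euc N × ℝ → ℝ := fun n => Nat.rec w0 (fun n w => nx n w) n
  have hP : ∀ n, P n (u n) := by
    intro n
    induction n with
    | zero => exact hw0
    | succ k ih => exact h1 k (u k) ih
  exact ⟨u, fun n => (hP n).1, fun n => (hP n).2.1, fun p => antitone_nat_of_succ_le fun n => h2 n _ (hP n) p,
    fun n => (hP n).2.2.1, fun n => (hP n).2.2.2⟩
end

/-- Gaussian -/
def Gs {N : ℕ} (z : Euc N) : ℝ := Real.exp (-(1/4) * ‖z‖^2)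

section
variable {N : ℕ}

theorem Gs_pos (z : Euc N) : 0 < Gs z := Real.exp_pos _
theorem Gs_cont : Continuous (Gs (N := N)) := by unfold Gs; fun_prop

theorem exp_int {b : ℝ} (hb : 0 < b) : Integrable (fun z : Euc N => Real.exp (-b * ‖z‖^2)) := by
  have := (GaussianFourier.integrable_cexp_neg_mul_sq_norm_add (V := Euc N) (b := (b:ℂ)) (by simpa using hb) 0 0).re
  refine this.congr (Eventually.of_forall fun z => ?_)
  simp only [zero_mul, add_zero]
  rw [show (-(b:ℂ) * (‖z‖:ℂ)^2) = ((-b * ‖z‖^2 : ℝ) : ℂ) by push_cast; ring, ← Complex.ofReal_exp]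
  exact Complex.ofReal_re _

theorem Gs_int : Integrable (Gs (N := N)) := exp_int (by norm_num)

theorem Gs_int1 : Integrable (fun z : Euc N => ‖z‖ * Gs z) := by
  refine ((exp_int (N := N) (b := 1/8) (by norm_num)).const_mul 2).mono' (by
    exact (continuous_norm.mul Gs_cont).aestronglyMeasurable) (Eventually.of_forall fun z => ?_)
  rw [Real.norm_eq_abs, abs_of_nonneg (mul_nonneg (norm_nonneg _) (Gs_pos z).le)]
  unfold Gs
  have h1 : Real.exp (-(1/4) * ‖z‖^2) = Real.exp (-(1/8) * ‖z‖^2) * Real.exp (-(1/8 * ‖z‖^2)) := by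
    rw [← Real.exp_add]; ring_nf
  have h2 : ‖z‖ * Real.exp (-(1/8 * ‖z‖^2)) ≤ 2 := by
    rw [Real.exp_neg, ← div_eq_mul_inv, div_le_iff₀ (Real.exp_pos _)]
    have := Real.add_one_le_exp (1/8 * ‖z‖^2)
    nlinarith [sq_nonneg (‖z‖ - 2)]
  rw [h1]
  have := mul_le_mul_of_nonneg_left h2 (Real.exp_pos (-(1/8) * ‖z‖^2)).le
  linarith

theorem Gs_c_pos : 0 < ∫ z : Euc N, Gs z := by
  rw [integral_pos_iff_support_of_nonneg (fun z => (Gs_pos z).le) Gs_int]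
  have : Function.support (Gs (N := N)) = univ := by
    ext z; simp [(Gs_pos z).ne']
  rw [this]
  exact Measure.measure_univ_pos.2 (NeZero.ne _)

theorem Gs_hasF (z : Euc N) : HasFDerivAt Gs ((-(1/2) * Gs z) • innerSL ℝ z) z := by
  have h := ((hasStrictFDerivAt_norm_sq z).hasFDerivAt.const_mul (-(1/4) : ℝ)).exp
  refine h.congr_fderiv ?_
  ext v
  simp only [smul_apply, smul_eq_mul, nsmul_eq_mul, Gs]
  push_cast
  ring

theorem gauss_ibp {β : Euc N → (Euc N →L[ℝ] ℝ)} {γ : Euc N → (Euc N →L[ℝ] (Euc N →L[ℝ] ℝ))}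
    (hβ : ∀ z, HasFDerivAt β (γ z) z) (hγ : Continuous γ) {C : ℝ} (hC : ∀ z, ‖β z‖ ≤ C) {D : ℝ}
    (hD : ∀ z, ‖γ z‖ ≤ D) :
    ∫ z, Gs z * β z z = 2 * ∫ z, Gs z * tr (γ z) := by
  have hβc : Continuous β := continuous_iff_continuousAt.2 fun z => (hβ z).continuousAt
  have hz : ∀ (z : Euc N) (i : Fin N), |z i| ≤ ‖z‖ := fun z i => by
    simpa using PiLp.norm_apply_le z i
  have hbi : ∀ (z : Euc N) (i : Fin N), |β z (EuclideanSpace.single i 1)| ≤ C := fun z i => by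
    refine ((β z).le_opNorm _).trans ?_
    simpa using hC z
  have hci : ∀ (z : Euc N) (i : Fin N), |γ z (EuclideanSpace.single i 1) (EuclideanSpace.single i 1)| ≤ D := fun z i => by
    refine ((γ z).le_opNorm₂ _ _).trans ?_
    simpa using hD z
  have ca : ∀ i, Continuous fun z : Euc N => β z (EuclideanSpace.single i 1) := fun i => hβc.clm_apply continuous_const
  have cb : ∀ i, Continuous fun z : Euc N => γ z (EuclideanSpace.single i 1) (EuclideanSpace.single i 1) :=
    fun i => (hγ.clm_apply continuous_const).clm_apply continuous_const
  have I1 : ∀ i, Integrable (fun z : Euc N => Gs z * z i * β z (EuclideanSpace.single i 1)) := fun i => by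
    refine (Gs_int1.const_mul C).mono' ?_ (Eventually.of_forall fun z => ?_)
    · refine ((Gs_cont.mul ?_).mul (ca i)).aestronglyMeasurable
      fun_prop
    · rw [Real.norm_eq_abs, abs_mul, abs_mul, abs_of_pos (Gs_pos z), mul_comm C, mul_comm (Gs z)]
      exact mul_le_mul (mul_le_mul_of_nonneg_right (hz z i) (Gs_pos z).le) (hbi z i) (abs_nonneg _)
        (mul_nonneg (norm_nonneg _) (Gs_pos z).le)
  have I2 : ∀ i, Integrable (fun z : Euc N => Gs z * γ z (EuclideanSpace.single i 1) (EuclideanSpace.single i 1)) := fun i => by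
    refine Gs_int.mul_bdd (c := D) (cb i).aestronglyMeasurable (Eventually.of_forall fun z => hci z i)
  have I3 : ∀ i, Integrable (fun z : Euc N => Gs z * β z (EuclideanSpace.single i 1)) := fun i => by
    refine Gs_int.mul_bdd (c := C) (ca i).aestronglyMeasurable (Eventually.of_forall fun z => hbi z i)
  have fG : ∀ (z : Euc N) (i : Fin N), fderiv ℝ Gs z (EuclideanSpace.single i 1) = -(1/2) * (Gs z * z i) := fun z i => by
    rw [(Gs_hasF z).fderiv]
    simp [EuclideanSpace.inner_single_right]
    ring
  have hB : ∀ (z : Euc N) (i : Fin N), HasFDerivAt (fun z => β z (EuclideanSpace.single i 1))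
      ((ContinuousLinearMap.apply ℝ ℝ (EuclideanSpace.single i 1)).comp (γ z)) z := fun z i =>
    (ContinuousLinearMap.apply ℝ ℝ (EuclideanSpace.single i (1:ℝ))).hasFDerivAt.comp z (hβ z)
  have fB : ∀ (z : Euc N) (i : Fin N), fderiv ℝ (fun z => β z (EuclideanSpace.single i 1)) z (EuclideanSpace.single i 1) =
      γ z (EuclideanSpace.single i 1) (EuclideanSpace.single i 1) := fun z i => by
    rw [(hB z i).fderiv]; rfl
  have key : ∀ i, ∫ z : Euc N, Gs z * z i * β z (EuclideanSpace.single i 1) =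
      2 * ∫ z, Gs z * γ z (EuclideanSpace.single i 1) (EuclideanSpace.single i 1) := by
    intro i
    have := integral_mul_fderiv_eq_neg_fderiv_mul_of_integrable (μ := (volume : Measure (Euc N)))
      (f := Gs) (g := fun z => β z (EuclideanSpace.single i 1)) (v := EuclideanSpace.single i 1)
      (by simp only [fG]
          refine ((I1 i).const_mul (-(1/2))).congr (Eventually.of_forall fun z => ?_)
          simp only; ring)
      (by simp only [fB]; exact I2 i) (I3 i) (fun z _ => (Gs_hasF z).differentiableAt)
      (fun z _ => (hB z i).differentiableAt)
    simp only [fG, fB] at this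
    rw [this, ← integral_neg, ← integral_const_mul]
    refine integral_congr_ae (Eventually.of_forall fun z => ?_)
    simp only; ring
  have e1 : ∀ z : Euc N, Gs z * β z z = ∑ i, Gs z * z i * β z (EuclideanSpace.single i 1) := fun z => by
    have hz : z = ∑ i, z i • EuclideanSpace.single i (1:ℝ) := by
      ext j
      simp [Finset.sum_apply, Pi.single_apply]
    conv_lhs => rw [show β z z = β z (∑ i, z i • EuclideanSpace.single i (1:ℝ)) from congrArg _ hz]
    rw [map_sum, Finset.mul_sum]
    refine Finset.sum_congr rfl fun i _ => ?_
    rw [map_smul, smul_eq_mul]; ring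
  have e2 : ∀ z : Euc N, Gs z * tr (γ z) = ∑ i, Gs z * γ z (EuclideanSpace.single i 1) (EuclideanSpace.single i 1) := fun z => by
    unfold tr; rw [Finset.mul_sum]
  simp only [e1, e2]
  rw [integral_finsetSum _ fun i _ => I1 i, integral_finsetSum _ fun i _ => I2 i, Finset.mul_sum]
  exact Finset.sum_congr rfl fun i _ => key i

theorem heat_id {ψ : Euc N → ℝ → ℝ} {a : Euc N → ℝ → ℝ} {b : Euc N → ℝ → (Euc N →L[ℝ] ℝ)}
    {c : Euc N → ℝ → (Euc N →L[ℝ] (Euc N →L[ℝ] ℝ))} (h : HasC21 ψ a b c) {C : ℝ}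
    (h0 : ∀ x t, |ψ x t| ≤ C) (ha : ∀ x t, |a x t| ≤ C) (hb : ∀ x t, ‖b x t‖ ≤ C)
    (hc : ∀ x t, ‖c x t‖ ≤ C) (hL : ∀ p, |heatAdj ψ p| ≤ C) (y : Euc N) {T : ℝ} (hT : 0 ≤ T)
    (hψT : ∀ x, ψ x T = 0) :
    ∫ t in (0:ℝ)..T, ∫ z, Gs z * heatAdj ψ (y + √t • z, t) = -((∫ z : Euc N, Gs z) * ψ y 0) := by
  have hC0 : 0 ≤ C := (abs_nonneg _).trans (h0 0 0)
  have pc : ∀ z : Euc N, Continuous fun t : ℝ => (y + √t • z, t) := fun z => by fun_prop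
  have pc' : ∀ t : ℝ, Continuous fun z : Euc N => (y + √t • z, t) := fun z => by fun_prop
  have cL : Continuous (heatAdj ψ) := h.c21.cont_heat
  have hF : ∀ f : Euc N × ℝ → ℝ, Continuous f → (∀ p, |f p| ≤ C) →
      Continuous fun t : ℝ => ∫ z, Gs z * f (y + √t • z, t) := by
    intro f hf hfC
    refine continuous_of_dominated (bound := fun z => Gs z * C) (fun t => ?_) (fun t => Eventually.of_forall fun z => ?_)
      (Gs_int.mul_const C) (Eventually.of_forall fun z => ?_)
    · exact (Gs_cont.mul (hf.comp (pc' t))).aestronglyMeasurable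
    · rw [Real.norm_eq_abs, abs_mul, abs_of_pos (Gs_pos z)]
      exact mul_le_mul_of_nonneg_left (hfC _) (Gs_pos z).le
    · exact continuous_const.mul (hf.comp (pc z))
  have hder : ∀ t ∈ Ioo 0 T, HasDerivAt (fun t : ℝ => ∫ z, Gs z * ψ (y + √t • z) t)
      (∫ z, Gs z * heatAdj ψ (y + √t • z, t)) t := by
    intro t ht
    have ht0 : 0 < t := ht.1
    have hdiff : ∀ z : Euc N, ∀ s ∈ Ioi (t/2), HasDerivAt (fun s : ℝ => Gs z * ψ (y + √s • z) s)
        (Gs z * (a (y + √s • z) s + (1 / (2 * √s)) * b (y + √s • z) s z)) s := by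
      intro z s hs
      have hs0 : 0 < s := by have : t/2 < s := hs; linarith
      have hst := hasStrictFDerivAt_uncurry_coprod (𝕜 := ℝ) (u := (y + √s • z, s)) (f := ψ)
        (f₁ := b) (f₂ := fun x t => ContinuousLinearMap.toSpanSingleton ℝ (a x t))
        (Eventually.of_forall fun v => h.hb v.1 v.2)
        (Eventually.of_forall fun v => (h.hd v.1 v.2).hasFDerivAt) h.cb.continuousAt
        ((ContinuousLinearMap.toSpanSingletonCLE (𝕜 := ℝ) (E := ℝ)).continuous.comp h.ca).continuousAt
      have hp : HasDerivAt (fun s : ℝ => (y + √s • z, s)) ((1 / (2 * √s)) • z, 1) s := by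
        have h1 := ((Real.hasDerivAt_sqrt hs0.ne').smul_const z).const_add y
        exact h1.prodMk (hasDerivAt_id' s)
      have := (HasFDerivAt.comp_hasDerivAt (f := fun s : ℝ => (y + √s • z, s)) s hst.hasFDerivAt hp).const_mul (Gs z)
      refine this.congr_deriv ?_
      refine congrArg (Gs z * ·) ?_
      simp [Function.HasUncurry.uncurry]
      ring
    have hcz : Continuous fun z : Euc N => b (y + √t • z) t z :=
      (h.cb.comp (pc' t)).clm_apply continuous_id
    have hca : Continuous fun z : Euc N => a (y + √t • z) t := h.ca.comp (pc' t)
    have hmain := (hasDerivAt_integral_of_dominated_loc_of_deriv_le (μ := (volume : Measure (Euc N)))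
      (F := fun s z => Gs z * ψ (y + √s • z) s) (x₀ := t) (s := Ioi (t/2))
      (bound := fun z => Gs z * C + (1 / (2 * √(t/2))) * C * (‖z‖ * Gs z))
      (F' := fun s z => Gs z * (a (y + √s • z) s + (1 / (2 * √s)) * b (y + √s • z) s z))
      (Ioi_mem_nhds (by linarith))
      (Eventually.of_forall fun s => (Gs_cont.mul (h.cont.comp (pc' s))).aestronglyMeasurable)
      (Gs_int.mul_bdd (c := C) (h.cont.comp (pc' t)).aestronglyMeasurable (Eventually.of_forall fun z => h0 _ _))
      (Gs_cont.mul (hca.add (continuous_const.mul hcz))).aestronglyMeasurable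
      (Eventually.of_forall fun z s hs => by
        have hs0 : t/2 < s := hs
        have hsq : √(t/2) ≤ √s := Real.sqrt_le_sqrt hs0.le
        have hp : 0 < √(t/2) := Real.sqrt_pos.2 (by linarith)
        have h2 : 1 / (2 * √s) ≤ 1 / (2 * √(t/2)) := by gcongr
        rw [Real.norm_eq_abs, abs_mul, abs_of_pos (Gs_pos z)]
        have h3 : |b (y + √s • z) s z| ≤ C * ‖z‖ := ((b (y + √s • z) s).le_opNorm z).trans
          (mul_le_mul_of_nonneg_right (hb _ _) (norm_nonneg _))
        have h4 : |1 / (2 * √s) * b (y + √s • z) s z| ≤ 1 / (2 * √(t/2)) * (C * ‖z‖) := by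
          rw [abs_mul, abs_of_nonneg (by positivity : 0 ≤ 1 / (2 * √s))]
          exact mul_le_mul h2 h3 (abs_nonneg _) (by positivity)
        have h5 := (abs_add_le (a (y + √s • z) s) (1 / (2 * √s) * b (y + √s • z) s z)).trans (add_le_add (ha _ _) h4)
        refine (mul_le_mul_of_nonneg_left h5 (Gs_pos z).le).trans (le_of_eq ?_)
        ring)
      ((Gs_int.mul_const C).add (Gs_int1.const_mul _))
      (Eventually.of_forall fun z s hs => hdiff z s hs)).2
    refine hmain.congr_deriv ?_
    have hsp : 0 < √t := Real.sqrt_pos.2 ht0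
    have hcc0 : Continuous fun z : Euc N => c (y + √t • z) t := h.cc.comp (pc' t)
    have hcc : Continuous fun z : Euc N => √t • c (y + √t • z) t := by
      have h9 := Continuous.smul (f := fun _ : Euc N => √t) continuous_const hcc0
      exact h9
    have ibp := gauss_ibp (β := fun z => b (y + √t • z) t) (γ := fun z => √t • c (y + √t • z) t) (C := C) (D := √t * C)
      (fun z => by
        have h1 : HasFDerivAt (fun z : Euc N => y + √t • z) (√t • ContinuousLinearMap.id ℝ (Euc N)) z :=
          ((hasFDerivAt_id z).const_smul (√t)).const_add y
        refine ((h.hc (y + √t • z) t).comp z h1).congr_fderiv ?_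
        ext v w
        simp)
      hcc (fun z => hb _ _) (fun z => by
        refine (ContinuousLinearMap.opNorm_smul_le _ _).trans ?_
        rw [Real.norm_eq_abs, abs_of_pos hsp]
        exact mul_le_mul_of_nonneg_left (hc _ _) hsp.le)
    have i1 : Integrable fun z => Gs z * a (y + √t • z) t :=
      Gs_int.mul_bdd (c := C) hca.aestronglyMeasurable (Eventually.of_forall fun z => ha _ _)
    have i2 : Integrable fun z => Gs z * b (y + √t • z) t z := by
      refine (Gs_int1.const_mul C).mono' (Gs_cont.mul hcz).aestronglyMeasurable (Eventually.of_forall fun z => ?_)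
      rw [Real.norm_eq_abs, abs_mul, abs_of_pos (Gs_pos z)]
      have h3 : |b (y + √t • z) t z| ≤ C * ‖z‖ := ((b (y + √t • z) t).le_opNorm z).trans
          (mul_le_mul_of_nonneg_right (hb _ _) (norm_nonneg _))
      refine (mul_le_mul_of_nonneg_left h3 (Gs_pos z).le).trans (le_of_eq ?_)
      ring
    have i3 : Integrable fun z => Gs z * heatAdj ψ (y + √t • z, t) :=
      Gs_int.mul_bdd (c := C) (cL.comp (pc' t)).aestronglyMeasurable (Eventually.of_forall fun z => hL _)
    have e1 : ∀ z, Gs z * (a (y + √t • z) t + (1 / (2 * √t)) * b (y + √t • z) t z) =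
      Gs z * a (y + √t • z) t + (1 / (2 * √t)) * (Gs z * b (y + √t • z) t z) := fun z => by ring
    simp only [e1]
    rw [integral_add i1 (i2.const_mul _), integral_const_mul, ibp]
    have e2 : ∀ z, Gs z * tr (√t • c (y + √t • z) t) = √t * (Gs z * heatAdj ψ (y + √t • z, t) - Gs z * a (y + √t • z) t) := by
      intro z
      rw [tr_smul, h.heat_eq]; ring
    simp only [e2]
    rw [integral_const_mul, integral_sub i3 i1]
    field_simp
    ring
  have cH := hF (fun p => ψ p.1 p.2) h.cont (fun p => h0 _ _)
  have cH' := hF (heatAdj ψ) cL hL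
  rw [intervalIntegral.integral_eq_sub_of_hasDerivAt_of_le hT cH.continuousOn hder (cH'.intervalIntegrable _ _)]
  simp [hψT, integral_mul_const]

end

/-- heat kernel -/
def kk {N : ℕ} (p : Euc N × ℝ) (y : Euc N) : ℝ :=
  (∫ z : Euc N, Gs z)⁻¹ * ((√p.2)^N)⁻¹ * Gs ((√p.2)⁻¹ • (p.1 - y))

/-- heat potential -/
def Wf {N : ℕ} (ν : Measure (Euc N)) (p : Euc N × ℝ) : ℝ := ∫ y, kk p y ∂ν

section
variable {N : ℕ}

theorem kk_nonneg (p : Euc N × ℝ) (y : Euc N) : 0 ≤ kk p y := by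
  exact mul_nonneg (mul_nonneg (inv_nonneg.2 Gs_c_pos.le) (inv_nonneg.2 (pow_nonneg (Real.sqrt_nonneg _) _)))
    (Gs_pos _).le

theorem Wf_nonneg (ν : Measure (Euc N)) (p : Euc N × ℝ) : 0 ≤ Wf ν p :=
  integral_nonneg fun y => kk_nonneg p y

theorem kk_meas : Measurable fun q : Euc N × (Euc N × ℝ) => kk q.2 q.1 := by
  unfold kk
  have := Gs_cont (N := N) |>.measurable
  have h1 : Measurable fun q : Euc N × (Euc N × ℝ) => (√q.2.2)⁻¹ • (q.2.1 - q.1) :=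
    Measurable.smul (f := fun q : Euc N × (Euc N × ℝ) => (√q.2.2)⁻¹) (by fun_prop) (by fun_prop)
  refine Measurable.mul ?_ (this.comp h1)
  exact measurable_const.mul (by fun_prop)

theorem kk_integral {t : ℝ} (ht : 0 < t) (y : Euc N) (φ : Euc N → ℝ) :
    ∫ x, kk (x, t) y * φ x = (∫ z : Euc N, Gs z)⁻¹ * ∫ z, Gs z * φ (y + √t • z) := by
  have hs : 0 < √t := Real.sqrt_pos.2 ht
  have h1 := Measure.integral_comp_smul (volume : Measure (Euc N)) (fun x => Gs ((√t)⁻¹ • x) * φ (y + x)) (√t)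
  simp only [smul_smul, inv_mul_cancel₀ hs.ne', one_smul, finrank_euclideanSpace, Fintype.card_fin] at h1
  rw [abs_of_pos (by positivity)] at h1
  rw [h1, ← integral_sub_right_eq_self (fun x => Gs ((√t)⁻¹ • x) * φ (y + x)) y, smul_eq_mul, ← mul_assoc, ← integral_const_mul]
  refine integral_congr_ae (Eventually.of_forall fun x => ?_)
  simp only [kk, add_sub_cancel]
  ring

theorem kk_integrable {t : ℝ} (ht : 0 < t) (y : Euc N) : Integrable fun x => kk (x, t) y := by
  have hs : 0 < √t := Real.sqrt_pos.2 ht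
  have h1 : Integrable fun x : Euc N => Gs ((√t)⁻¹ • x) := (integrable_comp_smul_iff volume _ (by positivity)).2 Gs_int
  exact (h1.comp_sub_right y).const_mul ((∫ z : Euc N, Gs z)⁻¹ * ((√t)^N)⁻¹)

theorem kk_int_prod (ν : Measure (Euc N)) [IsFiniteMeasure ν] (T : ℝ) :
    Integrable (fun q : Euc N × (Euc N × ℝ) => kk q.2 q.1)
      (ν.prod (volume.prod (volume.restrict (Ioo 0 T)))) := by
  have hae : ∀ᵐ t ∂(volume.restrict (Ioo 0 T)), 0 < t := (ae_restrict_mem measurableSet_Ioo).mono fun t ht => ht.1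
  have hone : ∀ y : Euc N, ∀ t > 0, ∫ x, ‖kk (x, t) y‖ = 1 := fun y t ht => by
    have := kk_integral ht y (fun _ => 1)
    simp only [mul_one] at this
    rw [inv_mul_cancel₀ Gs_c_pos.ne'] at this
    rw [← this]
    refine integral_congr_ae (Eventually.of_forall fun x => ?_)
    exact Real.norm_of_nonneg (kk_nonneg _ _)
  have hm : ∀ y : Euc N, Measurable fun p : Euc N × ℝ => kk p y := fun y =>
    kk_meas.comp (measurable_prodMk_left (x := y))
  have hae2 : ∀ y : Euc N, (fun _ => (1:ℝ)) =ᵐ[volume.restrict (Ioo 0 T)] fun t => ∫ x, ‖kk (x, t) y‖ := fun y =>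
    hae.mono fun t ht => (hone y t ht).symm
  have h1 : ∀ y : Euc N, Integrable (fun p : Euc N × ℝ => kk p y) (volume.prod (volume.restrict (Ioo 0 T))) := by
    intro y
    rw [integrable_prod_iff' (hm y).aestronglyMeasurable]
    refine ⟨hae.mono fun t ht => kk_integrable ht y, ?_⟩
    exact (integrable_const 1).congr (hae2 y)
  rw [integrable_prod_iff kk_meas.aestronglyMeasurable]
  refine ⟨Eventually.of_forall h1, ?_⟩
  refine (integrable_const (∫ t in Ioo 0 T, (1:ℝ))).congr (Eventually.of_forall fun y => ?_)
  simp only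
  rw [integral_prod_symm _ (h1 y).norm]
  exact integral_congr_ae (hae2 y)

theorem Wf_int (ν : Measure (Euc N)) [IsFiniteMeasure ν] (T : ℝ) :
    Integrable (Wf ν) (volume.prod (volume.restrict (Ioo 0 T))) :=
  (kk_int_prod ν T).integral_prod_right

theorem Wf_eq (ν : Measure (Euc N)) [IsFiniteMeasure ν] {T : ℝ} (hT : 0 ≤ T)
    {ψ : Euc N → ℝ → ℝ} {a : Euc N → ℝ → ℝ} {b : Euc N → ℝ → (Euc N →L[ℝ] ℝ)}
    {c : Euc N → ℝ → (Euc N →L[ℝ] (Euc N →L[ℝ] ℝ))} (h : HasC21 ψ a b c) {C : ℝ}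
    (h0 : ∀ x t, |ψ x t| ≤ C) (ha : ∀ x t, |a x t| ≤ C) (hb : ∀ x t, ‖b x t‖ ≤ C)
    (hc : ∀ x t, ‖c x t‖ ≤ C) (hL : ∀ p, |heatAdj ψ p| ≤ C) (hψT : ∀ x, ψ x T = 0) :
    ∫ p, Wf ν p * heatAdj ψ p ∂(volume.prod (volume.restrict (Ioo 0 T))) = -∫ y, ψ y 0 ∂ν := by
  have cL := h.c21.cont_heat
  have hI : Integrable (fun q : Euc N × (Euc N × ℝ) => kk q.2 q.1 * heatAdj ψ q.2)
      (ν.prod (volume.prod (volume.restrict (Ioo 0 T)))) :=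
    (kk_int_prod ν T).mul_bdd (c := C) (cL.comp continuous_snd).aestronglyMeasurable
      (Eventually.of_forall fun q => hL _)
  have e1 : ∀ p, Wf ν p * heatAdj ψ p = ∫ y, kk p y * heatAdj ψ p ∂ν := fun p => (integral_mul_const _ _).symm
  simp only [e1]
  rw [integral_integral_swap (f := fun p y => kk p y * heatAdj ψ p) hI.swap, ← integral_neg]
  refine integral_congr_ae ?_
  filter_upwards [hI.prod_right_ae] with y hy
  rw [integral_prod_symm _ hy]
  have e2 : ∫ t in Ioo 0 T, ∫ x, kk (x, t) y * heatAdj ψ (x, t) =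
     ∫ t in Ioo 0 T, (∫ z : Euc N, Gs z)⁻¹ * ∫ z, Gs z * heatAdj ψ (y + √t • z, t) := by
    refine setIntegral_congr_fun measurableSet_Ioo fun t ht => ?_
    exact kk_integral ht.1 y fun x => heatAdj ψ (x, t)
  rw [e2, integral_const_mul, ← integral_Ioc_eq_integral_Ioo, ← intervalIntegral.integral_of_le hT,
    heat_id h h0 ha hb hc hL y hT hψT, ← neg_mul_eq_mul_neg, ← mul_assoc, inv_mul_cancel₀ Gs_c_pos.ne', one_mul]

end

theorem heat_zero {N : ℕ} (p : Euc N × ℝ) : heatAdj (fun (_ : Euc N) (_ : ℝ) => (0:ℝ)) p = 0 := by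
  simp [heatAdj, lap]

theorem heat_loc_zero {N : ℕ} {ψ : Euc N → ℝ → ℝ} {p : Euc N × ℝ} (h : ∀ᶠ q in 𝓝 p, ψ q.1 q.2 = 0) :
    heatAdj ψ p = 0 := (heat_congr (ζ' := fun _ _ => 0) h).trans (heat_zero p)

theorem HasC21.bdd {N : ℕ} {ψ : Euc N → ℝ → ℝ} {a : Euc N → ℝ → ℝ} {b : Euc N → ℝ → (Euc N →L[ℝ] ℝ)}
    {c : Euc N → ℝ → (Euc N →L[ℝ] (Euc N →L[ℝ] ℝ))} (h : HasC21 ψ a b c)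
    (hs : HasCompactSupport (fun p : Euc N × ℝ => ψ p.1 p.2)) :
    ∃ C : ℝ, (∀ x t, |ψ x t| ≤ C) ∧ (∀ x t, |a x t| ≤ C) ∧ (∀ x t, ‖b x t‖ ≤ C) ∧
    (∀ x t, ‖c x t‖ ≤ C) ∧ (∀ p, |heatAdj ψ p| ≤ C) := by
  set S := tsupport (fun p : Euc N × ℝ => ψ p.1 p.2) with hS
  have hSo : IsOpen Sᶜ := (isClosed_tsupport _).isOpen_compl
  have z0 : ∀ p ∉ S, ∀ᶠ q in 𝓝 p, ψ q.1 q.2 = 0 := fun p hp =>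
    Filter.mem_of_superset (hSo.mem_nhds hp) fun q hq => image_eq_zero_of_notMem_tsupport (f := fun p : Euc N × ℝ => ψ p.1 p.2) hq
  have zt : ∀ (x : Euc N) (t : ℝ), (x, t) ∉ S → ∀ᶠ s in 𝓝 t, (x, s) ∉ S := fun x t hp =>
    (Continuous.tendsto (f := fun s : ℝ => (x, s)) (by fun_prop) t).eventually (hSo.mem_nhds hp)
  have zx : ∀ (x : Euc N) (t : ℝ), (x, t) ∉ S → ∀ᶠ y in 𝓝 x, (y, t) ∉ S := fun x t hp =>
    (Continuous.tendsto (f := fun y : Euc N => (y, t)) (by fun_prop) x).eventually (hSo.mem_nhds hp)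
  have hψ : ∀ x t, (x, t) ∉ S → ψ x t = 0 := fun x t hp => (z0 _ hp).self_of_nhds
  have ha : ∀ x t, (x, t) ∉ S → a x t = 0 := fun x t hp => by
    refine (h.hd x t).unique ((hasDerivAt_const t (0:ℝ)).congr_of_eventuallyEq ?_)
    exact (zt x t hp).mono fun s hs => hψ x s hs
  have hb : ∀ x t, (x, t) ∉ S → b x t = 0 := fun x t hp => by
    refine (h.hb x t).unique ((hasFDerivAt_const (0:ℝ) x).congr_of_eventuallyEq ?_)
    exact (zx x t hp).mono fun s hs => hψ s t hs
  have hc : ∀ x t, (x, t) ∉ S → c x t = 0 := fun x t hp => by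
    refine (h.hc x t).unique ((hasFDerivAt_const (0 : Euc N →L[ℝ] ℝ) x).congr_of_eventuallyEq ?_)
    exact (zx x t hp).mono fun s hs => hb s t hs
  obtain ⟨C0, h0⟩ := IsCompact.exists_bound_of_continuousOn (s := S) hs h.cont.continuousOn
  obtain ⟨C1, h1⟩ := IsCompact.exists_bound_of_continuousOn (s := S) hs h.ca.continuousOn
  obtain ⟨C2, h2⟩ := IsCompact.exists_bound_of_continuousOn (s := S) hs h.cb.continuousOn
  have hcn : Continuous fun p : Euc N × ℝ => ‖c p.1 p.2‖ :=
    (continuous_norm (E := Euc N →L[ℝ] (Euc N →L[ℝ] ℝ))).comp h.cc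
  obtain ⟨C3, h3⟩ := IsCompact.exists_bound_of_continuousOn (s := S) hs hcn.continuousOn
  obtain ⟨C4, h4⟩ := IsCompact.exists_bound_of_continuousOn (s := S) hs h.c21.cont_heat.continuousOn
  refine ⟨|C0| + |C1| + |C2| + |C3| + |C4|, fun x t => ?_, fun x t => ?_, fun x t => ?_, fun x t => ?_, fun p => ?_⟩
  · by_cases hp : (x, t) ∈ S
    · have := h0 _ hp; rw [Real.norm_eq_abs] at this
      linarith [le_abs_self C0, abs_nonneg C1, abs_nonneg C2, abs_nonneg C3, abs_nonneg C4]
    · rw [hψ x t hp, abs_zero]; positivity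
  · by_cases hp : (x, t) ∈ S
    · have := h1 _ hp; rw [Real.norm_eq_abs] at this
      linarith [le_abs_self C1, abs_nonneg C0, abs_nonneg C2, abs_nonneg C3, abs_nonneg C4]
    · rw [ha x t hp, abs_zero]; positivity
  · by_cases hp : (x, t) ∈ S
    · have := h2 _ hp
      linarith [le_abs_self C2, abs_nonneg C0, abs_nonneg C1, abs_nonneg C3, abs_nonneg C4]
    · rw [hb x t hp, norm_zero]; positivity
  · by_cases hp : (x, t) ∈ S
    · have := (le_abs_self _).trans (h3 _ hp)
      simp only at this
      linarith [le_abs_self C3, abs_nonneg C0, abs_nonneg C1, abs_nonneg C2, abs_nonneg C4]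
    · rw [hc x t hp]
      refine (ContinuousLinearMap.opNorm_zero).le.trans ?_
      positivity
  · by_cases hp : p ∈ S
    · have := h4 _ hp; rw [Real.norm_eq_abs] at this
      linarith [le_abs_self C4, abs_nonneg C0, abs_nonneg C2, abs_nonneg C3, abs_nonneg C1]
    · rw [heat_loc_zero (z0 p hp), abs_zero]; positivity

theorem QT_restrict {N : ℕ} (T : ℝ) : (volume : Measure (Euc N)).prod (volume.restrict (Ioo 0 T)) =
    volume.restrict (univ ×ˢ Ioo 0 T) := by
  rw [Measure.volume_eq_prod, ← Measure.prod_restrict, Measure.restrict_univ]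

theorem Wf_intQ {N : ℕ} (Ω : Set (Euc N)) (ν : Measure (Euc N)) [IsFiniteMeasure ν] (T : ℝ) :
    IntegrableOn (Wf ν) (QT Ω T) := by
  have := Wf_int ν T
  rw [QT_restrict] at this
  exact IntegrableOn.mono_set this (prod_mono (subset_univ _) le_rfl)

theorem KF_W {N : ℕ} {Ω : Set (Euc N)} (hΩo : IsOpen Ω) (hΩb : Bornology.IsBounded Ω) {T : ℝ} (hT : 0 < T)
    {ν : Measure (Euc N)} [IsFiniteMeasure ν] (hν : ν Ωᶜ = 0) : KF Ω T ν (Wf ν) (fun _ => 0) := by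
  refine KF_of hΩo hΩb T hν (Wf_nonneg ν) (Wf_intQ Ω ν T) (integrable_zero _ _ _) ?_
  intro e he j j1 j2 hj ζ hζ
  obtain ⟨hC, hfr, hend⟩ := hζ
  have hjz : ∀ s, s ≤ e → j s = 0 := hj.2.2.2.2.2.2.2.1
  have hfc : IsCompact (frontier Ω) := hΩb.isCompact_closure.of_isClosed_subset isClosed_frontier frontier_subset_closure
  have hB : IsOpen {t : ℝ | ∀ x ∈ frontier Ω, ζ x t < e} := by
    rw [isOpen_iff_mem_nhds]
    intro t ht
    have := hfc.eventually_forall_of_forall_eventually (x₀ := t) (P := fun t x => ζ x t < e) (fun x hx => by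
      exact ((isOpen_lt (hC.1.comp continuous_swap) continuous_const).mem_nhds (ht x hx)))
    exact this
  have hIB : Icc 0 T ⊆ {t : ℝ | ∀ x ∈ frontier Ω, ζ x t < e} := fun t ht x hx => by rw [hfr x hx t ht]; exact he
  obtain ⟨δ, hδ, hδB⟩ := isCompact_Icc.exists_cthickening_subset_open hB hIB
  let θ : ContDiffBump (T/2 : ℝ) := ⟨T/2 + δ/4, T/2 + δ/2, by positivity, by linarith⟩
  have hθ1 : ∀ t ∈ Icc (-(δ/4)) (T + δ/4), θ t = 1 := fun t ht => by
    refine θ.one_of_mem_closedBall ?_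
    rw [Metric.mem_closedBall, Real.dist_eq, abs_le]
    exact ⟨by have := ht.1; show -(T/2 + δ/4) ≤ _; linarith, by have := ht.2; show _ ≤ T/2 + δ/4; linarith⟩
  have hθ0 : ∀ t, t ∉ Metric.closedBall (T/2) (T/2 + δ/2) → θ t = 0 := fun t ht => by
    refine θ.zero_of_le_dist ?_
    rw [Metric.mem_closedBall, not_le] at ht
    exact ht.le
  have hball : ∀ t ∈ Metric.closedBall (T/2) (T/2 + δ/2), ∀ x ∈ frontier Ω, ζ x t < e := fun t ht => by
    refine hδB ?_
    rw [Metric.mem_closedBall, Real.dist_eq, abs_le] at ht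
    have hproj : max 0 (min t T) ∈ Icc 0 T := ⟨le_max_left _ _, max_le hT.le (min_le_right _ _)⟩
    refine Metric.mem_cthickening_of_dist_le t _ δ _ hproj ?_
    rw [Real.dist_eq, abs_le]
    rcases le_total t T with h1 | h1
    · rw [min_eq_left h1]
      rcases le_total 0 t with h2 | h2
      · rw [max_eq_right h2]; constructor <;> linarith
      · rw [max_eq_left h2]; constructor <;> linarith
    · rw [min_eq_right h1, max_eq_right hT.le]; constructor <;> linarith
  obtain ⟨a0, b0, c0, hζc⟩ := hC.has
  have hθd : ∀ s, HasDerivAt θ (deriv θ s) s := fun s =>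
    ((θ.contDiff (n := 1)).differentiable (by norm_num) s).hasDerivAt
  have hθc : Continuous (deriv θ) := (θ.contDiff (n := 1)).continuous_deriv le_rfl
  have hφ := (hζc.comp hj.1 hj.2.1 hj.2.2.1).mulT hθd hθc
  classical
  let ψ : Euc N → ℝ → ℝ := fun x t => if x ∈ Ω then θ t * j (ζ x t) else 0
  have hin : ∀ p : Euc N × ℝ, p.1 ∈ Ω → ∀ᶠ q in 𝓝 p, ψ q.1 q.2 = θ q.2 * j (ζ q.1 q.2) := fun p hp => by
    have : ∀ᶠ q : Euc N × ℝ in 𝓝 p, q.1 ∈ Ω := (hΩo.preimage continuous_fst).mem_nhds hp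
    exact this.mono fun q hq => if_pos hq
  have hout : ∀ p : Euc N × ℝ, p.1 ∉ Ω → ∀ᶠ q in 𝓝 p, ψ q.1 q.2 = 0 := fun p hp => by
    by_cases hcl : p.1 ∈ closure Ω
    · have hpf : p.1 ∈ frontier Ω := by rw [hΩo.frontier_eq]; exact ⟨hcl, hp⟩
      by_cases hb : p.2 ∈ Metric.closedBall (T/2) (T/2 + δ/2)
      · have : ∀ᶠ q : Euc N × ℝ in 𝓝 p, ζ q.1 q.2 < e :=
          (isOpen_lt hC.1 continuous_const).mem_nhds (hball _ hb _ hpf)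
        refine this.mono fun q hq => ?_
        simp only [ψ]
        rw [hjz _ hq.le, mul_zero, ite_self]
      · have : ∀ᶠ q : Euc N × ℝ in 𝓝 p, q.2 ∉ Metric.closedBall (T/2) (T/2 + δ/2) :=
          (Metric.isClosed_closedBall.isOpen_compl.preimage continuous_snd).mem_nhds hb
        refine this.mono fun q hq => ?_
        simp only [ψ]
        rw [hθ0 _ hq, zero_mul, ite_self]
    · have : ∀ᶠ q : Euc N × ℝ in 𝓝 p, q.1 ∉ closure Ω :=
          (isClosed_closure.isOpen_compl.preimage continuous_fst).mem_nhds hcl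
      exact this.mono fun q hq => if_neg fun h => hq (subset_closure h)
  have hzero : C21 (fun (_ : Euc N) (_ : ℝ) => (0:ℝ)) := (TZ Ω T).zero_mem.1
  have hψC : C21 ψ := C21.of_local fun p => by
    by_cases hp : p.1 ∈ Ω
    · exact ⟨_, hφ.c21, hin p hp⟩
    · exact ⟨_, hzero, hout p hp⟩
  obtain ⟨a, b, c, hψ⟩ := hψC.has
  have hcs : HasCompactSupport (fun p : Euc N × ℝ => ψ p.1 p.2) := by
    refine HasCompactSupport.of_support_subset_isCompact
      (hΩb.isCompact_closure.prod (isCompact_closedBall (T/2) (T/2 + δ/2))) fun p hp => ?_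
    rw [Function.mem_support] at hp
    constructor
    · by_contra h
      exact hp (if_neg fun h' => h (subset_closure h'))
    · by_contra h
      exact hp (by simp only [ψ]; rw [hθ0 _ h, zero_mul, ite_self])
  obtain ⟨C, k0, k1, k2, k3, k4⟩ := hψ.bdd hcs
  have hψT : ∀ x, ψ x T = 0 := fun x => by
    simp only [ψ]
    split_ifs with hx
    · rw [hend x (subset_closure hx), hjz 0 he.le, mul_zero]
    · rfl
  have main := Wf_eq ν hT.le hψ k0 k1 k2 k3 k4 hψT
  rw [QT_restrict, setIntegral_eq_of_subset_of_forall_sdiff_eq_zero (s := QT Ω T) (MeasurableSet.univ.prod measurableSet_Ioo)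
    (prod_mono (subset_univ _) le_rfl) (fun p hp => by
      have : p.1 ∉ Ω := fun h => hp.2 ⟨h, hp.1.2⟩
      rw [heat_loc_zero (hout p this), mul_zero])] at main
  have e1 : ∫ y, ψ y 0 ∂ν = ∫ x, j (ζ x 0) ∂ν := by
    have : ∀ᵐ x ∂ν, x ∈ Ω := by rw [ae_iff]; exact hν
    refine integral_congr_ae (this.mono fun x hx => ?_)
    simp only [ψ]
    rw [if_pos hx, hθ1 0 ⟨by linarith, by linarith⟩, one_mul]
  rw [e1] at main
  have e2 : ∫ p in QT Ω T, (-(Wf ν p) * heatAdj (fun x t => j (ζ x t)) p + j (ζ p.1 p.2) * 0) =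
      -∫ p in QT Ω T, Wf ν p * heatAdj ψ p := by
    rw [← integral_neg]
    refine setIntegral_congr_fun (QT_meas hΩo T) fun p hp => ?_
    have h1 : ∀ᶠ q : Euc N × ℝ in 𝓝 p, q ∈ QT Ω T := (hΩo.prod isOpen_Ioo).mem_nhds hp
    have : heatAdj ψ p = heatAdj (fun x t => j (ζ x t)) p := by
      refine heat_congr (h1.mono fun q hq => ?_)
      simp only [ψ]
      rw [if_pos hq.1, hθ1 _ ⟨by have := hq.2.1; linarith, by have := hq.2.2; linarith⟩, one_mul]
    simp only [this]; ring
  rw [e2, main, neg_neg]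

theorem pow_exp_bdd (N : ℕ) {a s : ℝ} (ha : 0 < a) (hs : 0 < s) :
    s ^ N * Real.exp (-(a * s^2)) ≤ 1 + N.factorial / a ^ N := by
  have h0 : 0 ≤ (N.factorial : ℝ) / a ^ N := by positivity
  rcases le_total s 1 with h | h
  · have h1 : s ^ N ≤ 1 := pow_le_one₀ hs.le h
    have h2 : Real.exp (-(a * s^2)) ≤ 1 := Real.exp_le_one_iff.2 (by have : 0 ≤ a * s^2 := by positivity
                                                                     linarith)
    have := mul_le_one₀ h1 (Real.exp_pos _).le h2
    linarith
  · have h1 : s ^ N ≤ (s^2) ^ N := pow_le_pow_left₀ hs.le (by nlinarith) N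
    have h2 := Real.pow_div_factorial_le_exp (a * s^2) (by positivity) N
    rw [mul_pow] at h2
    have hf : (0:ℝ) < N.factorial := by positivity
    rw [div_le_iff₀ hf] at h2
    have : s ^ N * Real.exp (-(a * s^2)) ≤ N.factorial / a ^ N := by
      rw [Real.exp_neg, ← div_eq_mul_inv, div_le_div_iff₀ (Real.exp_pos _) (by positivity)]
      have : s ^ N * a ^ N ≤ a ^ N * (s^2)^N := by rw [mul_comm]; gcongr
      linarith
    linarith

theorem kk_bdd {N : ℕ} {r τ : ℝ} (hr : 0 < r) (hτ : 0 < τ) : ∃ C : ℝ, 0 ≤ C ∧ ∀ (p : Euc N × ℝ) (y : Euc N),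
    0 < p.2 → (τ ≤ p.2 ∨ r ≤ ‖p.1 - y‖) → kk p y ≤ C := by
  have hc : 0 < (∫ z : Euc N, Gs z)⁻¹ := inv_pos.2 Gs_c_pos
  obtain ⟨A, hA⟩ : ∃ A, A = (∫ z : Euc N, Gs z)⁻¹ := ⟨_, rfl⟩
  rw [← hA] at hc
  have hτ' : 0 < √τ := Real.sqrt_pos.2 hτ
  have hG1 : ∀ z : Euc N, Gs z ≤ 1 := fun z => by
    unfold Gs
    refine Real.exp_le_one_iff.2 ?_
    have : 0 ≤ ‖z‖^2 := by positivity
    linarith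
  refine ⟨A * ((√τ)^N)⁻¹ + A * (1 + N.factorial / (r^2/4) ^ N), by positivity, fun p y hp h => ?_⟩
  have hp' : 0 < √p.2 := Real.sqrt_pos.2 hp
  unfold kk
  rw [← hA]
  rcases h with h | h
  · have h1 : ((√p.2)^N)⁻¹ ≤ ((√τ)^N)⁻¹ := by
      have := Real.sqrt_le_sqrt h
      gcongr
    have h2 : A * ((√p.2)^N)⁻¹ * Gs ((√p.2)⁻¹ • (p.1 - y)) ≤ A * ((√τ)^N)⁻¹ * 1 := by
      exact mul_le_mul (mul_le_mul_of_nonneg_left h1 hc.le) (hG1 _) (Gs_pos _).le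
        (mul_nonneg hc.le (inv_nonneg.2 (pow_nonneg hτ'.le _)))
    have : 0 ≤ A * (1 + N.factorial / (r^2/4) ^ N) := by positivity
    linarith
  · have h1 := pow_exp_bdd N (a := r^2/4) (s := (√p.2)⁻¹) (by positivity) (by positivity)
    have h2 : Gs ((√p.2)⁻¹ • (p.1 - y)) ≤ Real.exp (-(r^2/4 * ((√p.2)⁻¹)^2)) := by
      unfold Gs
      rw [norm_smul, Real.norm_eq_abs, abs_of_pos (inv_pos.2 hp'), mul_pow]
      refine Real.exp_le_exp.2 ?_
      have : r^2 ≤ ‖p.1 - y‖^2 := by gcongr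
      have h3 : 0 ≤ ((√p.2)⁻¹)^2 := by positivity
      nlinarith
    have h3 : A * ((√p.2)^N)⁻¹ * Gs ((√p.2)⁻¹ • (p.1 - y)) ≤ A * (((√p.2)⁻¹)^N * Real.exp (-(r^2/4 * ((√p.2)⁻¹)^2))) := by
      rw [mul_assoc, inv_pow]
      exact mul_le_mul_of_nonneg_left (mul_le_mul_of_nonneg_left h2 (inv_nonneg.2 (pow_nonneg hp'.le _))) hc.le
    have h4 := mul_le_mul_of_nonneg_left h1 hc.le
    have : 0 ≤ A * ((√τ)^N)⁻¹ := by positivity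
    linarith

theorem Wf_bdd {N : ℕ} (ν : Measure (Euc N)) [IsFiniteMeasure ν] {K : Set (Euc N)} (hK : ν Kᶜ = 0)
    {r τ : ℝ} (hr : 0 < r) (hτ : 0 < τ) : ∃ C : ℝ, 0 ≤ C ∧ ∀ p : Euc N × ℝ,
    0 < p.2 → (τ ≤ p.2 ∨ ∀ y ∈ K, r ≤ ‖p.1 - y‖) → Wf ν p ≤ C := by
  obtain ⟨C, hC, h⟩ := kk_bdd (N := N) hr hτ
  refine ⟨C * ν.real univ, by positivity, fun p hp hh => ?_⟩
  have hae : ∀ᵐ y ∂ν, y ∈ K := by rw [ae_iff]; exact hK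
  have := norm_integral_le_of_norm_le_const (μ := ν) (f := kk p) (C := C) (hae.mono fun y hy => by
    rw [Real.norm_eq_abs, abs_of_nonneg (kk_nonneg p y)]
    exact h p y hp (hh.imp id fun h => h y hy))
  exact (le_abs_self _).trans this

/-- directional derivative -/
def Dv {G : Type*} [NormedAddCommGroup G] [NormedSpace ℝ G] (v : G) (F : G → ℝ) (p : G) : ℝ := fderiv ℝ F p v

/-- forward operator -/
def LP {G : Type*} [NormedAddCommGroup G] [NormedSpace ℝ G] {N : ℕ} (v0 : G) (v : Fin N → G) (F : G → ℝ) (p : G) : ℝ :=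
  Dv v0 F p + ∑ i, Dv (v i) (Dv (v i) F) p

/-- backward operator -/
def LM {G : Type*} [NormedAddCommGroup G] [NormedSpace ℝ G] {N : ℕ} (v0 : G) (v : Fin N → G) (F : G → ℝ) (p : G) : ℝ :=
  Dv v0 F p - ∑ i, Dv (v i) (Dv (v i) F) p

/-- mollification -/
def Mo {G : Type*} [NormedAddCommGroup G] [MeasurableSpace G] (μ : Measure G) (w η : G → ℝ) (p : G) : ℝ :=
  ∫ q, w q * η (p - q) ∂μ

section
variable {G : Type*} [NormedAddCommGroup G] [NormedSpace ℝ G] [FiniteDimensional ℝ G] [MeasurableSpace G] [BorelSpace G]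
  {μ : Measure G} [μ.IsAddHaarMeasure]

theorem Dv_contDiff {n m : ℕ} (h : m + 1 ≤ n) {F : G → ℝ} (hF : ContDiff ℝ n F) (v : G) : ContDiff ℝ m (Dv v F) :=
  (hF.fderiv_right (m := m) (by exact_mod_cast h)).clm_apply contDiff_const

theorem Dv_cs {F : G → ℝ} (hF : HasCompactSupport F) (v : G) : HasCompactSupport (Dv v F) := hF.fderiv_apply ℝ v

theorem Dv_ibp {F ξ : G → ℝ} (hF : ContDiff ℝ 1 F) (hξ : ContDiff ℝ 1 ξ) (hc : HasCompactSupport ξ) (v : G) :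
    ∫ x, F x * Dv v ξ x ∂μ = - ∫ x, Dv v F x * ξ x ∂μ := by
  have c1 : Continuous (Dv v F) := (Dv_contDiff (n := 1) (m := 0) le_rfl hF v).continuous
  have c2 : Continuous (Dv v ξ) := (Dv_contDiff (n := 1) (m := 0) le_rfl hξ v).continuous
  refine integral_mul_fderiv_eq_neg_fderiv_mul_of_integrable ?_ ?_ ?_ ?_ ?_
  · exact Continuous.integrable_of_hasCompactSupport (c1.mul hξ.continuous) hc.mul_left
  · exact Continuous.integrable_of_hasCompactSupport (hF.continuous.mul c2) (Dv_cs hc v).mul_left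
  · exact Continuous.integrable_of_hasCompactSupport (hF.continuous.mul hξ.continuous) hc.mul_left
  · exact fun x _ => hF.differentiable (by norm_num) x
  · exact fun x _ => hξ.differentiable (by norm_num) x

theorem LP_cont {N : ℕ} {v0 : G} {v : Fin N → G} {F : G → ℝ} (hF : ContDiff ℝ 2 F) : Continuous (LP v0 v F) := by
  refine Continuous.add (Dv_contDiff (n := 2) (m := 1) le_rfl hF _).continuous (continuous_finsetSum _ fun i _ => ?_)
  exact (Dv_contDiff (n := 1) (m := 0) le_rfl (Dv_contDiff (n := 2) (m := 1) le_rfl hF _) _).continuous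

theorem LP_zero {N : ℕ} {v0 : G} {v : Fin N → G} {F : G → ℝ} {p : G} (hp : p ∉ tsupport F) : LP v0 v F p = 0 := by
  have h : ∀ (F : G → ℝ) (v : G), p ∉ tsupport F → p ∉ tsupport (Dv v F) := fun F v h h' => by
    exact h (tsupport_fderiv_apply_subset ℝ v h')
  unfold LP
  rw [image_eq_zero_of_notMem_tsupport (h _ _ hp), zero_add]
  exact Finset.sum_eq_zero fun i _ => image_eq_zero_of_notMem_tsupport (h _ _ (h _ _ hp))

theorem LP_cs {N : ℕ} {v0 : G} {v : Fin N → G} {F : G → ℝ} (hF : HasCompactSupport F) : HasCompactSupport (LP v0 v F) := by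
  refine HasCompactSupport.of_support_subset_isCompact hF fun p hp => ?_
  by_contra h
  exact hp (LP_zero h)

theorem LP_ibp {N : ℕ} {v0 : G} {v : Fin N → G} {F ξ : G → ℝ} (hF : ContDiff ℝ 2 F) (hξ : ContDiff ℝ 2 ξ)
    (hc : HasCompactSupport ξ) :
    ∫ x, F x * LP v0 v ξ x ∂μ = - ∫ x, ξ x * LM v0 v F x ∂μ := by
  have hF1 : ContDiff ℝ 1 F := hF.of_le (by norm_num)
  have hξ1 : ContDiff ℝ 1 ξ := hξ.of_le (by norm_num)
  have d1 : ∀ v, ContDiff ℝ 1 (Dv v F) := fun v => Dv_contDiff (n := 2) (m := 1) le_rfl hF v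
  have d2 : ∀ v, ContDiff ℝ 1 (Dv v ξ) := fun v => Dv_contDiff (n := 2) (m := 1) le_rfl hξ v
  have e1 : ∀ v, Continuous (Dv v (Dv v F)) := fun v => (Dv_contDiff (n := 1) (m := 0) le_rfl (d1 v) v).continuous
  have e2 : ∀ v, Continuous (Dv v (Dv v ξ)) := fun v => (Dv_contDiff (n := 1) (m := 0) le_rfl (d2 v) v).continuous
  have i1 : ∀ v, Integrable (fun x => F x * Dv v (Dv v ξ) x) μ := fun v =>
    Continuous.integrable_of_hasCompactSupport (hF.continuous.mul (e2 v)) (Dv_cs (Dv_cs hc v) v).mul_left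
  have i2 : ∀ v, Integrable (fun x => F x * Dv v ξ x) μ := fun v =>
    Continuous.integrable_of_hasCompactSupport (hF.continuous.mul (d2 v).continuous) (Dv_cs hc v).mul_left
  have i3 : ∀ v, Integrable (fun x => Dv v F x * ξ x) μ := fun v =>
    Continuous.integrable_of_hasCompactSupport ((d1 v).continuous.mul hξ.continuous) hc.mul_left
  have i4 : ∀ v, Integrable (fun x => Dv v (Dv v F) x * ξ x) μ := fun v =>
    Continuous.integrable_of_hasCompactSupport ((e1 v).mul hξ.continuous) hc.mul_left
  have s1 : (fun x => F x * LP v0 v ξ x) = fun x => F x * Dv v0 ξ x + ∑ i, F x * Dv (v i) (Dv (v i) ξ) x := by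
    funext x; simp only [LP, mul_add, Finset.mul_sum]
  have s2 : (fun x => ξ x * LM v0 v F x) = fun x => Dv v0 F x * ξ x - ∑ i, Dv (v i) (Dv (v i) F) x * ξ x := by
    funext x; simp only [LM, mul_sub, Finset.mul_sum]
    congr 1
    · ring
    · exact Finset.sum_congr rfl fun i _ => by ring
  rw [s1, s2, integral_add (i2 _) (integrable_finsetSum _ fun i _ => i1 _), integral_sub (i3 _) (integrable_finsetSum _ fun i _ => i4 _),
    integral_finsetSum _ fun i _ => i1 _, integral_finsetSum _ fun i _ => i4 _, Dv_ibp hF1 hξ1 hc]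
  have : ∀ i, ∫ x, F x * Dv (v i) (Dv (v i) ξ) x ∂μ = ∫ x, Dv (v i) (Dv (v i) F) x * ξ x ∂μ := fun i => by
    rw [Dv_ibp hF1 (d2 _) (Dv_cs hc _), Dv_ibp (d1 _) hξ1 hc, neg_neg]
  rw [Finset.sum_congr rfl fun i _ => this i]
  ring

theorem LM_comp {N : ℕ} {v0 : G} {v : Fin N → G} {F : G → ℝ} (hF : ContDiff ℝ 2 F) {e : ℝ} {j j1 j2 : ℝ → ℝ}
    (hj : IsJ e j j1 j2) (p : G) : LM v0 v (fun x => j (F x)) p ≤ j1 (F p) * LM v0 v F p := by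
  have hd : ∀ x, HasFDerivAt F (fderiv ℝ F x) x := fun x => (hF.differentiable (by norm_num) x).hasFDerivAt
  have a1 : ∀ v, Dv v (fun x => j (F x)) = fun x => j1 (F x) * Dv v F x := fun v => by
    funext x
    have := (hj.1 (F x)).comp_hasFDerivAt x (hd x)
    have h2 : fderiv ℝ (fun x => j (F x)) x = j1 (F x) • fderiv ℝ F x := this.fderiv
    simp [Dv, h2]
  have a2 : ∀ v, Dv v (Dv v (fun x => j (F x))) p = j1 (F p) * Dv v (Dv v F) p + j2 (F p) * (Dv v F p)^2 := fun v => by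
    rw [a1]
    have h1 := (hj.2.1 (F p)).comp_hasFDerivAt p (hd p)
    have h2 : HasFDerivAt (Dv v F) (fderiv ℝ (Dv v F) p) p :=
      ((Dv_contDiff (n := 2) (m := 1) le_rfl hF v).differentiable (by norm_num) p).hasFDerivAt
    have h3 := (HasFDerivAt.mul h1 h2).fderiv
    have h4 : fderiv ℝ (fun x => j1 (F x) * Dv v F x) p = _ := h3
    unfold Dv at h4 ⊢
    rw [h4]
    simp
    ring
  unfold LM
  rw [a1, mul_sub]
  refine sub_le_sub_left ?_ _
  rw [Finset.mul_sum]
  refine Finset.sum_le_sum fun i _ => ?_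
  rw [a2]
  have := mul_nonneg (hj.2.2.2.1 (F p)) (sq_nonneg (Dv (v i) F p))
  linarith

theorem Dv_Mo {w η : G → ℝ} (hw : Integrable w μ) (hη : ContDiff ℝ 1 η) (hc : HasCompactSupport η) (v : G) :
    Dv v (Mo μ w η) = Mo μ w (Dv v η) := by
  funext p
  have h := HasCompactSupport.hasFDerivAt_convolution_right (μ := μ) (ContinuousLinearMap.mul ℝ ℝ) hc hw.locallyIntegrable hη p
  have h2 : fderiv ℝ (Mo μ w η) p = _ := h.fderiv
  unfold Dv
  rw [h2, convolution_precompR_apply _ hw.locallyIntegrable (hc.fderiv ℝ) (hη.continuous_fderiv (by norm_num))]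
  rfl

theorem Mo_contDiff {w η : G → ℝ} {n : ℕ} (hw : Integrable w μ) (hη : ContDiff ℝ n η) (hc : HasCompactSupport η) :
    ContDiff ℝ n (Mo μ w η) := by
  exact HasCompactSupport.contDiff_convolution_right (μ := μ) (n := n) (ContinuousLinearMap.mul ℝ ℝ) hc hw.locallyIntegrable hη

theorem Mo_exists {w η : G → ℝ} (hw : Integrable w μ) (hη : Continuous η) (hc : HasCompactSupport η) (p : G) :
    Integrable (fun q => w q * η (p - q)) μ :=
  HasCompactSupport.convolutionExists_right (μ := μ) (ContinuousLinearMap.mul ℝ ℝ) hc hw.locallyIntegrable hη p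

theorem Dv_refl (η : G → ℝ) (p v : G) : Dv v (fun q => η (p - q)) = fun q => - Dv v η (p - q) := by
  funext q
  unfold Dv
  have := fderiv_comp_sub (𝕜 := ℝ) (f := fun x => η (-x)) (x := q) p
  have e : (fun q => η (p - q)) = fun q => (fun x => η (-x)) (q - p) := by funext q; simp
  have h2 : fderiv ℝ (fun x => η (-x)) (q - p) = _ :=
    (ContinuousLinearEquiv.neg ℝ (M := G)).comp_right_fderiv (f := η) (x := q - p)
  rw [e, this, h2]
  simp

theorem LP_refl {N : ℕ} {v0 : G} {v : Fin N → G} (η : G → ℝ) (p q : G) :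
    LP v0 v (fun q => η (p - q)) q = - LM v0 v η (p - q) := by
  unfold LP LM
  have : ∀ u : G, Dv u (Dv u (fun q => η (p - q))) q = Dv u (Dv u η) (p - q) := fun u => by
    rw [Dv_refl]
    have h := Dv_refl (fun x => - Dv u η x) p u
    rw [h]
    simp [Dv]
    rfl
  rw [Dv_refl]
  simp only [this]
  ring

theorem LM_Mo {N : ℕ} {v0 : G} {v : Fin N → G} {w η : G → ℝ} (hw : Integrable w μ) (hη : ContDiff ℝ 2 η) (hc : HasCompactSupport η) (p : G) :
    LM v0 v (Mo μ w η) p = - ∫ q, w q * LP v0 v (fun q => η (p - q)) q ∂μ := by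
  have hη1 : ContDiff ℝ 1 η := hη.of_le (by norm_num)
  have d2 : ∀ v, ContDiff ℝ 1 (Dv v η) := fun v => Dv_contDiff (n := 2) (m := 1) le_rfl hη v
  have e2 : ∀ v, Continuous (Dv v (Dv v η)) := fun v => (Dv_contDiff (n := 1) (m := 0) le_rfl (d2 v) v).continuous
  simp only [LP_refl]
  unfold LM
  have : ∀ u, Dv u (Dv u (Mo μ w η)) = Mo μ w (Dv u (Dv u η)) := fun u => by
    rw [Dv_Mo hw hη1 hc, Dv_Mo hw (d2 u) (Dv_cs hc u)]
  simp only [this]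
  rw [Dv_Mo hw hη1 hc, ← integral_neg]
  simp only [mul_neg, neg_neg, mul_sub, Finset.mul_sum]
  rw [integral_sub (Mo_exists hw (d2 _).continuous (Dv_cs hc _) p) (integrable_finsetSum _ fun i _ => Mo_exists hw (e2 _) (Dv_cs (Dv_cs hc _) _) p),
    integral_finsetSum _ fun i _ => Mo_exists hw (e2 _) (Dv_cs (Dv_cs hc _) _) p]
  rfl

end

theorem tendsto_prod_int {α : Type*} [MeasurableSpace α] {μ : Measure α} {a : ℕ → α → ℝ} {a' : α → ℝ} {b : ℕ → α → ℝ}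
    {b' : α → ℝ} {C : ℝ} (ham : ∀ k, AEStronglyMeasurable (a k) μ) (hab : ∀ k x, |a k x| ≤ C)
    (hae : ∀ᵐ x ∂μ, Tendsto (fun k => a k x) atTop (𝓝 (a' x))) (hbi : ∀ k, Integrable (b k) μ) (hb' : Integrable b' μ)
    (hl : Tendsto (fun k => ∫ x, |b k x - b' x| ∂μ) atTop (𝓝 0)) :
    Tendsto (fun k => ∫ x, a k x * b k x ∂μ) atTop (𝓝 (∫ x, a' x * b' x ∂μ)) := by
  have i1 : ∀ k, Integrable (fun x => a k x * (b k x - b' x)) μ := fun k =>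
    Integrable.bdd_mul (c := C) ((hbi k).sub hb') (ham k) (ae_of_all _ fun x => by rw [Real.norm_eq_abs]; exact hab k x)
  have i2 : ∀ k, Integrable (fun x => a k x * b' x) μ := fun k =>
    Integrable.bdd_mul (c := C) hb' (ham k) (ae_of_all _ fun x => by rw [Real.norm_eq_abs]; exact hab k x)
  have e : ∀ k, ∫ x, a k x * b k x ∂μ = (∫ x, a k x * (b k x - b' x) ∂μ) + ∫ x, a k x * b' x ∂μ := fun k => by
    rw [← integral_add (i1 k) (i2 k)]
    exact integral_congr_ae (ae_of_all _ fun x => by simp only; ring)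
  simp only [e]
  rw [← zero_add (∫ x, a' x * b' x ∂μ)]
  refine Tendsto.add ?_ ?_
  · refine squeeze_zero_norm (a := fun k => C * ∫ x, |b k x - b' x| ∂μ) (fun k => ?_) (by simpa using hl.const_mul C)
    rw [← integral_const_mul]
    refine norm_integral_le_of_norm_le (((hbi k).sub hb').abs.const_mul C) (ae_of_all _ fun x => ?_)
    rw [norm_mul]
    exact mul_le_mul_of_nonneg_right (hab k x) (abs_nonneg _)
  · refine tendsto_integral_of_dominated_convergence (fun x => C * |b' x|) (fun k => (i2 k).aestronglyMeasurable)
      (hb'.abs.const_mul C) (fun k => ae_of_all _ fun x => ?_) (hae.mono fun x hx => hx.mul_const _)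
    rw [norm_mul]
    exact mul_le_mul_of_nonneg_right (hab k x) (abs_nonneg _)

section
variable {G : Type*} [NormedAddCommGroup G] [NormedSpace ℝ G] [FiniteDimensional ℝ G] [MeasurableSpace G] [BorelSpace G]
  {μ : Measure G} [μ.IsAddHaarMeasure]

/-- bumps -/
def bmp (G : Type*) [NormedAddCommGroup G] [NormedSpace ℝ G] [FiniteDimensional ℝ G] (k : ℕ) : ContDiffBump (0 : G) :=
  ⟨1/(2*((k:ℝ)+1)), 1/((k:ℝ)+1), by positivity, by
    have : (0:ℝ) < (k:ℝ)+1 := by positivity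
    rw [div_lt_div_iff₀ (by positivity) this]; linarith⟩

theorem bmp_out : Tendsto (fun k => (bmp G k).rOut) atTop (𝓝 0) := by
  exact tendsto_one_div_add_atTop_nhds_zero_nat

theorem Mo_eq (w : G → ℝ) (k : ℕ) : Mo μ w ((bmp G k).normed μ) =
    convolution ((bmp G k).normed μ) w (ContinuousLinearMap.lsmul ℝ ℝ) μ := by
  funext p
  rw [convolution_lsmul_swap]
  exact integral_congr_ae (ae_of_all _ fun x => by simp only [smul_eq_mul]; ring)

theorem Mo_ae {w : G → ℝ} (hw : Integrable w μ) :
    ∀ᵐ x ∂μ, Tendsto (fun k => Mo μ w ((bmp G k).normed μ) x) atTop (𝓝 (w x)) := by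
  have := ContDiffBump.ae_convolution_tendsto_right_of_locallyIntegrable (φ := bmp G) (K := 2) (g := w) (μ := μ)
    bmp_out (Eventually.of_forall fun k => by
      show 1/((k:ℝ)+1) ≤ 2 * (1/(2*((k:ℝ)+1)))
      have : (0:ℝ) < (k:ℝ)+1 := by positivity
      apply le_of_eq; field_simp) hw.locallyIntegrable
  simpa only [Mo_eq] using this

theorem Mo_int {w : G → ℝ} (hw : Integrable w μ) (k : ℕ) : Integrable (Mo μ w ((bmp G k).normed μ)) μ := by
  rw [Mo_eq]
  exact ((bmp G k).integrable_normed).integrable_convolution _ hw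

theorem Mo_integral {w : G → ℝ} (hw : Integrable w μ) (k : ℕ) :
    ∫ x, Mo μ w ((bmp G k).normed μ) x ∂μ = ∫ x, w x ∂μ := by
  rw [Mo_eq, integral_convolution _ ((bmp G k).integrable_normed) hw, (bmp G k).integral_normed]
  simp

theorem Mo_L1_pos {w : G → ℝ} (hw : Integrable w μ) (h0 : ∀ x, 0 ≤ w x) :
    Tendsto (fun k => ∫ x, |Mo μ w ((bmp G k).normed μ) x - w x| ∂μ) atTop (𝓝 0) := by
  have hM0 : ∀ k x, 0 ≤ Mo μ w ((bmp G k).normed μ) x := fun k x =>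
    integral_nonneg fun q => mul_nonneg (h0 q) ((bmp G k).nonneg_normed _)
  have hm : ∀ k, Integrable (fun x => min (Mo μ w ((bmp G k).normed μ) x) (w x)) μ := fun k =>
    (Mo_int hw k).inf hw
  have e : ∀ k, ∫ x, |Mo μ w ((bmp G k).normed μ) x - w x| ∂μ =
      2 * (∫ x, w x ∂μ) - 2 * ∫ x, min (Mo μ w ((bmp G k).normed μ) x) (w x) ∂μ := fun k => by
    have : (fun x => |Mo μ w ((bmp G k).normed μ) x - w x|) = fun x => (Mo μ w ((bmp G k).normed μ) x + w x) -
        2 * min (Mo μ w ((bmp G k).normed μ) x) (w x) := by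
      funext x
      rcases le_total (Mo μ w ((bmp G k).normed μ) x) (w x) with h | h
      · rw [min_eq_left h, abs_of_nonpos (by linarith)]; ring
      · rw [min_eq_right h, abs_of_nonneg (by linarith)]; ring
    have hadd : Integrable (fun x => Mo μ w ((bmp G k).normed μ) x + w x) μ := (Mo_int hw k).add hw
    rw [this, integral_sub hadd ((hm k).const_mul 2), integral_add (Mo_int hw k) hw, Mo_integral hw,
      integral_const_mul]
    ring
  simp only [e]
  have hl : Tendsto (fun k => ∫ x, min (Mo μ w ((bmp G k).normed μ) x) (w x) ∂μ) atTop (𝓝 (∫ x, w x ∂μ)) := by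
    refine tendsto_integral_of_dominated_convergence w (fun k => (hm k).aestronglyMeasurable) hw
      (fun k => ae_of_all _ fun x => ?_) ((Mo_ae hw).mono fun x hx => ?_)
    · rw [Real.norm_eq_abs, abs_of_nonneg (le_min (hM0 k x) (h0 x))]
      exact min_le_right _ _
    · have := hx.min (tendsto_const_nhds (x := w x))
      rwa [min_self] at this
  have := (tendsto_const_nhds (x := 2 * ∫ x, w x ∂μ)).sub (hl.const_mul 2)
  rwa [sub_self] at this

theorem Mo_L1 {w : G → ℝ} (hw : Integrable w μ) :
    Tendsto (fun k => ∫ x, |Mo μ w ((bmp G k).normed μ) x - w x| ∂μ) atTop (𝓝 0) := by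
  have ip : Integrable (fun x => max (w x) 0) μ := hw.pos_part
  have im : Integrable (fun x => max (-w x) 0) μ := hw.neg_part
  have h1 := Mo_L1_pos ip fun x => le_max_right _ _
  have h2 := Mo_L1_pos im fun x => le_max_right _ _
  have hs : ∀ x, w x = max (w x) 0 - max (-w x) 0 := fun x => by
    rcases le_total (w x) 0 with h | h
    · rw [max_eq_right h, max_eq_left (by linarith)]; ring
    · rw [max_eq_left h, max_eq_right (by linarith)]; ring
  have hM : ∀ k x, Mo μ w ((bmp G k).normed μ) x = Mo μ (fun x => max (w x) 0) ((bmp G k).normed μ) x -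
      Mo μ (fun x => max (-w x) 0) ((bmp G k).normed μ) x := fun k x => by
    unfold Mo
    rw [← integral_sub (Mo_exists ip (bmp G k).continuous_normed (bmp G k).hasCompactSupport_normed x)
      (Mo_exists im (bmp G k).continuous_normed (bmp G k).hasCompactSupport_normed x)]
    refine integral_congr_ae (ae_of_all _ fun q => ?_)
    simp only
    rw [← sub_mul, ← hs]
  have h3 := h1.add h2
  rw [add_zero] at h3
  refine squeeze_zero (fun k => integral_nonneg fun x => abs_nonneg _) (fun k => ?_) h3
  have a1 : Integrable (fun x => |Mo μ (fun x => max (w x) 0) ((bmp G k).normed μ) x - max (w x) 0|) μ :=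
    ((Mo_int ip k).sub ip).abs
  have a2 : Integrable (fun x => |Mo μ (fun x => max (-w x) 0) ((bmp G k).normed μ) x - max (-w x) 0|) μ :=
    ((Mo_int im k).sub im).abs
  rw [← integral_add a1 a2]
  refine integral_mono ((Mo_int hw k).sub hw).abs (a1.add a2) fun x => ?_
  simp only [Pi.add_apply]
  rw [hM]
  conv_lhs => rw [hs x]
  rw [abs_le]
  constructor
  · linarith [neg_abs_le (Mo μ (fun x => max (w x) 0) ((bmp G k).normed μ) x - max (w x) 0),
      le_abs_self (Mo μ (fun x => max (-w x) 0) ((bmp G k).normed μ) x - max (-w x) 0)]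
  · linarith [le_abs_self (Mo μ (fun x => max (w x) 0) ((bmp G k).normed μ) x - max (w x) 0),
      neg_abs_le (Mo μ (fun x => max (-w x) 0) ((bmp G k).normed μ) x - max (-w x) 0)]

theorem IsJ.lip {e : ℝ} {j j1 j2 : ℝ → ℝ} (h : IsJ e j j1 j2) (a b : ℝ) : |j a - j b| ≤ |a - b| := by
  have : LipschitzWith 1 j := lipschitzWith_of_nnnorm_deriv_le (fun s => (h.1 s).differentiableAt) fun s => by
    rw [(h.1 s).deriv, ← NNReal.coe_le_coe, coe_nnnorm, Real.norm_eq_abs, abs_of_nonneg (h.2.2.2.2.1 s)]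
    exact h.2.2.2.2.2.1 s
  have := this.dist_le_mul a b
  simpa [Real.dist_eq] using this

theorem kato_abs {N : ℕ} {v0 : G} {v : Fin N → G} {w f : G → ℝ} (hw : Integrable w μ) (hf : Integrable f μ) {O : Set G} (hO : IsOpen O)
    (H : ∀ φ : G → ℝ, ContDiff ℝ 2 φ → HasCompactSupport φ → tsupport φ ⊆ O → (∀ p, 0 ≤ φ p) →
      -∫ p, w p * LP v0 v φ p ∂μ ≤ ∫ p, φ p * f p ∂μ)
    {e : ℝ} {j j1 j2 : ℝ → ℝ} (hj : IsJ e j j1 j2) {ξ : G → ℝ} (hξ : ContDiff ℝ 2 ξ) (hc : HasCompactSupport ξ)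
    (hs : tsupport ξ ⊆ O) (h0 : ∀ p, 0 ≤ ξ p) :
    -∫ p, j (w p) * LP v0 v ξ p ∂μ ≤ ∫ p, (ξ p * j1 (w p)) * f p ∂μ := by
  obtain ⟨δ, hδ, hδO⟩ := IsCompact.exists_cthickening_subset_open hc hO hs
  let η : ℕ → G → ℝ := fun k => (bmp G k).normed μ
  have hη : ∀ k, ContDiff ℝ 2 (η k) := fun k => (bmp G k).contDiff_normed
  have hηc : ∀ k, HasCompactSupport (η k) := fun k => (bmp G k).hasCompactSupport_normed
  have hM2 : ∀ k, ContDiff ℝ 2 (Mo μ w (η k)) := fun k => Mo_contDiff (n := 2) hw (hη k) (hηc k)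
  have hMf : ∀ k, Continuous (Mo μ f (η k)) := fun k => (Mo_contDiff (n := 2) hf (hη k) (hηc k)).continuous
  have hjM : ∀ k, ContDiff ℝ 2 (fun x => j (Mo μ w (η k) x)) := fun k => hj.2.2.2.2.2.2.2.2.2.2.2.2.comp (hM2 k)
  have hLM : ∀ F : G → ℝ, ContDiff ℝ 2 F → Continuous (LM v0 v F) := fun F hF => by
    refine Continuous.sub (Dv_contDiff (n := 2) (m := 1) le_rfl hF _).continuous (continuous_finsetSum _ fun i _ => ?_)
    exact (Dv_contDiff (n := 1) (m := 0) le_rfl (Dv_contDiff (n := 2) (m := 1) le_rfl hF _) _).continuous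
  have step : ∀ᶠ k in atTop, -∫ p, j (Mo μ w (η k) p) * LP v0 v ξ p ∂μ ≤ ∫ p, (ξ p * j1 (Mo μ w (η k) p)) * Mo μ f (η k) p ∂μ := by
    filter_upwards [(bmp_out (G := G)).eventually (gt_mem_nhds hδ)] with k hk
    rw [LP_ibp (hjM k) hξ hc, neg_neg]
    refine integral_mono (Continuous.integrable_of_hasCompactSupport (hξ.continuous.mul (hLM _ (hjM k))) hc.mul_right)
      (Continuous.integrable_of_hasCompactSupport ((hξ.continuous.mul (hj.cont1.comp (hM2 k).continuous)).mul (hMf k)) ?_) fun p => ?_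
    · exact HasCompactSupport.mul_right (hc.mul_right)
    by_cases hp : p ∈ tsupport ξ
    · have h1 := LM_comp (v0 := v0) (v := v) (hM2 k) hj p
      have h2 : LM v0 v (Mo μ w (η k)) p ≤ Mo μ f (η k) p := by
        rw [LM_Mo hw (hη k) (hηc k)]
        have hcb : tsupport (fun q => η k (p - q)) ⊆ Metric.closedBall p (bmp G k).rOut := by
          refine closure_minimal (fun q hq => ?_) Metric.isClosed_closedBall
          have : p - q ∈ Function.support ((bmp G k).normed μ) := hq
          rw [(bmp G k).support_normed_eq, mem_ball_zero_iff] at this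
          rw [Metric.mem_closedBall, dist_comm, dist_eq_norm]
          exact this.le
        have h3 := H (fun q => η k (p - q)) ((hη k).comp (contDiff_const.sub contDiff_id))
          (HasCompactSupport.of_support_subset_isCompact (isCompact_closedBall p _) ((subset_tsupport _).trans hcb))
          (fun q hq => hδO (Metric.mem_cthickening_of_dist_le q p δ _ hp ((hcb hq : dist q p ≤ _).trans hk.le)))
          (fun q => (bmp G k).nonneg_normed _)
        refine h3.trans (le_of_eq ?_)
        exact integral_congr_ae (ae_of_all _ fun q => by simp only; ring)
      calc ξ p * LM v0 v (fun x => j (Mo μ w (η k) x)) p ≤ ξ p * (j1 (Mo μ w (η k) p) * LM v0 v (Mo μ w (η k)) p) :=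
            mul_le_mul_of_nonneg_left h1 (h0 p)
        _ ≤ ξ p * (j1 (Mo μ w (η k) p) * Mo μ f (η k) p) :=
            mul_le_mul_of_nonneg_left (mul_le_mul_of_nonneg_left h2 (hj.2.2.2.2.1 _)) (h0 p)
        _ = _ := by ring
    · simp only
      rw [image_eq_zero_of_notMem_tsupport hp]; simp
  obtain ⟨C1, hC1⟩ := hξ.continuous.bounded_above_of_compact_support hc
  obtain ⟨C2, hC2⟩ := (LP_cont (v0 := v0) (v := v) hξ).bounded_above_of_compact_support (LP_cs hc)
  have hji : ∀ h : G → ℝ, Integrable h μ → Integrable (fun x => j (h x)) μ := fun h hh => by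
    refine hh.abs.mono' (hj.cont.comp_aestronglyMeasurable hh.aestronglyMeasurable) (ae_of_all _ fun x => ?_)
    rw [Real.norm_eq_abs, abs_of_nonneg (hj.2.2.2.2.2.2.2.2.2.1 _)]
    exact (hj.2.2.2.2.2.2.2.2.2.2.1 _).trans (max_le (le_abs_self _) (abs_nonneg _))
  have L1 : Tendsto (fun k => ∫ p, LP v0 v ξ p * j (Mo μ w (η k) p) ∂μ) atTop (𝓝 (∫ p, LP v0 v ξ p * j (w p) ∂μ)) := by
    refine tendsto_prod_int (C := C2) (fun k => (LP_cont hξ).aestronglyMeasurable) (fun k x => hC2 x)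
      (ae_of_all _ fun x => tendsto_const_nhds) (fun k => hji _ (Mo_int hw k)) (hji _ hw) ?_
    refine squeeze_zero (fun k => integral_nonneg fun x => abs_nonneg _) (fun k => ?_) (Mo_L1 hw)
    exact integral_mono ((hji _ (Mo_int hw k)).sub (hji _ hw)).abs ((Mo_int hw k).sub hw).abs fun x => hj.lip _ _
  have L2 : Tendsto (fun k => ∫ p, (ξ p * j1 (Mo μ w (η k) p)) * Mo μ f (η k) p ∂μ) atTop (𝓝 (∫ p, (ξ p * j1 (w p)) * f p ∂μ)) := by
    refine tendsto_prod_int (C := C1) (fun k => (hξ.continuous.mul (hj.cont1.comp (hM2 k).continuous)).aestronglyMeasurable)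
      (fun k x => ?_) ((Mo_ae hw).mono fun x hx => ((hj.cont1.tendsto _).comp hx).const_mul _) (fun k => Mo_int hf k) hf (Mo_L1 hf)
    rw [abs_mul, abs_of_nonneg (hj.2.2.2.2.1 _)]
    have h1 := hC1 x
    rw [Real.norm_eq_abs] at h1
    exact (mul_le_of_le_one_right (abs_nonneg _) (hj.2.2.2.2.2.1 _)).trans h1
  have cm : ∀ h : G → ℝ, ∫ p, j (h p) * LP v0 v ξ p ∂μ = ∫ p, LP v0 v ξ p * j (h p) ∂μ := fun h =>
    integral_congr_ae (ae_of_all _ fun x => mul_comm _ _)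
  simp only [cm] at step ⊢
  exact le_of_tendsto_of_tendsto L1.neg L2 step
end

/-- space directions -/
def ve {N : ℕ} (i : Fin N) : Euc N × ℝ := (EuclideanSpace.single i 1, 0)
/-- time direction -/
def vt (N : ℕ) : Euc N × ℝ := (0, 1)

theorem curry_C21 {N : ℕ} {Φ : Euc N × ℝ → ℝ} (h : ContDiff ℝ 2 Φ) : C21 (fun x t => Φ (x, t)) := by
  have h1 : ContDiff ℝ 1 (fun p : Euc N × ℝ => fderiv ℝ (fun y => Φ (y, p.2)) p.1) := by
    refine ContDiff.fderiv (m := 2) (f := fun (p : Euc N × ℝ) (y : Euc N) => Φ (y, p.2)) ?_ contDiff_fst (by norm_num)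
    exact h.comp (contDiff_snd.prodMk (contDiff_snd.comp contDiff_fst))
  have h1x : ∀ t, ContDiff ℝ 1 (fun y : Euc N => fderiv ℝ (fun z => Φ (z, t)) y) := fun t =>
    h1.comp (contDiff_id.prodMk contDiff_const)
  refine ⟨h.continuous, fun x t => ?_, ?_, fun t x => ?_, h1.continuous, fun t x => ?_, ?_⟩
  · exact (h.comp (contDiff_const.prodMk contDiff_id)).differentiable (by norm_num) t
  · have h2 : ContDiff ℝ 1 (fun p : Euc N × ℝ => fderiv ℝ (fun t => Φ (p.1, t)) p.2) := by
      refine ContDiff.fderiv (m := 2) (f := fun (p : Euc N × ℝ) (y : ℝ) => Φ (p.1, y)) ?_ contDiff_snd (by norm_num)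
      exact h.comp ((contDiff_fst.comp contDiff_fst).prodMk contDiff_snd)
    exact h2.continuous.clm_apply continuous_const
  · exact (h.comp (contDiff_id.prodMk contDiff_const)).differentiable (by norm_num) x
  · exact (h1x t).differentiable (by norm_num) x
  · have h2 : ContDiff ℝ 0 (fun p : Euc N × ℝ => fderiv ℝ (fun y => fderiv ℝ (fun z => Φ (z, p.2)) y) p.1) := by
      refine ContDiff.fderiv (m := 1) (f := fun (p : Euc N × ℝ) (y : Euc N) => fderiv ℝ (fun z => Φ (z, p.2)) y) ?_ contDiff_fst (by norm_num)
      exact h1.comp (contDiff_snd.prodMk (contDiff_snd.comp contDiff_fst))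
    exact h2.continuous

theorem fd_x {N : ℕ} {F : Euc N × ℝ → ℝ} (h : ContDiff ℝ 1 F) (x : Euc N) (t : ℝ) (v : Euc N) :
    fderiv ℝ (fun y => F (y, t)) x v = fderiv ℝ F (x, t) (v, 0) := by
  have h1 : HasFDerivAt F (fderiv ℝ F (x, t)) (x, t) := (h.differentiable (by norm_num) _).hasFDerivAt
  have h2 : HasFDerivAt (fun y : Euc N => (y, t)) (ContinuousLinearMap.inl ℝ (Euc N) ℝ) x := hasFDerivAt_prodMk_left x t
  have h3 : HasFDerivAt (fun y => F (y, t)) _ x := h1.comp x h2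
  rw [h3.fderiv]; rfl

theorem heat_LP {N : ℕ} {Φ : Euc N × ℝ → ℝ} (h : ContDiff ℝ 2 Φ) (p : Euc N × ℝ) :
    heatAdj (fun x t => Φ (x, t)) p = LP (vt N) ve Φ p := by
  unfold heatAdj LP
  congr 1
  · have h1 : HasFDerivAt Φ (fderiv ℝ Φ (p.1, p.2)) (p.1, p.2) := (h.differentiable (by norm_num) _).hasFDerivAt
    have h2 : HasDerivAt (fun t : ℝ => (p.1, t)) (vt N) p.2 := (hasDerivAt_const p.2 p.1).prodMk (hasDerivAt_id p.2)
    exact (h1.comp_hasDerivAt p.2 h2).deriv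
  · unfold lap
    refine Finset.sum_congr rfl fun i _ => ?_
    have e : (fun y => fderiv ℝ (fun y => Φ (y, p.2)) y (EuclideanSpace.single i 1)) = fun y => Dv (ve i) Φ (y, p.2) := by
      funext y
      rw [fd_x (h.of_le (by norm_num))]; rfl
    rw [e, fd_x (Dv_contDiff (n := 2) (m := 1) le_rfl h _)]
    rfl

theorem gU_int {N : ℕ} (hN : 1 ≤ N) {Ω : Set (Euc N)} (hΩo : IsOpen Ω) (hΩb : Bornology.IsBounded Ω) {T : ℝ}
    {g : ℝ → ℝ} (hg : GoodG g) {U : Euc N × ℝ → ℝ} (hU : IntegrableOn U (QT Ω T))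
    (hgU : IntegrableOn (fun p => g (U p) * rho Ω p.1) (QT Ω T)) {K : Set (Euc N)} (hK : IsCompact K) (hKΩ : K ⊆ Ω) :
    IntegrableOn (fun p => g (U p)) (QT K T) := by
  have hne : (Ωᶜ).Nonempty := by
    have : Nonempty (Fin N) := ⟨⟨0, hN⟩⟩
    rw [nonempty_compl]
    rintro rfl
    exact NormedSpace.unbounded_univ ℝ (Euc N) hΩb
  have hrc : Continuous (rho Ω) := Metric.continuous_infDist_pt _
  obtain ⟨c, hc, hcK⟩ : ∃ c > 0, ∀ x ∈ K, c ≤ rho Ω x := by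
    rcases K.eq_empty_or_nonempty with rfl | hKn
    · exact ⟨1, one_pos, fun x hx => hx.elim⟩
    obtain ⟨x, hx, hm⟩ := hK.exists_isMinOn hKn hrc.continuousOn
    refine ⟨rho Ω x, ?_, fun y hy => hm hy⟩
    exact (hΩo.isClosed_compl.notMem_iff_infDist_pos hne).1 fun h => h (hKΩ hx)
  have hsub : QT K T ⊆ QT Ω T := prod_mono hKΩ le_rfl
  have hmeas : MeasurableSet (QT K T) := hK.measurableSet.prod measurableSet_Ioo
  refine Integrable.mono' (g := fun p => c⁻¹ * ‖g (U p) * rho Ω p.1‖) ((hgU.mono_set hsub).norm.const_mul _)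
    (hg.1.comp_aestronglyMeasurable (hU.mono_set hsub).aestronglyMeasurable) ?_
  refine (ae_restrict_iff' hmeas).2 (ae_of_all _ fun p hp => ?_)
  have h1 := hcK p.1 hp.1
  have h2 := hg.nonneg (U p)
  rw [norm_mul, Real.norm_eq_abs, abs_of_nonneg h2, Real.norm_eq_abs, abs_of_nonneg (hc.le.trans h1)]
  rw [inv_mul_eq_div, le_div_iff₀ hc]
  exact mul_le_mul_of_nonneg_left h1 h2

theorem lemF {N : ℕ} (hN : 1 ≤ N) {Ω : Set (Euc N)} (hΩo : IsOpen Ω) (hΩb : Bornology.IsBounded Ω) {T : ℝ} (hT : 0 < T)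
    {g : ℝ → ℝ} (hg : GoodG g) {ν μ : Measure (Euc N)} (hμ : MemM1 Ω μ) (hνμ : ν ≤ μ)
    {U : Euc N × ℝ → ℝ} (hU : WeakSol Ω T g μ U) {u : Euc N × ℝ → ℝ} (hu : IntegrableOn u (QT Ω T)) {n : ℕ}
    (hGi : IntegrableOn (fun p => gn g n (u p)) (QT Ω T))
    (hE : EQ Ω T ν u (fun p => gn g n (u p))) {ξ : Euc N × ℝ → ℝ} (hξ : ContDiff ℝ 2 ξ) (hc : HasCompactSupport ξ)
    (hs : tsupport ξ ⊆ Ω ×ˢ Iio T) (h0 : ∀ p, 0 ≤ ξ p) :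
    IntegrableOn (fun p => ξ p * g (U p)) (QT Ω T) ∧
    (∫ p in QT Ω T, ξ p * gn g n (u p)) ≤ (∫ p in QT Ω T, ξ p * g (U p)) + ∫ p in QT Ω T, max (u p - U p) 0 * LP (vt N) ve ξ p := by
  obtain ⟨hUi, hgU, hUeq⟩ := hU
  have hQ := QT_meas hΩo T
  have hK1 : IsCompact (Prod.fst '' tsupport ξ) := IsCompact.image hc continuous_fst
  obtain ⟨L, hL, hKL, hLΩ⟩ := exists_compact_between hK1 hΩo (by rintro _ ⟨p, hp, rfl⟩; exact (hs hp).1)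
  have hQL : MeasurableSet (QT L T) := hL.measurableSet.prod measurableSet_Ioo
  have hLQ : QT L T ⊆ QT Ω T := prod_mono hLΩ le_rfl
  have hgL := gU_int hN hΩo hΩb hg hUi hgU hL hLΩ
  -- integrability of products
  have hgφ : ∀ φ : Euc N × ℝ → ℝ, Continuous φ → HasCompactSupport φ → (∀ p, p.1 ∉ L → φ p = 0) →
      IntegrableOn (fun p => φ p * g (U p)) (QT Ω T) := fun φ hφ hφc hφL => by
    obtain ⟨C, hC⟩ := hφ.bounded_above_of_compact_support hφc
    have h1 : IntegrableOn (fun p => φ p * g (U p)) (QT L T) :=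
      Integrable.bdd_mul (c := C) hgL hφ.aestronglyMeasurable (ae_of_all _ hC)
    refine h1.of_forall_sdiff_eq_zero hQ fun p hp => ?_
    rw [hφL p fun h => hp.2 ⟨h, hp.1.2⟩, zero_mul]
  have hLξ : ∀ p : Euc N × ℝ, p.1 ∉ L → ξ p = 0 := fun p hp =>
    image_eq_zero_of_notMem_tsupport fun h => hp (interior_subset (hKL ⟨p, h, rfl⟩))
  have hIξ := hgφ ξ hξ.continuous hc hLξ
  have hIG : ∀ φ : Euc N × ℝ → ℝ, Continuous φ → HasCompactSupport φ → ∀ h : Euc N × ℝ → ℝ, IntegrableOn h (QT Ω T) →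
      IntegrableOn (fun p => φ p * h p) (QT Ω T) := fun φ hφ hφc h hh => by
    obtain ⟨C, hC⟩ := hφ.bounded_above_of_compact_support hφc
    exact Integrable.bdd_mul (c := C) hh hφ.aestronglyMeasurable (ae_of_all _ hC)
  refine ⟨hIξ, ?_⟩
  let w : Euc N × ℝ → ℝ := (QT Ω T).indicator fun p => u p - U p
  let f : Euc N × ℝ → ℝ := (QT L T).indicator fun p => g (U p) - gn g n (u p)
  have hw : Integrable w := (integrable_indicator_iff hQ).2 (hu.sub hUi)
  have hf : Integrable f := (integrable_indicator_iff hQL).2 (hgL.sub (hGi.mono_set hLQ))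
  have hφf : ∀ φ : Euc N × ℝ → ℝ, (∀ p, p.1 ∉ L → φ p = 0) → ∀ k : Euc N × ℝ → ℝ,
      ∫ p, φ p * k p * f p = ∫ p in QT Ω T, φ p * k p * (g (U p) - gn g n (u p)) := fun φ hφL k => by
    have : (fun p => φ p * k p * f p) = (QT Ω T).indicator fun p => φ p * k p * (g (U p) - gn g n (u p)) := by
      funext p
      by_cases h1 : p ∈ QT Ω T
      · rw [indicator_of_mem h1]
        by_cases h2 : p.1 ∈ L
        · simp only [f]; rw [indicator_of_mem (show p ∈ QT L T from ⟨h2, h1.2⟩)]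
        · rw [hφL p h2]; simp
      · rw [indicator_of_notMem h1]
        simp only [f]; rw [indicator_of_notMem (fun h => h1 (hLQ h)), mul_zero]
    rw [this, integral_indicator hQ]
  have H : ∀ φ : Euc N × ℝ → ℝ, ContDiff ℝ 2 φ → HasCompactSupport φ → tsupport φ ⊆ interior L ×ˢ Iio T → (∀ p, 0 ≤ φ p) →
      -∫ p, w p * LP (vt N) ve φ p ≤ ∫ p, φ p * f p := fun φ hφ hφc hφs hφ0 => by
    have hz : ∀ p : Euc N × ℝ, p ∉ interior L ×ˢ Iio T → φ p = 0 := fun p hp =>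
      image_eq_zero_of_notMem_tsupport fun h => hp (hφs h)
    have hφL : ∀ p : Euc N × ℝ, p.1 ∉ L → φ p = 0 := fun p hp => hz p fun h => hp (interior_subset h.1)
    have hTZ : TestZero Ω T (fun x t => φ (x, t)) := by
      refine ⟨curry_C21 hφ, fun x hx t ht => hz _ fun h => ?_, fun x hx => hz _ fun h => lt_irrefl T h.2⟩
      rw [hΩo.frontier_eq] at hx
      exact hx.2 (hLΩ (interior_subset h.1))
    have E1 := hE _ hTZ
    have E2 := hUeq _ hTZ
    have hmu : ∫ x, φ (x, 0) ∂ν ≤ ∫ x, φ (x, 0) ∂μ := by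
      refine integral_mono_measure hνμ (ae_of_all _ fun x => hφ0 _) ?_
      have hcx : Continuous fun x : Euc N => φ (x, 0) := hφ.continuous.comp (by fun_prop)
      have : IntegrableOn (fun x : Euc N => φ (x, 0)) L μ := by
        have : IsFiniteMeasure (μ.restrict L) := ⟨by rw [Measure.restrict_apply_univ]; exact hμ.2.1 L hLΩ hL⟩
        obtain ⟨C, hC⟩ := hφ.continuous.bounded_above_of_compact_support hφc
        exact Integrable.of_bound hcx.aestronglyMeasurable C (ae_of_all _ fun x => hC _)
      exact (this.of_forall_sdiff_eq_zero MeasurableSet.univ (fun x hx => hφL _ hx.2)).integrable_of_forall_notMem_eq_zero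
        (fun x hx => (hx (mem_univ x)).elim)
    have hLc := LP_cont (v0 := vt N) (v := ve) hφ
    have hLcs := LP_cs (v0 := vt N) (v := ve) hφc
    have iu := hIG _ hLc hLcs u hu
    have iU := hIG _ hLc hLcs U hUi
    have iG := hIG _ hφ.continuous hφc _ hGi
    have ig := hgφ φ hφ.continuous hφc hφL
    have e1 : ∫ p in QT Ω T, (-(u p) * heatAdj (fun x t => φ (x, t)) p + φ (p.1, p.2) * gn g n (u p)) =
        -(∫ p in QT Ω T, LP (vt N) ve φ p * u p) + ∫ p in QT Ω T, φ p * gn g n (u p) := by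
      have iu' : IntegrableOn (fun p => -(LP (vt N) ve φ p * u p)) (QT Ω T) := iu.neg
      rw [← integral_neg, ← integral_add iu' iG]
      refine integral_congr_ae (ae_of_all _ fun p => ?_)
      simp only [heat_LP hφ]; ring
    have e2 : ∫ p in QT Ω T, (-(U p) * deriv (fun t => φ (p.1, t)) p.2 - U p * lap (fun y => φ (y, p.2)) p.1 + φ (p.1, p.2) * g (U p)) =
        -(∫ p in QT Ω T, LP (vt N) ve φ p * U p) + ∫ p in QT Ω T, φ p * g (U p) := by
      have iu' : IntegrableOn (fun p => -(LP (vt N) ve φ p * U p)) (QT Ω T) := iU.neg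
      rw [← integral_neg, ← integral_add iu' ig]
      refine integral_congr_ae (ae_of_all _ fun p => ?_)
      simp only [← heat_LP hφ, heatAdj]; ring
    rw [e1] at E1
    rw [e2] at E2
    have e3 : ∫ p, w p * LP (vt N) ve φ p = (∫ p in QT Ω T, LP (vt N) ve φ p * u p) - ∫ p in QT Ω T, LP (vt N) ve φ p * U p := by
      rw [← integral_sub iu iU, ← integral_indicator hQ]
      refine integral_congr_ae (ae_of_all _ fun p => ?_)
      simp only [w, indicator]
      split_ifs
      · ring
      · simp
    have e4 : ∫ p, φ p * f p = (∫ p in QT Ω T, φ p * g (U p)) - ∫ p in QT Ω T, φ p * gn g n (u p) := by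
      have := hφf φ hφL (fun _ => 1)
      simp only [mul_one] at this
      rw [this, ← integral_sub ig iG]
      refine integral_congr_ae (ae_of_all _ fun p => ?_)
      simp only; ring
    rw [e3, e4]
    linarith
  have hO : IsOpen (interior L ×ˢ Iio T) := isOpen_interior.prod isOpen_Iio
  have hsO : tsupport ξ ⊆ interior L ×ˢ Iio T := fun p hp => ⟨hKL ⟨p, hp, rfl⟩, (hs hp).2⟩
  choose j j1 j2 hj using fun k : ℕ => exists_j (1/((k:ℝ)+1)) (by positivity)
  have hHaar : (volume : Measure (Euc N × ℝ)).IsAddHaarMeasure := by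
    rw [Measure.volume_eq_prod]; infer_instance
  have hJ : ∀ k : ℕ, IsJ (1/((k:ℝ)+1)) (j k) (j1 k) (j2 k) := hj
  have main : ∀ k, -∫ p, j k (w p) * LP (vt N) ve ξ p ≤ ∫ p, (ξ p * j1 k (w p)) * f p := fun k =>
    kato_abs hw hf hO H (hJ k) hξ hc hsO h0
  have hek : Tendsto (fun k : ℕ => 1/((k:ℝ)+1)) atTop (𝓝 0) := tendsto_one_div_add_atTop_nhds_zero_nat
  obtain ⟨C1, hC1⟩ := hξ.continuous.bounded_above_of_compact_support hc
  have L1 : Tendsto (fun k => ∫ p, j k (w p) * LP (vt N) ve ξ p) atTop (𝓝 (∫ p, max (w p) 0 * LP (vt N) ve ξ p)) := by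
    obtain ⟨C2, hC2⟩ := (LP_cont (v0 := vt N) (v := ve) hξ).bounded_above_of_compact_support (LP_cs hc)
    refine tendsto_integral_of_dominated_convergence (fun p => |w p| * C2) (fun k => ?_) (hw.abs.mul_const _)
      (fun k => ae_of_all _ fun p => ?_) (ae_of_all _ fun p => ?_)
    · exact ((hJ k).cont.comp_aestronglyMeasurable hw.aestronglyMeasurable).mul (LP_cont hξ).aestronglyMeasurable
    · rw [norm_mul]
      refine mul_le_mul ?_ (hC2 p) (norm_nonneg _) (abs_nonneg _)
      rw [Real.norm_eq_abs, abs_of_nonneg ((hJ k).2.2.2.2.2.2.2.2.2.1 _)]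
      exact ((hJ k).2.2.2.2.2.2.2.2.2.2.1 _).trans (max_le (le_abs_self _) (abs_nonneg _))
    · refine Tendsto.mul_const _ ?_
      refine tendsto_of_tendsto_of_tendsto_of_le_of_le (g := fun k : ℕ => max (w p) 0 - 2 * (1/((k:ℝ)+1))) ?_ tendsto_const_nhds
        (fun k => (hJ k).2.2.2.2.2.2.2.2.2.2.2.1 _) (fun k => (hJ k).2.2.2.2.2.2.2.2.2.2.1 _)
      have := (tendsto_const_nhds (x := max (w p) 0)).sub (hek.const_mul 2)
      simpa using this
  have L2 : Tendsto (fun k => ∫ p, (ξ p * j1 k (w p)) * f p) atTop (𝓝 (∫ p, (ξ p * (if 0 < w p then 1 else 0)) * f p)) := by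
    refine tendsto_prod_int (C := C1) (fun k => hξ.continuous.aestronglyMeasurable.mul ((hJ k).cont1.comp_aestronglyMeasurable hw.aestronglyMeasurable))
      (fun k x => ?_) (ae_of_all _ fun p => Tendsto.const_mul _ ?_) (fun k => hf) hf (by simp)
    · rw [abs_mul, abs_of_nonneg ((hJ k).2.2.2.2.1 _)]
      have h1 := hC1 x
      rw [Real.norm_eq_abs] at h1
      exact (mul_le_of_le_one_right (abs_nonneg _) ((hJ k).2.2.2.2.2.1 _)).trans h1
    · split_ifs with hp
      · refine tendsto_const_nhds.congr' ?_
        have h2 : Tendsto (fun k : ℕ => 2 * (1/((k:ℝ)+1))) atTop (𝓝 0) := by simpa using hek.const_mul 2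
        filter_upwards [h2.eventually (gt_mem_nhds hp)] with k hk
        exact ((hJ k).2.2.2.2.2.2.2.2.1 _ hk.le).symm
      · refine tendsto_const_nhds.congr fun k => ?_
        exact ((hJ k).2.2.2.2.2.2.1 _ ((not_lt.1 hp).trans (by positivity))).symm
  have fin := le_of_tendsto_of_tendsto' L1.neg L2 main
  rw [hφf ξ hLξ] at fin
  have e5 : ∫ p, max (w p) 0 * LP (vt N) ve ξ p = ∫ p in QT Ω T, max (u p - U p) 0 * LP (vt N) ve ξ p := by
    rw [← integral_indicator hQ]
    refine integral_congr_ae (ae_of_all _ fun p => ?_)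
    simp only [w, indicator]
    split_ifs
    · ring
    · simp
  have iξ := hIG _ hξ.continuous hc _ hGi
  have i6 : IntegrableOn (fun p => ξ p * (g (U p) - gn g n (u p))) (QT Ω T) := by
    simp only [mul_sub]
    exact hIξ.sub iξ
  have e6 : ∫ p in QT Ω T, (ξ p * (if 0 < w p then 1 else 0)) * (g (U p) - gn g n (u p)) ≤ ∫ p in QT Ω T, ξ p * (g (U p) - gn g n (u p)) := by
    refine integral_mono_ae ?_ i6 ?_
    · have hm : AEStronglyMeasurable (fun p => if 0 < w p then (1:ℝ) else 0) (volume.restrict (QT Ω T)) := by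
        have : Measurable fun s : ℝ => if 0 < s then (1:ℝ) else 0 := Measurable.ite measurableSet_Ioi measurable_const measurable_const
        exact (this.comp_aemeasurable hw.aestronglyMeasurable.aemeasurable.restrict).aestronglyMeasurable
      have := Integrable.bdd_mul (c := 1) i6 hm (ae_of_all _ fun p => by split_ifs <;> simp)
      refine this.congr (ae_of_all _ fun p => ?_)
      simp only; ring
    · refine (ae_restrict_iff' hQ).2 (ae_of_all _ fun p hp => ?_)
      simp only
      split_ifs with h
      · rw [mul_one]
      · have hwp : w p = u p - U p := indicator_of_mem hp _
        rw [hwp] at h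
        have : gn g n (u p) ≤ g (U p) := (gn_le hg n _).trans (hg.2.1 (by linarith))
        rw [mul_zero, zero_mul]
        exact mul_nonneg (h0 p) (by linarith)
  have e7 : ∫ p in QT Ω T, ξ p * (g (U p) - gn g n (u p)) = (∫ p in QT Ω T, ξ p * g (U p)) - ∫ p in QT Ω T, ξ p * gn g n (u p) := by
    rw [← integral_sub hIξ iξ]
    simp only [mul_sub]
  rw [e5] at fin
  linarith

theorem vit {α : Type*} [MeasurableSpace α] {m : Measure α} [IsFiniteMeasure m] {fn : ℕ → α → ℝ} {f' : α → ℝ}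
    (hfi : ∀ n, Integrable (fn n) m) (h0 : ∀ n x, 0 ≤ fn n x)
    (hl : ∀ x, Tendsto (fun n => fn n x) atTop (𝓝 (f' x)))
    (H : ∀ ε > 0, ∃ A, MeasurableSet A ∧ ∃ M : ℝ, (∀ n, ∫ x in A, fn n x ∂m ≤ ε) ∧ ∀ᵐ x ∂m, x ∉ A → ∀ n, fn n x ≤ M) :
    Integrable f' m ∧ Tendsto (fun n => ∫ x, |fn n x - f' x| ∂m) atTop (𝓝 0) := by
  have hm : AEStronglyMeasurable f' m :=
    aestronglyMeasurable_of_tendsto_ae atTop (fun n => (hfi n).aestronglyMeasurable) (ae_of_all _ hl)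
  have h0' : ∀ x, 0 ≤ f' x := fun x => ge_of_tendsto' (hl x) fun n => h0 n x
  have fat : ∀ (A : Set α) (ε : ℝ), (∀ n, ∫ x in A, fn n x ∂m ≤ ε) → IntegrableOn f' A m ∧ ∫ x in A, f' x ∂m ≤ ε := fun A ε hA => by
    have hε : 0 ≤ ε := (integral_nonneg fun x => h0 0 x).trans (hA 0)
    have h1 : ∫⁻ x in A, ENNReal.ofReal (f' x) ∂m ≤ ENNReal.ofReal ε := by
      have e : ∀ x, ENNReal.ofReal (f' x) = liminf (fun n => ENNReal.ofReal (fn n x)) atTop := fun x =>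
        ((ENNReal.continuous_ofReal.tendsto _).comp (hl x)).liminf_eq.symm
      simp only [e]
      refine (lintegral_liminf_le' fun n => (hfi n).aestronglyMeasurable.aemeasurable.restrict.ennreal_ofReal).trans ?_
      refine liminf_le_of_le (by isBoundedDefault) fun b hb => ?_
      obtain ⟨n, hn⟩ := hb.exists
      refine hn.trans ?_
      rw [← ofReal_integral_eq_lintegral_ofReal (hfi n).integrableOn (ae_of_all _ fun x => h0 n x)]
      exact ENNReal.ofReal_le_ofReal (hA n)
    have hi : IntegrableOn f' A m := ⟨hm.restrict, by
      rw [hasFiniteIntegral_iff_ofReal (ae_of_all _ h0')]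
      exact h1.trans_lt ENNReal.ofReal_lt_top⟩
    refine ⟨hi, ?_⟩
    rw [← ofReal_integral_eq_lintegral_ofReal hi (ae_of_all _ h0')] at h1
    exact (ENNReal.ofReal_le_ofReal_iff hε).1 h1
  have bd : ∀ (A : Set α) (M : ℝ), MeasurableSet A → (∀ᵐ x ∂m, x ∉ A → ∀ n, fn n x ≤ M) →
      IntegrableOn f' Aᶜ m ∧ Tendsto (fun n => ∫ x in Aᶜ, |fn n x - f' x| ∂m) atTop (𝓝 0) := fun A M hA hM => by
    have hM' : ∀ᵐ x ∂m.restrict Aᶜ, ∀ n, fn n x ≤ M := (ae_restrict_iff' hA.compl).2 hM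
    have hf' : ∀ᵐ x ∂m.restrict Aᶜ, f' x ≤ M := hM'.mono fun x hx => le_of_tendsto' (hl x) hx
    refine ⟨Integrable.of_bound hm.restrict M (hf'.mono fun x hx => by rwa [Real.norm_eq_abs, abs_of_nonneg (h0' x)]), ?_⟩
    have := tendsto_integral_of_dominated_convergence (μ := m.restrict Aᶜ) (F := fun n x => |fn n x - f' x|) (f := fun _ => 0)
      (fun _ => M) (fun n => ((hfi n).aestronglyMeasurable.sub hm).restrict.norm) (integrable_const _) (fun n => ?_) (ae_of_all _ fun x => ?_)
    · simpa using this
    · filter_upwards [hM', hf'] with x hx hx'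
      rw [Real.norm_eq_abs, abs_abs, abs_le]
      constructor <;> linarith [h0 n x, h0' x, hx n]
    · have := ((hl x).sub_const (f' x)).abs
      simpa using this
  have hI : Integrable f' m := by
    obtain ⟨A, hA, M, h1, h2⟩ := H 1 one_pos
    have := (fat A 1 h1).1.union (bd A M hA h2).1
    rwa [union_compl_self, integrableOn_univ] at this
  refine ⟨hI, ?_⟩
  rw [Metric.tendsto_atTop]
  intro ε hε
  obtain ⟨A, hA, M, h1, h2⟩ := H (ε/4) (by positivity)
  have hF := fat A _ h1
  obtain ⟨n0, hn0⟩ := (Metric.tendsto_atTop.1 (bd A M hA h2).2) (ε/4) (by positivity)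
  refine ⟨n0, fun n hn => ?_⟩
  have h3 := hn0 n hn
  rw [Real.dist_eq, sub_zero, abs_of_nonneg (integral_nonneg fun x => abs_nonneg _)] at h3 ⊢
  have hd : Integrable (fun x => |fn n x - f' x|) m := ((hfi n).sub hI).abs
  rw [← integral_add_compl hA hd]
  have h4 : ∫ x in A, |fn n x - f' x| ∂m ≤ (∫ x in A, fn n x ∂m) + ∫ x in A, f' x ∂m := by
    rw [← integral_add (hfi n).integrableOn hI.integrableOn]
    refine integral_mono hd.integrableOn ((hfi n).integrableOn.add hI.integrableOn) fun x => ?_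
    simp only
    rw [abs_le]
    constructor <;> linarith [h0 n x, h0' x]
  have h5 := h1 n
  linarith [hF.2]

theorem exists_cut {N : ℕ} {Ω L : Set (Euc N)} (hΩo : IsOpen Ω) (hL : IsCompact L) (hLΩ : L ⊆ Ω) :
    ∃ (L' : Set (Euc N)) (ξ : Euc N → ℝ), IsCompact L' ∧ L' ⊆ Ω ∧ ContDiff ℝ 2 ξ ∧ (∀ x, 0 ≤ ξ x) ∧ (∀ x, ξ x ≤ 1) ∧
      (∀ x ∈ L, ξ x = 1) ∧ (∀ x ∉ L', ξ x = 0) := by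
  obtain ⟨L', hL', hLL', hL'Ω⟩ := exists_compact_between hL hΩo hLΩ
  obtain ⟨f, hf, hr, hs, h1⟩ := exists_contMDiff_support_eq_eq_one_iff (modelWithCornersSelf ℝ (Euc N)) isOpen_interior hL.isClosed hLL' (n := 2)
  refine ⟨L', f, hL', hL'Ω, hf.contDiff, fun x => (hr (mem_range_self x)).1, fun x => (hr (mem_range_self x)).2,
    fun x hx => (h1 x).1 hx, fun x hx => ?_⟩
  by_contra h
  have : x ∈ Function.support f := h
  rw [hs] at this
  exact hx (interior_subset this)

/-- time cutoff -/
def thc (τ t : ℝ) : ℝ := Real.smoothTransition (t + 2) * Real.smoothTransition (2 - t / τ)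

theorem thc_smooth (τ : ℝ) : ContDiff ℝ 2 (thc τ) := by
  unfold thc
  exact (Real.smoothTransition.contDiff.comp (contDiff_id.add contDiff_const)).mul
    (Real.smoothTransition.contDiff.comp (contDiff_const.sub (contDiff_id.div_const _)))

theorem thc_nonneg (τ t : ℝ) : 0 ≤ thc τ t := mul_nonneg (Real.smoothTransition.nonneg _) (Real.smoothTransition.nonneg _)
theorem thc_le (τ t : ℝ) : thc τ t ≤ 1 := mul_le_one₀ (Real.smoothTransition.le_one _) (Real.smoothTransition.nonneg _) (Real.smoothTransition.le_one _)
theorem thc_one {τ t : ℝ} (hτ : 0 < τ) (h0 : 0 ≤ t) (h : t ≤ τ) : thc τ t = 1 := by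
  unfold thc
  rw [Real.smoothTransition.one_of_one_le (by linarith), Real.smoothTransition.one_of_one_le, one_mul]
  have : t / τ ≤ 1 := (div_le_one hτ).2 h
  linarith
theorem thc_zero {τ t : ℝ} (hτ : 0 < τ) (h : 2 * τ ≤ t) : thc τ t = 0 := by
  unfold thc
  rw [Real.smoothTransition.zero_of_nonpos (x := 2 - t / τ), mul_zero]
  have : 2 ≤ t / τ := (le_div_iff₀ hτ).2 h
  linarith
theorem thc_zero' {τ t : ℝ} (h : t ≤ -2) : thc τ t = 0 := by
  unfold thc
  rw [Real.smoothTransition.zero_of_nonpos (x := t + 2) (by linarith), zero_mul]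
theorem thc_deriv {τ t : ℝ} (hτ : 0 < τ) (h : 0 < t) : deriv (thc τ) t ≤ 0 := by
  have e : thc τ =ᶠ[𝓝 t] fun s => Real.smoothTransition (2 - s / τ) := by
    filter_upwards [lt_mem_nhds h] with s hs
    unfold thc
    rw [Real.smoothTransition.one_of_one_le (by linarith), one_mul]
  rw [e.deriv_eq]
  refine Antitone.deriv_nonpos fun a b hab => ?_
  refine Real.smoothTransition.monotone ?_
  have : a / τ ≤ b / τ := by gcongr
  linarith

theorem integral_le_trick {α : Type*} [MeasurableSpace α] {m : Measure α} {f h : α → ℝ} (hh : Integrable h m)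
    (h0 : ∀ᵐ x ∂m, 0 ≤ h x) (hf : ∀ᵐ x ∂m, f x ≤ h x) : ∫ x, f x ∂m ≤ ∫ x, h x ∂m := by
  by_cases hi : Integrable f m
  · exact integral_mono_ae hi hh hf
  · rw [integral_undef hi]
    exact integral_nonneg_of_ae h0

theorem lap_mulc {N : ℕ} (f : Euc N → ℝ) (hf : ContDiff ℝ 2 f) (c : ℝ) (x : Euc N) :
    lap (fun y => f y * c) x = c * lap f x := by
  have h1 : Differentiable ℝ f := hf.differentiable (by norm_num)
  have h2 : Differentiable ℝ (fderiv ℝ f) := (hf.fderiv_right (m := 1) (by norm_num)).differentiable (by norm_num)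
  unfold lap
  rw [Finset.mul_sum]
  refine Finset.sum_congr rfl fun i _ => ?_
  have e : ∀ y, fderiv ℝ (fun y => f y * c) y (EuclideanSpace.single i 1) = c * fderiv ℝ f y (EuclideanSpace.single i 1) := fun y => by
    rw [fderiv_mul_const (h1 y)]
    simp
  simp only [e]
  rw [fderiv_const_mul ((h2 x).clm_apply (differentiableAt_const _))]
  simp

theorem lap_bdd {N : ℕ} {f : Euc N → ℝ} (hf : ContDiff ℝ 2 f) {L : Set (Euc N)} (hL : IsCompact L) (h0 : ∀ x ∉ L, f x = 0) :
    ∃ C, 0 ≤ C ∧ ∀ x, lap f x ≤ C := by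
  have hc : Continuous (lap f) := by
    have h2 : ContDiff ℝ 1 (fderiv ℝ f) := hf.fderiv_right (m := 1) (by norm_num)
    unfold lap
    refine continuous_finsetSum _ fun i _ => ?_
    have : ContDiff ℝ 1 (fun y => fderiv ℝ f y (EuclideanSpace.single i 1)) := h2.clm_apply contDiff_const
    exact (this.continuous_fderiv (by norm_num)).clm_apply continuous_const
  obtain ⟨C, hC⟩ := hL.exists_bound_of_continuousOn hc.continuousOn
  refine ⟨max C 0, le_max_right _ _, fun x => ?_⟩
  by_cases hx : x ∈ L
  · exact ((le_abs_self _).trans (hC x hx)).trans (le_max_left _ _)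
  · have e : f =ᶠ[𝓝 x] fun _ => 0 := by
      filter_upwards [hL.isClosed.isOpen_compl.mem_nhds hx] with y hy using h0 y hy
    have : lap f x = 0 := by
      unfold lap
      refine Finset.sum_eq_zero fun i _ => ?_
      have e2 : (fun y => fderiv ℝ f y (EuclideanSpace.single i 1)) =ᶠ[𝓝 x] fun _ => (0 : ℝ) := by
        filter_upwards [e.eventuallyEq_nhds] with y hy
        rw [hy.fderiv_eq]; simp
      rw [e2.fderiv_eq]; simp
    rw [this]; exact le_max_right _ _

theorem cutLP {N : ℕ} {f : Euc N → ℝ} (hf : ContDiff ℝ 2 f) (h0 : ∀ x, 0 ≤ f x) {C : ℝ} (hC0 : 0 ≤ C) (hC : ∀ x, lap f x ≤ C)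
    {τ : ℝ} (hτ : 0 < τ) (p : Euc N × ℝ) (hp : 0 < p.2) :
    LP (vt N) ve (fun q : Euc N × ℝ => f q.1 * thc τ q.2) p ≤ C ∧
    (2 * τ ≤ p.2 → LP (vt N) ve (fun q : Euc N × ℝ => f q.1 * thc τ q.2) p ≤ 0) := by
  have hξ : ContDiff ℝ 2 (fun q : Euc N × ℝ => f q.1 * thc τ q.2) :=
    (hf.comp contDiff_fst).mul ((thc_smooth τ).comp contDiff_snd)
  rw [← heat_LP hξ p]
  unfold heatAdj
  simp only
  rw [lap_mulc f hf]
  have e : deriv (fun t => f p.1 * thc τ t) p.2 = f p.1 * deriv (thc τ) p.2 :=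
    deriv_const_mul _ ((thc_smooth τ).differentiable (by norm_num) _)
  rw [e]
  have h1 : f p.1 * deriv (thc τ) p.2 ≤ 0 := mul_nonpos_of_nonneg_of_nonpos (h0 _) (thc_deriv hτ hp)
  have h2 : thc τ p.2 * lap f p.1 ≤ C := by
    calc _ ≤ thc τ p.2 * C := mul_le_mul_of_nonneg_left (hC _) (thc_nonneg _ _)
      _ ≤ 1 * C := mul_le_mul_of_nonneg_right (thc_le _ _) hC0
      _ = C := one_mul C
  refine ⟨by linarith, fun h => ?_⟩
  rw [thc_zero hτ h]
  linarith

theorem cut_supp {N : ℕ} {f : Euc N → ℝ} {L : Set (Euc N)} (hL : IsCompact L) (h0 : ∀ x ∉ L, f x = 0) {τ : ℝ} (hτ : 0 < τ) :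
    HasCompactSupport (fun q : Euc N × ℝ => f q.1 * thc τ q.2) ∧
    tsupport (fun q : Euc N × ℝ => f q.1 * thc τ q.2) ⊆ L ×ˢ Icc (-2) (2 * τ) := by
  have hk : IsCompact (L ×ˢ Icc (-2 : ℝ) (2 * τ)) := hL.prod isCompact_Icc
  have hs : ∀ q ∉ L ×ˢ Icc (-2 : ℝ) (2 * τ), f q.1 * thc τ q.2 = 0 := fun q hq => by
    by_contra h
    refine hq ⟨?_, ?_, ?_⟩
    · by_contra h'; rw [h0 _ h', zero_mul] at h; exact h rfl
    · by_contra h'; rw [thc_zero' (le_of_not_ge h'), mul_zero] at h; exact h rfl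
    · by_contra h'; rw [thc_zero hτ (le_of_not_ge h'), mul_zero] at h; exact h rfl
  refine ⟨HasCompactSupport.intro hk hs, closure_minimal (fun q hq => ?_) hk.isClosed⟩
  by_contra h
  exact hq (hs q h)

theorem good_of_le {N : ℕ} (hN : 1 ≤ N) {Ω : Set (Euc N)} (hΩo : IsOpen Ω) (hΩb : Bornology.IsBounded Ω) {T : ℝ} (hT : 0 < T)
    {g : ℝ → ℝ} (hg : GoodG g) {μ ν : Measure (Euc N)} (hμ : MemM1 Ω μ) (hG : GoodMeasure Ω T g μ) (hνμ : ν ≤ μ)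
    {K : Set (Euc N)} (hK : IsCompact K) (hKΩ : K ⊆ Ω) (hνK : ν Kᶜ = 0) : GoodMeasure Ω T g ν := by
  obtain ⟨U, hU⟩ := hG
  have hfin : IsFiniteMeasure ν := ⟨by
    rw [← union_compl_self K]
    refine (measure_union_le _ _).trans_lt ?_
    rw [hνK, add_zero]
    exact (hνμ K).trans_lt (hμ.2.1 K hKΩ hK)⟩
  have hνΩ : ν Ωᶜ = 0 := measure_mono_null (compl_subset_compl.2 hKΩ) hνK
  have hW := Wf_intQ Ω ν T
  obtain ⟨u, u0, uW, ua, ui, uE⟩ := lemD hΩo hΩb T hνΩ hg (Wf_nonneg ν) hW (KF_W hΩo hΩb hT hνΩ)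
  have hfi : ∀ n, IntegrableOn (fun p => gn g n (u n p)) (QT Ω T) := fun n => (gn_lip hg n).int (u0 n) (ui n)
  have hbd : ∀ p, BddBelow (range fun n => u n p) := fun p => ⟨0, by rintro _ ⟨n, rfl⟩; exact u0 n p⟩
  let u' : Euc N × ℝ → ℝ := fun p => ⨅ n, u n p
  have hul : ∀ p, Tendsto (fun n => u n p) atTop (𝓝 (u' p)) := fun p => tendsto_atTop_ciInf (ua p) (hbd p)
  have hle : ∀ p n, u' p ≤ u n p := fun p n => ciInf_le (hbd p) n
  have hgl : ∀ p, Tendsto (fun n => gn g n (u n p)) atTop (𝓝 (g (u' p))) := fun p => gn_tendsto' hg (hul p) (hle p)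
  have hfm : IsFiniteMeasure (volume.restrict (QT Ω T)) := ⟨by simpa using QT_vol hΩb T⟩
  have hQm := QT_meas hΩo T
  obtain ⟨L, hL, hKL, hLΩ⟩ := exists_compact_between hK hΩo hKΩ
  obtain ⟨r, hr, hrL⟩ := hK.exists_cthickening_subset_open isOpen_interior hKL
  have hfar : ∀ x ∉ L, ∀ y ∈ K, r ≤ ‖x - y‖ := fun x hx y hy => by
    by_contra h
    refine hx (interior_subset (hrL (Metric.mem_cthickening_of_dist_le x y r K hy ?_)))
    rw [dist_eq_norm]; linarith
  obtain ⟨L', f, hL', hL'Ω, hf, f0, f1, fL, fL'⟩ := exists_cut hΩo hL hLΩ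
  obtain ⟨C, hC0, hC⟩ := lap_bdd hf hL' fL'
  let h : Euc N × ℝ → ℝ := fun p => (QT L' T).indicator (fun p => g (U p)) p + C * (Wf ν p + |U p|)
  have hh : IntegrableOn h (QT Ω T) := by
    have h1 := gU_int hN hΩo hΩb hg hU.1 hU.2.1 hL' hL'Ω
    have hm : MeasurableSet (QT L' T) := hL'.measurableSet.prod measurableSet_Ioo
    have h2 : Integrable ((QT L' T).indicator (fun p => g (U p))) volume := (integrable_indicator_iff hm).2 h1
    exact (h2.integrableOn).add ((hW.add hU.1.abs).const_mul C)
  have hh0 : ∀ p, 0 ≤ h p := fun p => add_nonneg (indicator_nonneg (fun _ _ => hg.nonneg _) _)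
    (mul_nonneg hC0 (add_nonneg (Wf_nonneg ν p) (abs_nonneg _)))
  let s : ℕ → Set (Euc N × ℝ) := fun k => univ ×ˢ Ioo 0 (T / (k + 1))
  have hsm : ∀ k, MeasurableSet (s k) := fun k => MeasurableSet.univ.prod measurableSet_Ioo
  have hs0 : Tendsto (fun k => ∫ p in s k, h p ∂(volume.restrict (QT Ω T))) atTop (𝓝 0) := by
    have := tendsto_setIntegral_of_antitone (f := h) (μ := volume.restrict (QT Ω T)) hsm (fun a b hab => ?_) ⟨0, Integrable.integrableOn hh⟩
    · have e : ⋂ n, s n = ∅ := by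
        rw [eq_empty_iff_forall_notMem]
        intro p hp
        rw [mem_iInter] at hp
        have hp0 := (hp 0).2.1
        obtain ⟨n, hn⟩ := exists_nat_gt (T / p.2)
        have := (hp n).2.2
        rw [lt_div_iff₀ (by positivity)] at this
        rw [div_lt_iff₀ hp0] at hn
        nlinarith
      rw [e] at this
      simpa using this
    · refine prod_mono le_rfl (Ioo_subset_Ioo_right ?_)
      have : (a : ℝ) ≤ b := by exact_mod_cast hab
      gcongr
  have key : ∀ ε > 0, ∃ τ > 0, ∀ n, ∫ p in L ×ˢ Iic τ, gn g n (u n p) ∂(volume.restrict (QT Ω T)) ≤ ε := by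
    intro ε hε
    obtain ⟨k, hk⟩ := (hs0.eventually (gt_mem_nhds hε)).exists
    have hkp : (0 : ℝ) < (k : ℝ) + 1 := by positivity
    obtain ⟨τ, hτe⟩ : ∃ τ, τ = T / ((k : ℝ) + 1) / 4 := ⟨_, rfl⟩
    have hτ : 0 < τ := by rw [hτe]; positivity
    have h4 : T / ((k : ℝ) + 1) = 4 * τ := by rw [hτe]; ring
    have hTk : 4 * τ ≤ T := by
      rw [← h4]; exact div_le_self hT.le (by linarith [Nat.cast_nonneg (α := ℝ) k])
    refine ⟨τ, hτ, fun n => ?_⟩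
    let ξ : Euc N × ℝ → ℝ := fun q => f q.1 * thc τ q.2
    have hξ : ContDiff ℝ 2 ξ := (hf.comp contDiff_fst).mul ((thc_smooth τ).comp contDiff_snd)
    have hξ0 : ∀ p, 0 ≤ ξ p := fun p => mul_nonneg (f0 _) (thc_nonneg _ _)
    have hξ1 : ∀ p, ξ p ≤ 1 := fun p => mul_le_one₀ (f1 _) (thc_nonneg _ _) (thc_le _ _)
    obtain ⟨hcs, hts⟩ := cut_supp hL' fL' hτ
    have hF := lemF hN hΩo hΩb hT hg hμ hνμ hU (ui n) (hfi n) (uE n) hξ hcs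
      (hts.trans (prod_mono hL'Ω fun t ht => by rw [mem_Iio]; linarith [ht.2])) hξ0
    have hA : MeasurableSet (L ×ˢ Iic τ) := hL.measurableSet.prod measurableSet_Iic
    have i1 : ∫ p in L ×ˢ Iic τ, gn g n (u n p) ∂(volume.restrict (QT Ω T)) ≤ ∫ p in QT Ω T, ξ p * gn g n (u n p) := by
      rw [← integral_indicator hA]
      refine integral_le_trick ?_ (ae_of_all _ fun p => mul_nonneg (hξ0 p) (gn_nonneg hg _ _)) ?_
      · refine (hfi n).mono' (hξ.continuous.aestronglyMeasurable.mul (hfi n).aestronglyMeasurable) (ae_of_all _ fun p => ?_)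
        rw [Real.norm_eq_abs, abs_of_nonneg (mul_nonneg (hξ0 p) (gn_nonneg hg _ _))]
        exact mul_le_of_le_one_left (gn_nonneg hg _ _) (hξ1 p)
      · filter_upwards [ae_restrict_mem hQm] with p hp
        by_cases hpA : p ∈ L ×ˢ Iic τ
        · rw [indicator_of_mem hpA]
          have : ξ p = 1 := by
            show f p.1 * thc τ p.2 = 1
            rw [fL _ hpA.1, thc_one hτ hp.2.1.le hpA.2, one_mul]
          rw [this, one_mul]
        · rw [indicator_of_notMem hpA]
          exact mul_nonneg (hξ0 p) (gn_nonneg hg _ _)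
    have hpos : ∀ p, 0 ≤ (s k).indicator h p := fun p => indicator_nonneg (fun p _ => hh0 p) p
    let h1 : Euc N × ℝ → ℝ := (QT L' T).indicator (fun p => g (U p))
    let h2 : Euc N × ℝ → ℝ := fun p => C * (Wf ν p + |U p|)
    have j1 : IntegrableOn h1 (QT Ω T) := by
      have h1 := gU_int hN hΩo hΩb hg hU.1 hU.2.1 hL' hL'Ω
      have hm : MeasurableSet (QT L' T) := hL'.measurableSet.prod measurableSet_Ioo
      exact ((integrable_indicator_iff hm).2 h1).integrableOn
    have j2 : IntegrableOn h2 (QT Ω T) := (hW.add hU.1.abs).const_mul C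
    have p1 : ∀ p, 0 ≤ h1 p := fun p => indicator_nonneg (fun _ _ => hg.nonneg _) _
    have p2 : ∀ p, 0 ≤ h2 p := fun p => mul_nonneg hC0 (add_nonneg (Wf_nonneg ν p) (abs_nonneg _))
    have i2 : (∫ p in QT Ω T, ξ p * g (U p)) ≤ ∫ p in s k, h1 p ∂(volume.restrict (QT Ω T)) := by
      rw [← integral_indicator (hsm k)]
      refine integral_le_trick (Integrable.indicator j1 (hsm k)) (ae_of_all _ fun p => indicator_nonneg (fun p _ => p1 p) p) ?_
      filter_upwards [ae_restrict_mem hQm] with p hp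
      by_cases hps : p ∈ s k
      · rw [indicator_of_mem hps]
        by_cases hpL : p.1 ∈ L'
        · have : h1 p = g (U p) := indicator_of_mem (show p ∈ QT L' T from ⟨hpL, hp.2⟩) _
          rw [this]
          exact mul_le_of_le_one_left (hg.nonneg _) (hξ1 p)
        · have : ξ p = 0 := by
            show f p.1 * thc τ p.2 = 0
            rw [fL' _ hpL, zero_mul]
          rw [this, zero_mul]; exact p1 p
      · rw [indicator_of_notMem hps]
        have : ξ p = 0 := by
          show f p.1 * thc τ p.2 = 0
          rw [thc_zero hτ, mul_zero]
          by_contra hc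
          exact hps ⟨mem_univ _, hp.2.1, by rw [h4]; linarith⟩
        rw [this, zero_mul]
    have i3 : (∫ p in QT Ω T, max (u n p - U p) 0 * LP (vt N) ve ξ p) ≤ ∫ p in s k, h2 p ∂(volume.restrict (QT Ω T)) := by
      rw [← integral_indicator (hsm k)]
      refine integral_le_trick (Integrable.indicator j2 (hsm k)) (ae_of_all _ fun p => indicator_nonneg (fun p _ => p2 p) p) ?_
      filter_upwards [ae_restrict_mem hQm] with p hp
      obtain ⟨c1, c2⟩ := cutLP hf f0 hC0 hC hτ p hp.2.1
      have m0 : 0 ≤ max (u n p - U p) 0 := le_max_right _ _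
      have m1 : max (u n p - U p) 0 ≤ Wf ν p + |U p| :=
        max_le (by linarith [uW n p, neg_abs_le (U p)]) (add_nonneg (Wf_nonneg ν p) (abs_nonneg _))
      by_cases hps : p ∈ s k
      · rw [indicator_of_mem hps]
        calc _ ≤ max (u n p - U p) 0 * C := mul_le_mul_of_nonneg_left c1 m0
          _ ≤ (Wf ν p + |U p|) * C := mul_le_mul_of_nonneg_right m1 hC0
          _ = _ := mul_comm _ _
      · rw [indicator_of_notMem hps]
        refine mul_nonpos_of_nonneg_of_nonpos m0 (c2 ?_)
        by_contra hc
        exact hps ⟨mem_univ _, hp.2.1, by rw [h4]; linarith⟩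
    have i4 : ∫ p in s k, h p ∂(volume.restrict (QT Ω T)) = (∫ p in s k, h1 p ∂(volume.restrict (QT Ω T))) + ∫ p in s k, h2 p ∂(volume.restrict (QT Ω T)) :=
      integral_add (Integrable.integrableOn j1) (Integrable.integrableOn j2)
    linarith [hF.2]
  obtain ⟨hgi, hgt⟩ := vit (m := volume.restrict (QT Ω T)) (fn := fun n p => gn g n (u n p)) (f' := fun p => g (u' p)) hfi
    (fun n p => gn_nonneg hg _ _) hgl (fun ε hε => by
      obtain ⟨τ, hτ, hτn⟩ := key ε hε
      obtain ⟨M, hM0, hM⟩ := Wf_bdd ν hνK hr hτ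
      refine ⟨L ×ˢ Iic τ, hL.measurableSet.prod measurableSet_Iic, g M, hτn, ?_⟩
      filter_upwards [ae_restrict_mem hQm] with p hp hpA n
      refine (gn_le hg n _).trans (hg.2.1 ((uW n p).trans (hM p hp.2.1 ?_)))
      by_cases hpL : p.1 ∈ L
      · left
        by_contra hc
        exact hpA ⟨hpL, le_of_not_ge hc⟩
      · right; exact hfar _ hpL)
  have hE := EQ_lim hΩo hΩb T uE hW ui (fun n p => by rw [abs_of_nonneg (u0 n p)]; exact uW n p) hul hfi hgi hgt
  refine ⟨u', ?_, ?_, fun ζ hζ => ?_⟩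
  · refine Integrable.mono' hW (aestronglyMeasurable_of_tendsto_ae atTop (fun n => (ui n).aestronglyMeasurable) (ae_of_all _ hul)) (ae_of_all _ fun p => ?_)
    rw [Real.norm_eq_abs, abs_of_nonneg (le_ciInf fun n => u0 n p)]
    exact (hle p 0).trans (uW 0 p)
  · have hc : Continuous (fun p : Euc N × ℝ => rho Ω p.1) := (Metric.continuous_infDist_pt _).comp continuous_fst
    obtain ⟨B, hB⟩ := hΩb.isCompact_closure.exists_bound_of_continuousOn (f := rho Ω) (Metric.continuous_infDist_pt _).continuousOn
    refine Integrable.mono' (hgi.const_mul B) (hgi.aestronglyMeasurable.mul hc.aestronglyMeasurable) ?_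
    filter_upwards [ae_restrict_mem hQm] with p hp
    rw [norm_mul, mul_comm, Real.norm_of_nonneg (hg.nonneg _)]
    exact mul_le_mul_of_nonneg_right (hB _ (subset_closure hp.1)) (hg.nonneg _)
  · rw [← hE ζ hζ]
    refine integral_congr_ae (ae_of_all _ fun p => ?_)
    simp only [heatAdj]
    ring

theorem MemM1.of_le {N : ℕ} {Ω : Set (Euc N)} {μ ν : Measure (Euc N)} (h : MemM1 Ω μ) (hl : ν ≤ μ) : MemM1 Ω ν :=
  ⟨le_antisymm ((hl _).trans h.1.le) bot_le, fun K h1 h2 => (hl K).trans_lt (h.2.1 K h1 h2),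
    (lintegral_mono' hl le_rfl).trans_lt h.2.2⟩

theorem final_aux {N : ℕ} (hN : 1 ≤ N) {Ω : Set (Euc N)} (hΩo : IsOpen Ω) (hΩb : Bornology.IsBounded Ω) {T : ℝ} (hT : 0 < T)
    {g : ℝ → ℝ} (hg : GoodG g) {μ₁ μ₂ μ₁star μ₂star : Measure (Euc N)} (hμ₁ : MemM1 Ω μ₁) (hle : μ₁ ≤ μ₂)
    (hred₁ : IsReducedMeasure Ω T g μ₁ μ₁star) (hred₂ : IsReducedMeasure Ω T g μ₂ μ₂star)
    {A K : Set (Euc N)} (hA : MeasurableSet A) (hK : IsCompact K) (hKΩ : K ⊆ Ω) (hAK : A ⊆ K) :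
    μ₂star A + μ₁ A ≤ μ₁star A + μ₂ A := by
  have f1 : IsFiniteMeasure (μ₁.restrict K) := ⟨by simpa using hμ₁.2.1 K hKΩ hK⟩
  have f2 : IsFiniteMeasure (μ₂star.restrict K) := ⟨by simpa using hred₂.1.2.1 K hKΩ hK⟩
  obtain ⟨s, hs, h1, h2⟩ := hahn_decomposition (μ₁.restrict K) (μ₂star.restrict K)
  have rs : ∀ (m : Measure (Euc N)) (B : Set (Euc N)), MeasurableSet B → B ⊆ K → m.restrict K B = m B := fun m B hB hBK => by
    rw [Measure.restrict_apply hB, inter_eq_left.2 hBK]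
  have main : ∀ (ν : Measure (Euc N)), ν Kᶜ = 0 → ν ≤ μ₁ → ν ≤ μ₂star → ν ≤ μ₁star := fun ν h0 ha hb =>
    hred₁.2.2.2 ν (hμ₁.of_le ha) (good_of_le hN hΩo hΩb hT hg hred₂.1 hred₂.2.2.1 hb hK hKΩ h0) ha
  have hB1 : MeasurableSet (A ∩ s) := hA.inter hs
  have hB2 : MeasurableSet (A ∩ sᶜ) := hA.inter hs.compl
  have nul : ∀ (m : Measure (Euc N)) (B : Set (Euc N)), MeasurableSet B → B ⊆ K → m.restrict B Kᶜ = 0 := fun m B hB hBK => by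
    rw [Measure.restrict_apply hK.measurableSet.compl]
    have : Kᶜ ∩ B = ∅ := by
      rw [eq_empty_iff_forall_notMem]; rintro x ⟨h, h'⟩; exact h (hBK h')
    rw [this, measure_empty]
  have e1 : μ₂star (A ∩ s) ≤ μ₁star (A ∩ s) := by
    have := main (μ₂star.restrict (A ∩ s)) (nul _ _ hB1 (inter_subset_left.trans hAK)) (Measure.le_iff.2 fun t ht => by
      rw [Measure.restrict_apply ht]
      have hm := ht.inter hB1
      have hsub : t ∩ (A ∩ s) ⊆ K := fun x hx => hAK hx.2.1
      have := h1 (t ∩ (A ∩ s)) hm (fun x hx => hx.2.2)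
      rw [rs _ _ hm hsub, rs _ _ hm hsub] at this
      exact this.trans (measure_mono inter_subset_left)) Measure.restrict_le_self
    simpa using this (A ∩ s)
  have e2 : μ₁ (A ∩ sᶜ) ≤ μ₁star (A ∩ sᶜ) := by
    have := main (μ₁.restrict (A ∩ sᶜ)) (nul _ _ hB2 (inter_subset_left.trans hAK)) Measure.restrict_le_self (Measure.le_iff.2 fun t ht => by
      rw [Measure.restrict_apply ht]
      have hm := ht.inter hB2
      have hsub : t ∩ (A ∩ sᶜ) ⊆ K := fun x hx => hAK hx.2.1
      have := h2 (t ∩ (A ∩ sᶜ)) hm (fun x hx => hx.2.2)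
      rw [rs _ _ hm hsub, rs _ _ hm hsub] at this
      exact this.trans (measure_mono inter_subset_left))
    simpa using this (A ∩ sᶜ)
  have sp : ∀ m : Measure (Euc N), m A = m (A ∩ s) + m (A ∩ sᶜ) := fun m => by
    rw [← sdiff_eq_compl_inter.trans (inter_comm _ _), measure_inter_add_sdiff A hs]
  have e3 := hle (A ∩ s)
  have e4 := hred₂.2.1 (A ∩ sᶜ)
  rw [sp μ₂star, sp μ₁, sp μ₁star, sp μ₂]
  calc _ = (μ₂star (A ∩ s) + μ₁ (A ∩ s)) + (μ₂star (A ∩ sᶜ) + μ₁ (A ∩ sᶜ)) := by ring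
    _ ≤ (μ₁star (A ∩ s) + μ₂ (A ∩ s)) + (μ₂ (A ∩ sᶜ) + μ₁star (A ∩ sᶜ)) := by gcongr
    _ = _ := by ring

theorem final {N : ℕ} (hN : 1 ≤ N) {Ω : Set (Euc N)} (hΩo : IsOpen Ω) (hΩb : Bornology.IsBounded Ω) {T : ℝ} (hT : 0 < T)
    {g : ℝ → ℝ} (hg : GoodG g) {μ₁ μ₂ μ₁star μ₂star : Measure (Euc N)} (hμ₁ : MemM1 Ω μ₁) (hle : μ₁ ≤ μ₂)
    (hred₁ : IsReducedMeasure Ω T g μ₁ μ₁star) (hred₂ : IsReducedMeasure Ω T g μ₂ μ₂star)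
    {A : Set (Euc N)} (hA : MeasurableSet A) (hAΩ : A ⊆ Ω) :
    μ₂star A + μ₁ A ≤ μ₁star A + μ₂ A := by
  obtain ⟨F, Fc, FΩ, FU, Fm⟩ := hΩo.exists_iUnion_isClosed
  have e : A = ⋃ n, A ∩ F n := by rw [← inter_iUnion, FU, inter_eq_left.2 hAΩ]
  have hm : Monotone fun n => A ∩ F n := fun a b hab => inter_subset_inter_right _ (Fm hab)
  have ht : ∀ m : Measure (Euc N), Tendsto (fun n => m (A ∩ F n)) atTop (𝓝 (m A)) := fun m => by
    have := tendsto_measure_iUnion_atTop (μ := m) hm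
    rw [← e] at this
    exact this
  refine le_of_tendsto_of_tendsto' ((ht _).add (ht _)) ((ht _).add (ht _)) fun n => ?_
  exact final_aux hN hΩo hΩb hT hg hμ₁ hle hred₁ hred₂ (hA.inter (Fc n).measurableSet)
    (Metric.isCompact_of_isClosed_isBounded (Fc n) (hΩb.subset (FΩ n))) (FΩ n) inter_subset_right

/-- **Theorem 2.17.** If `μ₁ ≤ μ₂` then `μ₁* ≤ μ₂*` and
`μ₂* − μ₁* ≤ μ₂ − μ₁`, i.e. `μ₂*(A) + μ₁(A) ≤ μ₁*(A) + μ₂(A)` for every Borel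
set `A ⊆ Ω`. -/
theorem stmt_13 {N : ℕ} (hN : 1 ≤ N) (Ω : Set (Euc N)) (hΩo : IsOpen Ω)
    (hΩc : IsConnected Ω) (hΩb : Bornology.IsBounded Ω) (T : ℝ) (hT : 0 < T)
    (g : ℝ → ℝ) (hg : GoodG g) (μ₁ μ₂ μ₁star μ₂star : Measure (Euc N))
    (hμ₁ : MemM1 Ω μ₁) (hμ₂ : MemM1 Ω μ₂) (hle : μ₁ ≤ μ₂)
    (hred₁ : IsReducedMeasure Ω T g μ₁ μ₁star)
    (hred₂ : IsReducedMeasure Ω T g μ₂ μ₂star) :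
    μ₁star ≤ μ₂star ∧
    ∀ A : Set (Euc N), MeasurableSet A → A ⊆ Ω →
      μ₂star A + μ₁ A ≤ μ₁star A + μ₂ A := by
  refine ⟨hred₂.2.2.2 _ hred₁.1 hred₁.2.2.1 (hred₁.2.1.trans hle), fun A hA hAΩ => ?_⟩
  exact final hN hΩo hΩb hT hg hμ₁ hle hred₁ hred₂ hA hAΩ
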